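/- If A ⊆ ℝⁿ is a measurable set of infinite Lebesgue measure, then for Haar-almost every unimodular lattice Λ ∈ SL(n,ℝ)/SL(n,ℤ), Λ contains a nonzero vector lying in A. -/

import Mathlib

open MeasureTheory Filter Matrix Real ENNReal

noncomputable section

/-- `SL(n, ℝ)`. -/
abbrev SLR (n : ℕ) := Matrix.SpecialLinearGroup (Fin n) ℝ

instance (n : ℕ) : TopologicalSpace (SLR n) :=
  TopologicalSpace.induced (fun g => (g : Matrix (Fin n) (Fin n) ℝ)) inferInstance

/-- The image of `SL(n, ℤ)` in `SL(n, ℝ)`. -/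
def latticeGamma (n : ℕ) : Subgroup (SLR n) :=
  (Matrix.SpecialLinearGroup.map (n := Fin n) (Int.castRingHom ℝ)).range

/-- The space of unimodular lattices `X_n = SL(n,ℝ)/SL(n,ℤ)`. -/
abbrev LatticeSpace (n : ℕ) := SLR n ⧸ latticeGamma n

instance (n : ℕ) : MeasurableSpace (LatticeSpace n) := borel _

/-- The real vector `g · m` of the lattice `g ℤⁿ` coming from the integer vector `m`. -/
def vecOf (n : ℕ) (g : SLR n) (m : Fin n → ℤ) : Fin n → ℝ :=
  (g : Matrix (Fin n) (Fin n) ℝ).mulVec (fun i => (m i : ℝ))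

/-- Euclidean norm on `Fin n → ℝ`. -/
def eNorm {n : ℕ} (v : Fin n → ℝ) : ℝ := ‖(WithLp.equiv 2 (Fin n → ℝ)).symm v‖

/-- The lattice `Λ` contains a nonzero vector lying in `A`. -/
def Intersects (n : ℕ) (Λ : LatticeSpace n) (A : Set (Fin n → ℝ)) : Prop :=
  ∀ g : SLR n, (QuotientGroup.mk g : LatticeSpace n) = Λ →
    ∃ m : Fin n → ℤ, m ≠ 0 ∧ vecOf n g m ∈ A

/-- `α₁(Λ) = sup_{0 ≠ v ∈ Λ} 1/‖v‖` (Euclidean norm). -/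
def alpha1 (n : ℕ) (Λ : LatticeSpace n) : ℝ :=
  sSup {r : ℝ | ∃ g : SLR n, (QuotientGroup.mk g : LatticeSpace n) = Λ ∧
    ∃ m : Fin n → ℤ, m ≠ 0 ∧ r = 1 / eNorm (vecOf n g m)}

/-!
Second moment method. Take `K ⊆ A` of large finite volume. The number of vectors of a random lattice
in `K` has mean proportional to `vol K`; if its second moment is at most `(1 + ε) mean² + C mean`,
then by Chebyshev the lattices missing `K` have measure `O(ε)` as `vol K → ∞`.

The expected number of linearly independent tuples of fewer than `n` lattice vectors in a given set
is its volume (Siegel, Rogers): the lattice sum is averaged over an explicit contracting family in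
`SL(n, ℝ)`, along which it becomes a Riemann sum of the integral. For `n ≥ 3` this applies to pairs,
and proportional pairs contribute only `O(vol K)`, as `∑ |a| ^ (-n / 2)` converges.

For `n = 2` one counts primitive vectors instead. Unfolding the orbits of `SL(2, ℤ)` to Haar measure
on `SL(2, ℝ)` writes the off-diagonal second moment as a multiple of `∑ φ k / k * C k`, where `C t`
is the density of the pairs of vectors in `K` which span a parallelogram of area `t`. The
counts at dilations of the lattice by `exp (x / 2)` and `exp (-x / 2)` dominate the one at `x = 0`
by AM-GM, and are bounded below by Jensen's inequality. On average over `x` the identity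
`∑ k ∣ n, φ k = n` turns the dilated totient sums into Riemann sums for `∫ C = (vol K)²`.
-/

open scoped Topology NNReal

section HomogeneousSpace

variable {G : Type*} [Group G] {Γ : Subgroup G}

lemma apply_out_mk {Z : Type*} {f : G → Z} (hf : ∀ g, ∀ γ ∈ Γ, f (g * γ) = f g) (g : G) :
    f (QuotientGroup.mk g : G ⧸ Γ).out = f g := by
  obtain ⟨γ, hγ⟩ := QuotientGroup.mk_out_eq_mul Γ g
  rw [hγ, hf g γ γ.2]

lemma apply_out_smul {Z : Type*} {f : G → Z} (hf : ∀ g, ∀ γ ∈ Γ, f (g * γ) = f g) (g : G)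
    (x : G ⧸ Γ) : f (g • x).out = f (g * x.out) := by
  have : g • x = QuotientGroup.mk (g * x.out) := by
    conv_lhs => rw [← QuotientGroup.out_eq' x]
    rfl
  rw [this, apply_out_mk hf]

variable [TopologicalSpace G] [IsTopologicalGroup G] [PolishSpace G] [MeasurableSpace G]
  [BorelSpace G] [IsClosed (Γ : Set G)] [MeasurableSpace (G ⧸ Γ)] [BorelSpace (G ⧸ Γ)]

lemma measurable_prod_out {Y Z : Type*} [MeasurableSpace Y] [StandardBorelSpace Y]
    [MeasurableSpace Z] {f : Y × G → Z} (hf : Measurable f)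
    (hinv : ∀ y g, ∀ γ ∈ Γ, f (y, g * γ) = f (y, g)) :
    Measurable fun p : Y × G ⧸ Γ => f (p.1, p.2.out) := by
  have hmk : Measurable (Prod.map id QuotientGroup.mk : Y × G → Y × G ⧸ Γ) :=
    measurable_id.prodMap QuotientGroup.continuous_mk.measurable
  refine (hmk.measurable_comp_iff_of_surjective
    (Function.surjective_id.prodMap QuotientGroup.mk_surjective)).1 ?_
  convert hf using 1
  exact funext fun ⟨y, g⟩ => apply_out_mk (f := fun g => f (y, g)) (hinv y) g

lemma measurable_out {Z : Type*} [MeasurableSpace Z] {f : G → Z}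
    (hf : Measurable f) (hinv : ∀ g, ∀ γ ∈ Γ, f (g * γ) = f g) :
    Measurable fun x : G ⧸ Γ => f x.out :=
  (measurable_prod_out (Y := Unit) (hf.comp measurable_snd) fun _ => hinv).comp
    (measurable_const (a := ()) |>.prodMk measurable_id)

variable {μ : Measure (G ⧸ Γ)} [SMulInvariantMeasure G (G ⧸ Γ) μ]

lemma lintegral_out_mul_left {f : G → ℝ≥0∞} (hf : Measurable f)
    (hinv : ∀ g, ∀ γ ∈ Γ, f (g * γ) = f g) (g : G) :
    ∫⁻ x : G ⧸ Γ, f (g * x.out) ∂μ = ∫⁻ x, f x.out ∂μ := by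
  simp_rw [← apply_out_smul hinv g]
  exact (measurePreserving_smul g μ).lintegral_comp (measurable_out hf hinv)

section Average

variable {Y : Type*} [MeasurableSpace Y] [StandardBorelSpace Y]

lemma measurable_average {k : Y → G} (hk : Measurable k)
    {f : G → ℝ≥0∞} (hf : Measurable f) (hinv : ∀ g, ∀ γ ∈ Γ, f (g * γ) = f g) :
    Measurable fun p : Y × G ⧸ Γ => f (k p.1 * p.2.out) :=
  measurable_prod_out (f := fun p => f (k p.1 * p.2))
    (hf.comp ((hk.comp measurable_fst).mul measurable_snd)) fun y g γ hγ => by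
      rw [← mul_assoc, hinv _ γ hγ]

variable {ν : Measure Y} [IsProbabilityMeasure ν]

lemma lintegral_average [SFinite μ] {k : Y → G} (hk : Measurable k) {f : G → ℝ≥0∞}
    (hf : Measurable f) (hinv : ∀ g, ∀ γ ∈ Γ, f (g * γ) = f g) :
    ∫⁻ x : G ⧸ Γ, ∫⁻ y, f (k y * x.out) ∂ν ∂μ = ∫⁻ x, f x.out ∂μ := by
  rw [← lintegral_lintegral_swap (measurable_average hk hf hinv).aemeasurable]
  simp [lintegral_out_mul_left hf hinv]

variable [IsProbabilityMeasure μ]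

/- A lower bound is Fatou's lemma. For the upper bound, truncation at `C` makes the averages
bounded, and averaging a truncation gives less than truncating an average. -/
lemma lintegral_out_eq_of_tendsto_average {k : ℕ → Y → G} (hk : ∀ N, Measurable (k N))
    {f : G → ℝ≥0∞} (hf : Measurable f) (hinv : ∀ g, ∀ γ ∈ Γ, f (g * γ) = f g) {a : ℝ≥0∞}
    (hlim : ∀ g, Tendsto (fun N => ∫⁻ y, f (k N y * g) ∂ν) atTop (𝓝 a)) :
    ∫⁻ x, f x.out ∂μ = a := by
  have hmeas (N : ℕ) : Measurable fun x : G ⧸ Γ => ∫⁻ y, f (k N y * x.out) ∂ν :=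
    (measurable_average (hk N) hf hinv).lintegral_prod_left'
  refine le_antisymm ?_ ?_
  · have htrunc (C : ℕ) : ∫⁻ x : G ⧸ Γ, min (f x.out) C ∂μ ≤ a := by
      have hle (N : ℕ) : ∫⁻ x : G ⧸ Γ, min (f x.out) C ∂μ ≤
          ∫⁻ x : G ⧸ Γ, min (∫⁻ y, f (k N y * x.out) ∂ν) C ∂μ := by
        rw [← lintegral_average (ν := ν) (hk N) (f := fun g => min (f g) C)
          (hf.min measurable_const) fun g γ hγ => by rw [hinv g γ hγ]]
        refine lintegral_mono fun x => le_min (lintegral_mono fun y => min_le_left _ _) ?_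
        exact (lintegral_mono fun y => min_le_right _ _).trans (by simp)
      have hlimC : Tendsto (fun N => ∫⁻ x : G ⧸ Γ, min (∫⁻ y, f (k N y * x.out) ∂ν) C ∂μ) atTop
          (𝓝 (∫⁻ _ : G ⧸ Γ, min a C ∂μ)) :=
        tendsto_lintegral_of_dominated_convergence (fun _ => (C : ℝ≥0∞))
          (fun N => (hmeas N).min measurable_const)
          (fun N => Eventually.of_forall fun x => min_le_right _ _) (by simp)
          (Eventually.of_forall fun x => (hlim x.out).min tendsto_const_nhds)
      exact (ge_of_tendsto' hlimC hle).trans (by simp)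
    have hmono : Tendsto (fun C : ℕ => ∫⁻ x : G ⧸ Γ, min (f x.out) C ∂μ) atTop
        (𝓝 (∫⁻ x : G ⧸ Γ, f x.out ∂μ)) := by
      refine lintegral_tendsto_of_tendsto_of_monotone
        (fun C => ((measurable_out hf hinv).min measurable_const).aemeasurable)
        (Eventually.of_forall fun x C D hCD => min_le_min_left _ (by exact_mod_cast hCD))
        (Eventually.of_forall fun x => ?_)
      simpa using (tendsto_const_nhds (x := f x.out) (f := atTop)).min ENNReal.tendsto_nat_nhds_top
    exact le_of_tendsto' hmono htrunc
  · calc a = ∫⁻ x : G ⧸ Γ, liminf (fun N => ∫⁻ y, f (k N y * x.out) ∂ν) atTop ∂μ := by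
          simp_rw [(hlim _).liminf_eq]
          simp
      _ ≤ liminf (fun N => ∫⁻ x : G ⧸ Γ, ∫⁻ y, f (k N y * x.out) ∂ν ∂μ) atTop :=
          lintegral_liminf_le hmeas
      _ = ∫⁻ x, f x.out ∂μ := by simp [lintegral_average (ν := ν) (hk _) hf hinv]

end Average

end HomogeneousSpace

/-- A family of points `p i g` parametrised by a group `G` on which a subgroup `Γ` acts by
permuting the indices, so that the point set `{p i g}` depends on the coset `g Γ` only. -/
structure IsEquivariantFamily {G I W : Type*} [Group G] [MeasurableSpace G] [MeasurableSpace W]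
    (Γ : Subgroup G) (p : I → G → W) : Prop where
  measurable : ∀ i, Measurable (p i)
  perm : ∀ γ ∈ Γ, ∃ σ : Equiv.Perm I, ∀ i g, p i (g * γ) = p (σ i) g

namespace IsEquivariantFamily

variable {G I W : Type*} [Group G] [MeasurableSpace G] [MeasurableSpace W] {Γ : Subgroup G}
  {p : I → G → W}

lemma tsum_mul_right (hp : IsEquivariantFamily Γ p) (f : W → ℝ≥0∞) (g γ : G) (hγ : γ ∈ Γ) :
    ∑' i, f (p i (g * γ)) = ∑' i, f (p i g) := by
  obtain ⟨σ, hσ⟩ := hp.perm γ hγ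
  simp_rw [hσ]
  exact σ.tsum_eq fun i => f (p i g)

variable [Countable I]

lemma measurable_tsum (hp : IsEquivariantFamily Γ p) {f : W → ℝ≥0∞} (hf : Measurable f) :
    Measurable fun g => ∑' i, f (p i g) :=
  Measurable.tsum fun i => hf.comp (hp.measurable i)

variable [TopologicalSpace G] [IsTopologicalGroup G] [PolishSpace G] [BorelSpace G]
  [IsClosed (Γ : Set G)] [MeasurableSpace (G ⧸ Γ)] [BorelSpace (G ⧸ Γ)]

lemma measurable_tsum_out (hp : IsEquivariantFamily Γ p) {f : W → ℝ≥0∞} (hf : Measurable f) :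
    Measurable fun x : G ⧸ Γ => ∑' i, f (p i x.out) :=
  measurable_out (hp.measurable_tsum hf) (hp.tsum_mul_right f)

/-- The intensity measure of the random point set `{p i x.out}`, `x` distributed according to `μ`:
the mass of a set is the expected number of indices whose point lies in it. -/
def intensity (_ : IsEquivariantFamily Γ p) (μ : Measure (G ⧸ Γ)) : Measure W :=
  μ.bind fun x => Measure.sum fun i => Measure.dirac (p i x.out)

lemma lintegral_intensity (hp : IsEquivariantFamily Γ p) (μ : Measure (G ⧸ Γ))
    {f : W → ℝ≥0∞} (hf : Measurable f) :
    ∫⁻ w, f w ∂hp.intensity μ = ∫⁻ x, ∑' i, f (p i x.out) ∂μ := by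
  have hk : Measurable fun x : G ⧸ Γ => Measure.sum fun i => Measure.dirac (p i x.out) := by
    refine Measure.measurable_of_measurable_coe _ fun s hs => ?_
    convert hp.measurable_tsum_out (f := s.indicator 1) (measurable_one.indicator hs) using 2 with x
    simp_rw [Measure.sum_apply _ hs, Measure.dirac_apply' _ hs]
  rw [intensity, Measure.lintegral_bind hk.aemeasurable hf.aemeasurable]
  refine lintegral_congr fun x => ?_
  simp_rw [lintegral_sum_measure, lintegral_dirac' _ hf]

lemma measurePreserving_intensity (hp : IsEquivariantFamily Γ p) (μ : Measure (G ⧸ Γ))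
    [SMulInvariantMeasure G (G ⧸ Γ) μ] (g : G) {T : W → W} (hT : Measurable T)
    (hTp : ∀ i h, p i (g * h) = T (p i h)) :
    MeasurePreserving T (hp.intensity μ) (hp.intensity μ) := by
  refine ⟨hT, Measure.ext_of_lintegral _ fun f hf => ?_⟩
  rw [lintegral_map hf hT, hp.lintegral_intensity μ (f := fun w => f (T w)) (hf.comp hT),
    hp.lintegral_intensity μ hf,
    ← lintegral_out_mul_left (hp.measurable_tsum hf) (hp.tsum_mul_right f) g]
  simp_rw [hTp]

end IsEquivariantFamily

/-! ### The special linear group and its action on tuples of vectors -/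

instance (n : ℕ) : IsTopologicalGroup (SLR n) :=
  Matrix.SpecialLinearGroup.topologicalGroup

lemma isClosedEmbedding_coe_SLR (n : ℕ) :
    Topology.IsClosedEmbedding (fun g : SLR n => (g : Matrix (Fin n) (Fin n) ℝ)) :=
  Matrix.SpecialLinearGroup.isClosedEmbedding_val

instance (n : ℕ) : PolishSpace (SLR n) :=
  haveI : PolishSpace (Matrix (Fin n) (Fin n) ℝ) :=
    inferInstanceAs (PolishSpace (Fin n → Fin n → ℝ))
  (isClosedEmbedding_coe_SLR n).polishSpace

instance (n : ℕ) : MeasurableSpace (SLR n) := borel _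

instance (n : ℕ) : BorelSpace (SLR n) := ⟨rfl⟩

instance (n : ℕ) : BorelSpace (LatticeSpace n) := ⟨rfl⟩

instance isClosed_latticeGamma (n : ℕ) : IsClosed (latticeGamma n : Set (SLR n)) := by
  have hpre : (latticeGamma n : Set (SLR n)) =
      (fun g : SLR n => (g : Matrix (Fin n) (Fin n) ℝ)) ⁻¹'
        {M | ∀ i j, M i j ∈ Set.range ((↑) : ℤ → ℝ)} := by
    ext g
    constructor
    · rintro ⟨γ, rfl⟩ i j
      exact ⟨γ i j, rfl⟩
    · intro hg
      choose f hf using hg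
      have hM : (Matrix.of f).map (Int.castRingHom ℝ) = (g : Matrix (Fin n) (Fin n) ℝ) := by
        ext i j
        exact hf i j
      have hdet : (Matrix.of f).det = 1 := by
        have := (Int.castRingHom ℝ).map_det (Matrix.of f)
        rw [RingHom.mapMatrix_apply, hM, g.2] at this
        exact Int.cast_injective (α := ℝ) (by simpa using this)
      refine ⟨⟨Matrix.of f, hdet⟩, ?_⟩
      ext i j
      exact hf i j
  rw [hpre]
  refine IsClosed.preimage (isClosedEmbedding_coe_SLR n).continuous ?_
  simp only [Set.ofPred_forall]
  refine isClosed_iInter fun i => isClosed_iInter fun j => ?_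
  exact Int.isClosedEmbedding_coe_real.isClosed_range.preimage (continuous_apply_apply i j)

section Tuples

variable {n : ℕ} {ι : Type*}

/-- The diagonal action of `SL(n, ℝ)` on tuples of vectors of `ℝⁿ`. -/
def tupleAct (g : SLR n) (U : ι → Fin n → ℝ) : ι → Fin n → ℝ :=
  fun i => (g : Matrix (Fin n) (Fin n) ℝ) *ᵥ U i

/-- A tuple of integral vectors, seen as a tuple of real vectors. -/
def intTuple (m : ι → Fin n → ℤ) : ι → Fin n → ℝ := fun i j => (m i j : ℝ)

lemma tupleAct_intTuple_apply (g : SLR n) (m : ι → Fin n → ℤ) (i : ι) :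
    tupleAct g (intTuple m) i = vecOf n g (m i) := rfl

lemma tupleAct_one (U : ι → Fin n → ℝ) : tupleAct 1 U = U := by
  funext i
  simp [tupleAct]

lemma tupleAct_mul (g h : SLR n) (U : ι → Fin n → ℝ) :
    tupleAct (g * h) U = tupleAct g (tupleAct h U) := by
  funext i
  simp [tupleAct]

lemma tupleAct_smul (g : SLR n) (r : ℝ) (U : ι → Fin n → ℝ) :
    tupleAct g (r • U) = r • tupleAct g U := by
  funext i
  simp [tupleAct, Matrix.mulVec_smul]

lemma continuous_tupleAct :
    Continuous fun q : SLR n × (ι → Fin n → ℝ) => tupleAct q.1 q.2 := by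
  refine continuous_pi fun i => Continuous.matrix_mulVec ?_ ?_
  · exact (isClosedEmbedding_coe_SLR n).continuous.comp continuous_fst
  · exact (continuous_apply i).comp continuous_snd

lemma continuous_tupleAct_left (U : ι → Fin n → ℝ) : Continuous fun g : SLR n => tupleAct g U :=
  continuous_tupleAct.comp (continuous_id.prodMk continuous_const)

lemma continuous_tupleAct_right (g : SLR n) :
    Continuous (tupleAct g : (ι → Fin n → ℝ) → ι → Fin n → ℝ) :=
  continuous_tupleAct.comp (continuous_const.prodMk continuous_id)

lemma measurePreserving_mulVec (g : SLR n) :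
    MeasurePreserving fun v : Fin n → ℝ => (g : Matrix (Fin n) (Fin n) ℝ) *ᵥ v := by
  refine ⟨(Continuous.matrix_mulVec continuous_const continuous_id).measurable, ?_⟩
  change Measure.map (Matrix.toLin' (g : Matrix (Fin n) (Fin n) ℝ)) volume = volume
  simpa using Real.map_matrix_volume_pi_eq_smul_volume_pi (M := (g : Matrix (Fin n) (Fin n) ℝ))
    (by simp)

lemma measurePreserving_tupleAct [Fintype ι] (g : SLR n) :
    MeasurePreserving (tupleAct (ι := ι) g) :=
  volume_preserving_pi fun _ => measurePreserving_mulVec g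

lemma vecOf_map (g : SLR n) (γ : Matrix.SpecialLinearGroup (Fin n) ℤ) (m : Fin n → ℤ) :
    vecOf n (g * Matrix.SpecialLinearGroup.map (Int.castRingHom ℝ) γ) m =
      vecOf n g ((γ : Matrix (Fin n) (Fin n) ℤ) *ᵥ m) := by
  rw [vecOf, vecOf, Matrix.SpecialLinearGroup.coe_mul, ← Matrix.mulVec_mulVec]
  congr 1
  exact (funext fun i => RingHom.map_mulVec (Int.castRingHom ℝ) γ.1 m i).symm

lemma isEquivariantFamily_tupleAct (n : ℕ) (ι : Type*) [Countable ι] :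
    IsEquivariantFamily (latticeGamma n)
      fun (m : ι → Fin n → ℤ) (g : SLR n) => tupleAct g (intTuple m) where
  measurable m := (continuous_tupleAct_left _).measurable
  perm := by
    rintro _ ⟨γ, rfl⟩
    refine ⟨Equiv.piCongrRight fun _ =>
      (Matrix.SpecialLinearGroup.toLin' γ).toEquiv, fun m g => funext fun i => ?_⟩
    exact vecOf_map g γ (m i)

/-- The intensity measure of the tuples of vectors of a random lattice. -/
def tupleIntensity (ι : Type*) [Fintype ι] (μ : Measure (LatticeSpace n)) :
    Measure (ι → Fin n → ℝ) := (isEquivariantFamily_tupleAct n ι).intensity μ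

lemma lintegral_tupleIntensity [Fintype ι] (μ : Measure (LatticeSpace n))
    {f : (ι → Fin n → ℝ) → ℝ≥0∞} (hf : Measurable f) :
    ∫⁻ U, f U ∂tupleIntensity ι μ =
      ∫⁻ x, ∑' m : ι → Fin n → ℤ, f (tupleAct x.out (intTuple m)) ∂μ :=
  (isEquivariantFamily_tupleAct n ι).lintegral_intensity μ hf

end Tuples

/-! ### Contracting families in `SL(n, ℝ)` -/

section Contraction

variable {n : ℕ} {ι : Type*}

/-- The square matrix formed by the coordinates `e j` of the vectors of a tuple; its determinants,
for varying `e`, are the maximal minors of the tuple. -/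
def coordMatrix (e : ι → Fin n) (U : ι → Fin n → ℝ) : Matrix ι ι ℝ :=
  Matrix.of fun i j => U i (e j)

/-- The tuple obtained by replacing the coordinate `c` of each vector of a tuple `U` by the
corresponding entry of `y`. -/
def setCoord (c : Fin n) (U : ι → Fin n → ℝ) (y : ι → ℝ) : ι → Fin n → ℝ :=
  fun i => Function.update (U i) c (y i)

/-- The coordinates `c` of the vectors of a tuple. -/
def getCoord (c : Fin n) (U : ι → Fin n → ℝ) : ι → ℝ := fun i => U i c

lemma coordMatrix_setCoord {c : Fin n} {e : ι → Fin n} (hc : ∀ j, e j ≠ c)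
    (U : ι → Fin n → ℝ) (y : ι → ℝ) : coordMatrix e (setCoord c U y) = coordMatrix e U := by
  ext i j
  simp [coordMatrix, setCoord, hc j]

lemma continuous_coordMatrix (e : ι → Fin n) : Continuous (coordMatrix e) :=
  continuous_matrix fun i j => continuous_apply_apply i (e j)

lemma continuous_setCoord (c : Fin n) :
    Continuous fun q : (ι → Fin n → ℝ) × (ι → ℝ) => setCoord c q.1 q.2 :=
  continuous_pi fun _ => Continuous.update (by fun_prop) c (by fun_prop)

lemma continuous_getCoord (c : Fin n) : Continuous (getCoord (ι := ι) c) := by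
  unfold getCoord
  fun_prop

/-- The exchange of the coordinates `c` of a tuple with an independent vector, as a linear map. -/
def swapCoord (c : Fin n) : ((ι → Fin n → ℝ) × (ι → ℝ)) →ₗ[ℝ] ((ι → Fin n → ℝ) × (ι → ℝ)) where
  toFun q := (setCoord c q.1 q.2, getCoord c q.1)
  map_add' p q := Prod.ext (funext fun i => Function.update_add (p.1 i) (q.1 i) c (p.2 i) (q.2 i))
    rfl
  map_smul' r p := Prod.ext (funext fun i => Function.update_smul r (p.1 i) c (p.2 i)) rfl

variable [Fintype ι]

instance : (volume : Measure (ι → Fin n → ℝ)).IsAddHaarMeasure :=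
  Measure.pi.isAddHaarMeasure _

lemma measurePreserving_swapCoord (c : Fin n) : MeasurePreserving (swapCoord (ι := ι) c) := by
  have hinv : swapCoord (ι := ι) c ∘ₗ swapCoord c = LinearMap.id :=
    LinearMap.ext fun q => Prod.ext (funext fun i => by simp [swapCoord, setCoord, getCoord])
      (funext fun i => by simp [swapCoord, setCoord, getCoord])
  have hdet : (swapCoord (ι := ι) c).det * (swapCoord (ι := ι) c).det = 1 := by
    rw [← LinearMap.det_comp, hinv, LinearMap.det_id]
  have : (volume : Measure ((ι → Fin n → ℝ) × (ι → ℝ))).IsAddHaarMeasure :=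
    Measure.prod.instIsAddHaarMeasure (volume : Measure (ι → Fin n → ℝ))
      (volume : Measure (ι → ℝ))
  refine ⟨(LinearMap.continuous_of_finiteDimensional _).measurable, ?_⟩
  rw [Measure.map_linearMap_addHaar_eq_smul_addHaar _ (left_ne_zero_of_mul_eq_one hdet)]
  rcases mul_self_eq_one_iff.1 hdet with h | h <;> simp [h]

/-- The matrix of the map which multiplies all coordinates of `v` by `ε`, except the coordinate `c`,
which becomes `ε (ε ^ n)⁻¹ (v c + ∑ j, x j * v (e j))`. -/
def contractionMatrix (c : Fin n) (e : ι → Fin n) (ε : ℝ) (x : ι → ℝ) :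
    Matrix (Fin n) (Fin n) ℝ :=
  Matrix.diagonal (fun l => ε * if l = c then (ε ^ n)⁻¹ else 1) *
    (1 + Matrix.vecMulVec (Pi.single c 1) (fun l => ∑ j, x j * (Pi.single (e j) 1 : Fin n → ℝ) l))

lemma det_contractionMatrix {c : Fin n} {e : ι → Fin n} (hc : ∀ j, e j ≠ c) {ε : ℝ} (hε : ε ≠ 0)
    (x : ι → ℝ) : (contractionMatrix c e ε x).det = 1 := by
  rw [contractionMatrix, Matrix.det_mul, Matrix.det_diagonal, Finset.prod_mul_distrib,
    Finset.prod_ite_eq', Matrix.vecMulVec_eq Unit,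
    Matrix.det_one_add_replicateCol_mul_replicateRow]
  simp [Pi.single_apply, fun j => (hc j).symm, hε]

/-- The matrix `contractionMatrix c e ε x` as an element of `SL(n, ℝ)`. -/
def contraction {c : Fin n} {e : ι → Fin n} (hc : ∀ j, e j ≠ c) {ε : ℝ} (hε : ε ≠ 0)
    (x : ι → ℝ) : SLR n := ⟨contractionMatrix c e ε x, det_contractionMatrix hc hε x⟩

lemma continuous_contraction {c : Fin n} {e : ι → Fin n} (hc : ∀ j, e j ≠ c) {ε : ℝ}
    (hε : ε ≠ 0) : Continuous fun x : ι → ℝ => contraction hc hε x := by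
  refine (isClosedEmbedding_coe_SLR n).isEmbedding.continuous_iff.2 ?_
  refine Continuous.matrix_mul continuous_const (continuous_const.add ?_)
  exact Continuous.matrix_vecMulVec continuous_const (by fun_prop)

lemma tupleAct_contraction {c : Fin n} {e : ι → Fin n} (hc : ∀ j, e j ≠ c) {ε : ℝ} (hε : ε ≠ 0)
    (x : ι → ℝ) (U : ι → Fin n → ℝ) :
    tupleAct (contraction hc hε x) U = setCoord c (ε • U)
      ((ε ^ n)⁻¹ • (getCoord c (ε • U) + coordMatrix e (ε • U) *ᵥ x)) := by
  funext i l
  have hdot : (fun l => ∑ j, x j * (Pi.single (e j) 1 : Fin n → ℝ) l) ⬝ᵥ U i =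
      ∑ j, U i (e j) * x j := by
    simp only [dotProduct, Finset.sum_mul]
    rw [Finset.sum_comm]
    exact Finset.sum_congr rfl fun j _ => by simp [Pi.single_apply, mul_comm]
  change (contractionMatrix c e ε x *ᵥ U i) l = _
  rw [contractionMatrix, ← Matrix.mulVec_mulVec, Matrix.mulVec_diagonal, Matrix.add_mulVec,
    Matrix.one_mulVec, Matrix.vecMulVec_mulVec, hdot]
  by_cases hl : l = c
  · subst hl
    simp only [setCoord, getCoord, coordMatrix, Matrix.mulVec, dotProduct, Function.update_self,
      Pi.add_apply, Pi.smul_apply, Pi.single_eq_same, MulOpposite.smul_eq_mul_unop,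
      MulOpposite.unop_op, smul_eq_mul, Matrix.of_apply, if_true, one_mul]
    simp_rw [mul_assoc ε (U i _), ← Finset.mul_sum]
    ring
  · simp [setCoord, hl]

end Contraction

/-! ### Averages over contracting families -/

section Averaging

variable {n : ℕ} {ι : Type*} [Fintype ι] [DecidableEq ι]

lemma lintegral_affine {M : Matrix ι ι ℝ} (hM : M.det ≠ 0) (b : ι → ℝ) {F : (ι → ℝ) → ℝ≥0∞}
    (hF : Measurable F) :
    ∫⁻ x, F (b + M *ᵥ x) = ‖M.det‖ₑ⁻¹ * ∫⁻ y, F y := by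
  calc ∫⁻ x, F (b + M *ᵥ x) = ∫⁻ y, F (b + y) ∂(Measure.map (Matrix.toLin' M) volume) := by
        rw [lintegral_map (f := fun y => F (b + y)) (hF.comp (measurable_const_add b))
          (LinearMap.continuous_of_finiteDimensional _).measurable]
        rfl
    _ = _ := by
        rw [Real.map_matrix_volume_pi_eq_smul_volume_pi hM, lintegral_smul_measure,
          lintegral_add_left_eq_self, smul_eq_mul, ← Real.norm_eq_abs, ofReal_norm, enorm_inv hM]

/-- The density obtained when `Ψ` is averaged over a contracting family with weight `κ` and the
parameter of the family is replaced, as variable of integration, by the new coordinate `c`. The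
argument `(δ, W, y)` consists of the volume `δ = ε ^ n` of a cell, the contracted tuple `W` and the
new coordinates `y`. -/
def avgDensity (c : Fin n) (e : ι → Fin n) (κ : (ι → ℝ) → ℝ≥0) (Ψ : (ι → Fin n → ℝ) → ℝ≥0)
    (q : ℝ × (ι → Fin n → ℝ) × (ι → ℝ)) : ℝ≥0 :=
  ‖(coordMatrix e q.2.1).det‖₊⁻¹ *
    (κ ((coordMatrix e q.2.1)⁻¹ *ᵥ (q.1 • q.2.2 - getCoord c q.2.1)) *
      Ψ (setCoord c q.2.1 q.2.2))

variable {c : Fin n} {e : ι → Fin n} {κ : (ι → ℝ) → ℝ≥0} {Ψ : (ι → Fin n → ℝ) → ℝ≥0}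

lemma lintegral_contraction (hc : ∀ j, e j ≠ c) (hκ : Continuous κ) (hΨ : Continuous Ψ)
    (hΨ0 : ∀ U, (coordMatrix e U).det = 0 → Ψ U = 0) {ε : ℝ} (hε : 0 < ε) (U : ι → Fin n → ℝ) :
    ∫⁻ x, (κ x : ℝ≥0∞) * Ψ (tupleAct (contraction hc hε.ne' x) U) =
      ENNReal.ofReal (ε ^ n) ^ Fintype.card ι * ∫⁻ y, avgDensity c e κ Ψ (ε ^ n, ε • U, y) := by
  simp_rw [tupleAct_contraction]
  set W := ε • U
  set M := coordMatrix e W with hM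
  set δ := ε ^ n
  have hδ : 0 < δ := pow_pos hε n
  rcases eq_or_ne M.det 0 with hdet | hdet
  · have hzero (y : ι → ℝ) : Ψ (setCoord c W y) = 0 := hΨ0 _ (by rwa [coordMatrix_setCoord hc])
    simp [avgDensity, hzero]
  set F : (ι → ℝ) → ℝ≥0∞ := fun y => κ (M⁻¹ *ᵥ (δ • y - getCoord c W)) * Ψ (setCoord c W y) with hF
  have hFm : Measurable F := by
    refine Measurable.fun_mul ?_ ?_
    · refine (hκ.comp ?_).measurable.coe_nnreal_ennreal
      exact Continuous.matrix_mulVec continuous_const (by fun_prop)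
    · refine (hΨ.comp ?_).measurable.coe_nnreal_ennreal
      exact (continuous_setCoord c).comp (continuous_const.prodMk continuous_id)
  have hsubst (x : ι → ℝ) : (κ x : ℝ≥0∞) * Ψ (setCoord c W (δ⁻¹ • (getCoord c W + M *ᵥ x))) =
      F (δ⁻¹ • getCoord c W + (δ⁻¹ • M) *ᵥ x) := by
    have hx : M⁻¹ *ᵥ (δ • (δ⁻¹ • (getCoord c W + M *ᵥ x)) - getCoord c W) = x := by
      rw [smul_inv_smul₀ hδ.ne', add_sub_cancel_left, Matrix.mulVec_mulVec,
        Matrix.nonsing_inv_mul _ (Ne.isUnit hdet), Matrix.one_mulVec]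
    simp only [hF, Matrix.smul_mulVec, ← smul_add, hx]
  have hdetδ : (δ⁻¹ • M).det = δ⁻¹ ^ Fintype.card ι * M.det := Matrix.det_smul _ _
  have hdensity (y : ι → ℝ) : (avgDensity c e κ Ψ (δ, W, y) : ℝ≥0∞) = ‖M.det‖ₑ⁻¹ * F y := by
    simp [avgDensity, hF, ← hM, ENNReal.coe_inv (nnnorm_ne_zero_iff.2 hdet), enorm_eq_nnnorm]
  simp_rw [hsubst, hdensity]
  rw [lintegral_affine (by rw [hdetδ]; positivity) _ hFm, lintegral_const_mul _ hFm, ← mul_assoc,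
    hdetδ, enorm_mul, enorm_pow, enorm_inv hδ.ne', Real.enorm_of_nonneg hδ.le,
    ENNReal.mul_inv (.inr enorm_ne_top) (.inr (enorm_ne_zero.2 hdet)), ENNReal.inv_pow, inv_inv]

lemma continuous_avgDensity (hc : ∀ j, e j ≠ c) (hκ : Continuous κ) (hΨ : Continuous Ψ)
    (hΨd : tsupport Ψ ⊆ {U | (coordMatrix e U).det ≠ 0}) : Continuous (avgDensity c e κ Ψ) := by
  have hM : Continuous fun q : ℝ × (ι → Fin n → ℝ) × (ι → ℝ) => coordMatrix e q.2.1 :=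
    (continuous_coordMatrix e).comp (by fun_prop)
  have hset : Continuous fun q : ℝ × (ι → Fin n → ℝ) × (ι → ℝ) => setCoord c q.2.1 q.2.2 :=
    (continuous_setCoord c).comp (by fun_prop)
  refine continuous_iff_continuousAt.2 fun q => ?_
  by_cases h0 : (coordMatrix e q.2.1).det = 0
  · have hq : setCoord c q.2.1 q.2.2 ∉ tsupport Ψ := fun hmem =>
      hΨd hmem (by rwa [coordMatrix_setCoord hc])
    have hzero : avgDensity c e κ Ψ =ᶠ[𝓝 q] fun _ => 0 := by
      filter_upwards [hset.continuousAt.eventually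
        ((isClosed_tsupport Ψ).isOpen_compl.mem_nhds hq)] with p hp
      simp [avgDensity, image_eq_zero_of_notMem_tsupport hp]
    exact (continuousAt_const (y := (0 : ℝ≥0))).congr hzero.symm
  · refine ContinuousAt.mul ?_ (ContinuousAt.mul ?_ (hΨ.comp hset).continuousAt)
    · exact hM.matrix_det.nnnorm.continuousAt.inv₀ (nnnorm_ne_zero_iff.2 h0)
    · refine hκ.continuousAt.comp ?_
      have hinv : ContinuousAt (fun q : ℝ × (ι → Fin n → ℝ) × (ι → ℝ) =>
          (coordMatrix e q.2.1)⁻¹) q := by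
        simp_rw [Matrix.inv_def, Ring.inverse_eq_inv']
        exact (hM.matrix_det.continuousAt.inv₀ h0).smul hM.matrix_adjugate.continuousAt
      have harg : Continuous fun q : ℝ × (ι → Fin n → ℝ) × (ι → ℝ) =>
          q.1 • q.2.2 - getCoord c q.2.1 :=
        (by fun_prop : Continuous fun q : ℝ × (ι → Fin n → ℝ) × (ι → ℝ) => q.1 • q.2.2).sub
          ((continuous_getCoord c).comp (by fun_prop))
      have hmul : Continuous fun p : Matrix ι ι ℝ × (ι → ℝ) => p.1 *ᵥ p.2 := by fun_prop
      exact ContinuousAt.comp (f := fun q : ℝ × (ι → Fin n → ℝ) × (ι → ℝ) =>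
        ((coordMatrix e q.2.1)⁻¹, q.1 • q.2.2 - getCoord c q.2.1)) hmul.continuousAt
        (hinv.prodMk harg.continuousAt)

lemma norm_le_of_avgDensity_ne_zero (hc : ∀ j, e j ≠ c) {r : ℝ} (hr : ∀ x, κ x ≠ 0 → ‖x‖ ≤ r)
    {R : ℝ} (hR : ∀ U, Ψ U ≠ 0 → ‖U‖ ≤ R) {δ : ℝ} (hδ : |δ| ≤ 1) {W : ι → Fin n → ℝ}
    {y : ι → ℝ} (h : avgDensity c e κ Ψ (δ, W, y) ≠ 0) :
    ‖W‖ ≤ R + Fintype.card ι * R * r ∧ ‖y‖ ≤ R := by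
  simp only [avgDensity, ne_eq, mul_eq_zero, inv_eq_zero, nnnorm_eq_zero, not_or] at h
  obtain ⟨hdet, hκ0, hΨ0⟩ := h
  set z := (coordMatrix e W)⁻¹ *ᵥ (δ • y - getCoord c W) with hz
  have hMz : coordMatrix e W *ᵥ z = δ • y - getCoord c W := by
    rw [hz, Matrix.mulVec_mulVec, Matrix.mul_nonsing_inv _ (Ne.isUnit hdet), Matrix.one_mulVec]
  have hR0 : 0 ≤ R := (norm_nonneg _).trans (hR _ hΨ0)
  have hr0 : 0 ≤ r := (norm_nonneg _).trans (hr _ hκ0)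
  have hentry (i : ι) (l : Fin n) : ‖setCoord c W y i l‖ ≤ R :=
    (norm_le_pi_norm _ l).trans ((norm_le_pi_norm _ i).trans (hR _ hΨ0))
  have hy (i : ι) : ‖y i‖ ≤ R := by simpa [setCoord] using hentry i c
  have hW (i : ι) (l : Fin n) (hl : l ≠ c) : ‖W i l‖ ≤ R := by simpa [setCoord, hl] using hentry i l
  have hWc (i : ι) : ‖W i c‖ ≤ R + Fintype.card ι * R * r := by
    have hi : W i c = δ * y i - (coordMatrix e W *ᵥ z) i := by
      rw [hMz]
      simp [getCoord]
    rw [hi]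
    refine (norm_sub_le _ _).trans (add_le_add ?_ ((norm_sum_le _ _).trans ?_))
    · rw [norm_mul, Real.norm_eq_abs δ]
      exact (mul_le_mul hδ (hy i) (norm_nonneg _) zero_le_one).trans (one_mul R).le
    · refine (Finset.sum_le_card_nsmul _ _ (R * r) fun j _ => ?_).trans_eq ?_
      · rw [norm_mul]
        exact mul_le_mul (hW i _ (hc j)) ((norm_le_pi_norm z j).trans (hr _ hκ0)) (norm_nonneg _)
          hR0
      · rw [nsmul_eq_mul, Finset.card_univ, mul_assoc]
  have hB : 0 ≤ Fintype.card ι * R * r := by positivity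
  refine ⟨(pi_norm_le_iff_of_nonneg (by positivity)).2 fun i =>
    (pi_norm_le_iff_of_nonneg (by positivity)).2 fun l => ?_, (pi_norm_le_iff_of_nonneg hR0).2 hy⟩
  rcases eq_or_ne l c with rfl | hl
  · exact hWc i
  · exact (hW i l hl).trans (by linarith)

lemma lintegral_density_inv_mulVec (hκ : Continuous κ) (hκ1 : ∫⁻ x, κ x = 1) {M : Matrix ι ι ℝ}
    (hM : M.det ≠ 0) : ∫⁻ y, (κ (M⁻¹ *ᵥ (-y)) : ℝ≥0∞) = ‖M.det‖ₑ := by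
  have hdet : (-M⁻¹).det = (-1) ^ Fintype.card ι * M.det⁻¹ := by
    rw [Matrix.det_neg, Matrix.det_nonsing_inv, Ring.inverse_eq_inv']
  have hsubst := lintegral_affine (M := -M⁻¹) (by rw [hdet]; positivity) 0
    (F := fun x => (κ x : ℝ≥0∞)) hκ.measurable.coe_nnreal_ennreal
  simpa [hκ1, hdet, enorm_inv hM, Matrix.neg_mulVec, Matrix.mulVec_neg] using hsubst

lemma lintegral_inv_det_mul_density (hκ : Continuous κ) (hκ1 : ∫⁻ x, κ x = 1) {M : Matrix ι ι ℝ}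
    (hM : M.det ≠ 0) (a : ℝ≥0∞) :
    ∫⁻ y, ((‖M.det‖₊⁻¹ : ℝ≥0) : ℝ≥0∞) * (a * κ (M⁻¹ *ᵥ (-y))) = a := by
  have hκM : Measurable fun y => (κ (M⁻¹ *ᵥ (-y)) : ℝ≥0∞) :=
    (hκ.comp (Continuous.matrix_mulVec continuous_const
      continuous_neg)).measurable.coe_nnreal_ennreal
  rw [lintegral_const_mul _ (hκM.const_mul a), lintegral_const_mul _ hκM,
    lintegral_density_inv_mulVec hκ hκ1 hM, enorm_eq_nnnorm, mul_left_comm, ← ENNReal.coe_mul,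
    inv_mul_cancel₀ (nnnorm_ne_zero_iff.2 hM), ENNReal.coe_one, mul_one]

lemma lintegral_avgDensity_zero (hc : ∀ j, e j ≠ c) (hκ : Continuous κ) (hκ1 : ∫⁻ x, κ x = 1)
    (hΨ : Continuous Ψ) (hΨ0 : ∀ U, (coordMatrix e U).det = 0 → Ψ U = 0) :
    ∫⁻ q : (ι → Fin n → ℝ) × (ι → ℝ), avgDensity c e κ Ψ (0, q.1, q.2) = ∫⁻ U, Ψ U := by
  set G : (ι → Fin n → ℝ) × (ι → ℝ) → ℝ≥0∞ := fun q =>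
    ((‖(coordMatrix e q.1).det‖₊⁻¹ : ℝ≥0) : ℝ≥0∞) *
      (Ψ q.1 * κ ((coordMatrix e q.1)⁻¹ *ᵥ (-q.2))) with hG
  have hdet : Measurable fun q : (ι → Fin n → ℝ) × (ι → ℝ) => (coordMatrix e q.1).det :=
    (((continuous_coordMatrix e).comp continuous_fst).matrix_det).measurable
  have hκm : Measurable fun q : (ι → Fin n → ℝ) × (ι → ℝ) =>
      (κ ((coordMatrix e q.1)⁻¹ *ᵥ (-q.2)) : ℝ≥0∞) := by
    refine (hκ.measurable.comp (measurable_pi_lambda _ fun i => ?_)).coe_nnreal_ennreal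
    simp only [Matrix.mulVec, dotProduct, Matrix.inv_def, Ring.inverse_eq_inv']
    refine Finset.measurable_sum _ fun j _ => Measurable.fun_mul ?_ (by fun_prop)
    refine hdet.inv.mul (Continuous.measurable ?_)
    exact (((continuous_coordMatrix e).comp continuous_fst).matrix_adjugate).matrix_elem i j
  have hGm : Measurable G := hdet.nnnorm.inv.coe_nnreal_ennreal.mul
    ((hΨ.comp continuous_fst).measurable.coe_nnreal_ennreal.mul hκm)
  calc ∫⁻ q : (ι → Fin n → ℝ) × (ι → ℝ), (avgDensity c e κ Ψ (0, q.1, q.2) : ℝ≥0∞)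
      = ∫⁻ q, G (swapCoord c q) := by
        simp [avgDensity, hG, swapCoord, coordMatrix_setCoord hc, mul_comm (Ψ _ : ℝ≥0∞)]
    _ = ∫⁻ U, ∫⁻ y, G (U, y) := by
        rw [(measurePreserving_swapCoord c).lintegral_comp hGm]
        exact lintegral_prod _ hGm.aemeasurable
    _ = ∫⁻ U, Ψ U := lintegral_congr fun U => ?_
  rcases eq_or_ne (coordMatrix e U).det 0 with h0 | h0
  · simp [hG, hΨ0 U h0]
  · exact lintegral_inv_det_mul_density hκ hκ1 h0 (Ψ U)

end Averaging

/-! ### Riemann sums -/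

section Grid

variable {n : ℕ} {ι : Type*}

/-- The tuple of integral parts, by which sums over integral tuples become integrals. -/
def floorTuple (U : ι → Fin n → ℝ) : ι → Fin n → ℤ := fun i j => ⌊U i j⌋

lemma measurable_floorTuple : Measurable (floorTuple : (ι → Fin n → ℝ) → _) := by
  unfold floorTuple
  fun_prop

/-- The point of the grid `ε ℤ` below a given tuple. -/
def gridPoint (ε : ℝ) (U : ι → Fin n → ℝ) : ι → Fin n → ℝ := ε • intTuple (floorTuple (ε⁻¹ • U))

lemma measurable_intTuple : Measurable (intTuple : (ι → Fin n → ℤ) → _) := by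
  unfold intTuple
  fun_prop

lemma measurable_gridPoint (ε : ℝ) : Measurable (gridPoint ε : (ι → Fin n → ℝ) → _) :=
  (measurable_intTuple.comp (measurable_floorTuple.comp (measurable_const_smul ε⁻¹))).const_smul ε

lemma abs_gridPoint_sub_le {ε : ℝ} (hε : 0 < ε) (U : ι → Fin n → ℝ) (i : ι) (j : Fin n) :
    |gridPoint ε U i j - U i j| ≤ ε := by
  have hfract : gridPoint ε U i j - U i j = -(ε * Int.fract (ε⁻¹ * U i j)) := by
    simp only [gridPoint, intTuple, floorTuple, Pi.smul_apply, smul_eq_mul, Int.fract]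
    field_simp
    ring
  rw [hfract, abs_neg, abs_of_nonneg (mul_nonneg hε.le (Int.fract_nonneg _))]
  exact mul_le_of_le_one_right hε.le (Int.fract_lt_one _).le

lemma tendsto_gridPoint {ε : ℕ → ℝ} (hε : ∀ N, 0 < ε N) (hε0 : Tendsto ε atTop (𝓝 0))
    (U : ι → Fin n → ℝ) : Tendsto (fun N => gridPoint (ε N) U) atTop (𝓝 U) :=
  tendsto_pi_nhds.2 fun i => tendsto_pi_nhds.2 fun j => tendsto_iff_norm_sub_tendsto_zero.2 <|
    squeeze_zero (fun _ => norm_nonneg _) (fun N => abs_gridPoint_sub_le (hε N) U i j) hε0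

variable [Fintype ι]

lemma norm_gridPoint_sub_le {ε : ℝ} (hε : 0 < ε) (U : ι → Fin n → ℝ) :
    ‖gridPoint ε U - U‖ ≤ ε :=
  (pi_norm_le_iff_of_nonneg hε.le).2 fun i => (pi_norm_le_iff_of_nonneg hε.le).2 fun j =>
    abs_gridPoint_sub_le hε U i j

lemma lintegral_floorTuple (F : (ι → Fin n → ℤ) → ℝ≥0∞) :
    ∫⁻ U, F (floorTuple U) = ∑' m, F m := by
  rw [← lintegral_map (f := F) (measurable_of_countable F) measurable_floorTuple,
    lintegral_countable']
  refine tsum_congr fun m => ?_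
  have hcell : floorTuple ⁻¹' {m} =
      Set.pi Set.univ fun i => Set.pi Set.univ fun j => Set.Ico (m i j : ℝ) (m i j + 1) := by
    ext U
    simp [funext_iff, floorTuple, Int.floor_eq_iff]
  rw [Measure.map_apply measurable_floorTuple (measurableSet_singleton m), hcell, volume_pi_pi]
  simp_rw [volume_pi_pi]
  simp

lemma lintegral_gridPoint {ε : ℝ} (hε : 0 < ε) {F : (ι → Fin n → ℝ) → ℝ≥0∞} (hF : Measurable F) :
    ∫⁻ U, F (gridPoint ε U) =
      ENNReal.ofReal (ε ^ n) ^ Fintype.card ι * ∑' m : ι → Fin n → ℤ, F (ε • intTuple m) := by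
  have hm : Measurable fun U : ι → Fin n → ℝ => F (ε • intTuple (floorTuple U)) :=
    hF.comp ((measurable_intTuple.comp measurable_floorTuple).const_smul ε)
  have hrank : Module.finrank ℝ (ι → Fin n → ℝ) = n * Fintype.card ι := by
    simp [Module.finrank_pi_fintype, mul_comm]
  have hscale : |(ε⁻¹ ^ (n * Fintype.card ι))⁻¹| = ε ^ (n * Fintype.card ι) := by
    rw [inv_pow, inv_inv, abs_of_pos (by positivity)]
  calc ∫⁻ U, F (gridPoint ε U)
      = ∫⁻ U, F (ε • intTuple (floorTuple U)) ∂Measure.map (ε⁻¹ • ·) volume :=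
        (lintegral_map hm (measurable_const_smul ε⁻¹)).symm
    _ = _ := by
        rw [Measure.map_addHaar_smul _ (inv_ne_zero hε.ne'), lintegral_smul_measure, hrank, hscale,
          lintegral_floorTuple fun m => F (ε • intTuple m), pow_mul,
          ENNReal.ofReal_pow (by positivity), smul_eq_mul]

lemma exists_norm_le_of_norm_tupleAct_le (h : SLR n) (R : ℝ) :
    ∃ R', ∀ U : ι → Fin n → ℝ, ‖tupleAct h U‖ ≤ R → ‖U‖ ≤ R' := by
  obtain ⟨R', hR'⟩ := ((isCompact_closedBall (0 : ι → Fin n → ℝ) R).image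
    (continuous_tupleAct_right h⁻¹)).isBounded.exists_norm_le
  refine ⟨R', fun U hU => hR' U ⟨tupleAct h U, by simpa using hU, ?_⟩⟩
  rw [← tupleAct_mul, inv_mul_cancel, tupleAct_one]

end Grid

section Limit

variable {n : ℕ} {ι : Type*} [Fintype ι] [DecidableEq ι] {c : Fin n} {e : ι → Fin n}
  {κ : (ι → ℝ) → ℝ≥0} {Ψ : (ι → Fin n → ℝ) → ℝ≥0}

lemma lintegral_contraction_tsum (hc : ∀ j, e j ≠ c) (hκ : Continuous κ) (hΨ : Continuous Ψ)
    (hΨd : tsupport Ψ ⊆ {U | (coordMatrix e U).det ≠ 0}) (h : SLR n) {ε : ℝ} (hε : 0 < ε) :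
    ∫⁻ x, (κ x : ℝ≥0∞) * ∑' m : ι → Fin n → ℤ,
      (Ψ (tupleAct (contraction hc hε.ne' x) (tupleAct h (intTuple m))) : ℝ≥0∞) =
    ∫⁻ q : (ι → Fin n → ℝ) × (ι → ℝ),
      avgDensity c e κ Ψ (ε ^ n, tupleAct h (gridPoint ε q.1), q.2) := by
  have hterm (m : ι → Fin n → ℤ) : Measurable fun x =>
      (κ x : ℝ≥0∞) * Ψ (tupleAct (contraction hc hε.ne' x) (tupleAct h (intTuple m))) := by
    refine hκ.measurable.coe_nnreal_ennreal.mul (hΨ.comp ?_).measurable.coe_nnreal_ennreal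
    exact (continuous_tupleAct_left _).comp (continuous_contraction hc hε.ne')
  have hG : Measurable fun q : ℝ × (ι → Fin n → ℝ) × (ι → ℝ) => (avgDensity c e κ Ψ q : ℝ≥0∞) :=
    (continuous_avgDensity hc hκ hΨ hΨd).measurable.coe_nnreal_ennreal
  have hact : Measurable (tupleAct (ι := ι) h) := (continuous_tupleAct_right h).measurable
  have hGact : Measurable fun q : (ι → Fin n → ℝ) × (ι → ℝ) =>
      (avgDensity c e κ Ψ (ε ^ n, tupleAct h q.1, q.2) : ℝ≥0∞) :=
    hG.comp (measurable_const.prodMk ((hact.comp measurable_fst).prodMk measurable_snd))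
  have hGgrid : Measurable fun q : (ι → Fin n → ℝ) × (ι → ℝ) =>
      (avgDensity c e κ Ψ (ε ^ n, tupleAct h (gridPoint ε q.1), q.2) : ℝ≥0∞) :=
    hG.comp (measurable_const.prodMk
      ((hact.comp ((measurable_gridPoint ε).comp measurable_fst)).prodMk measurable_snd))
  have hΨ0 (U : ι → Fin n → ℝ) (hU : (coordMatrix e U).det = 0) : Ψ U = 0 :=
    image_eq_zero_of_notMem_tsupport fun hmem => hΨd hmem hU
  simp_rw [← ENNReal.tsum_mul_left]
  rw [lintegral_tsum fun m => (hterm m).aemeasurable]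
  simp_rw [lintegral_contraction hc hκ hΨ hΨ0 hε, ENNReal.tsum_mul_left, ← tupleAct_smul]
  rw [← lintegral_gridPoint hε (F := fun W => ∫⁻ y, (avgDensity c e κ Ψ
    (ε ^ n, tupleAct h W, y) : ℝ≥0∞)) hGact.lintegral_prod_right']
  change _ = ∫⁻ q, _ ∂(volume.prod volume)
  rw [lintegral_prod _ hGgrid.aemeasurable]

lemma lintegral_avgDensity_zero_tupleAct (hc : ∀ j, e j ≠ c) (hκ : Continuous κ)
    (hκ1 : ∫⁻ x, κ x = 1) (hΨ : Continuous Ψ)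
    (hΨd : tsupport Ψ ⊆ {U | (coordMatrix e U).det ≠ 0}) (h : SLR n) :
    ∫⁻ q : (ι → Fin n → ℝ) × (ι → ℝ), avgDensity c e κ Ψ (0, tupleAct h q.1, q.2) = ∫⁻ U, Ψ U := by
  have hpres : MeasurePreserving (Prod.map (tupleAct (ι := ι) h) (id : (ι → ℝ) → _)) :=
    (measurePreserving_tupleAct h).prod (MeasurePreserving.id _)
  have hm : Measurable fun q : (ι → Fin n → ℝ) × (ι → ℝ) =>
      (avgDensity c e κ Ψ (0, q.1, q.2) : ℝ≥0∞) :=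
    ((continuous_avgDensity hc hκ hΨ hΨd).comp (by fun_prop)).measurable.coe_nnreal_ennreal
  rw [← lintegral_avgDensity_zero hc hκ hκ1 hΨ fun U hU =>
    image_eq_zero_of_notMem_tsupport fun hmem => hΨd hmem hU]
  exact hpres.lintegral_comp hm

lemma exists_avgDensity_le (hc : ∀ j, e j ≠ c) (hκ : Continuous κ) (hκs : HasCompactSupport κ)
    (hΨ : Continuous Ψ) (hΨs : HasCompactSupport Ψ)
    (hΨd : tsupport Ψ ⊆ {U | (coordMatrix e U).det ≠ 0}) :
    ∃ (R₁ R₂ : ℝ) (C : ℝ≥0), ∀ δ W y, |δ| ≤ 1 → avgDensity c e κ Ψ (δ, W, y) ≠ 0 →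
      avgDensity c e κ Ψ (δ, W, y) ≤ C ∧ ‖W‖ ≤ R₁ ∧ ‖y‖ ≤ R₂ := by
  obtain ⟨r, hr⟩ := hκs.isCompact.isBounded.exists_norm_le
  obtain ⟨R, hR⟩ := hΨs.isCompact.isBounded.exists_norm_le
  obtain ⟨C, hC⟩ := (((isCompact_closedBall (0 : ℝ) 1).prod
    ((isCompact_closedBall (0 : ι → Fin n → ℝ) (R + Fintype.card ι * R * r)).prod
      (isCompact_closedBall (0 : ι → ℝ) R))).image (continuous_avgDensity hc hκ hΨ hΨd)).bddAbove
  refine ⟨R + Fintype.card ι * R * r, R, C, fun δ W y hδ h0 => ?_⟩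
  have hnorm := norm_le_of_avgDensity_ne_zero hc (fun x hx => hr x (subset_tsupport κ hx))
    (fun U hU => hR U (subset_tsupport Ψ hU)) hδ h0
  exact ⟨hC ⟨_, ⟨by simpa using hδ, by simpa using hnorm.1, by simpa using hnorm.2⟩, rfl⟩, hnorm⟩

/- The weights `avgDensity` with `|δ| ≤ 1` are uniformly bounded and supported in a fixed ball, so
dominated convergence applies to the Riemann sums. -/
lemma tendsto_lintegral_contraction_tsum (hc : ∀ j, e j ≠ c) (hκ : Continuous κ)
    (hκs : HasCompactSupport κ) (hκ1 : ∫⁻ x, κ x = 1) (hΨ : Continuous Ψ)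
    (hΨs : HasCompactSupport Ψ) (hΨd : tsupport Ψ ⊆ {U | (coordMatrix e U).det ≠ 0}) (h : SLR n)
    {ε : ℕ → ℝ} (hε : ∀ N, 0 < ε N) (hε1 : ∀ N, ε N ≤ 1) (hε0 : Tendsto ε atTop (𝓝 0)) :
    Tendsto (fun N => ∫⁻ x, (κ x : ℝ≥0∞) * ∑' m : ι → Fin n → ℤ,
      (Ψ (tupleAct (contraction hc (hε N).ne' x) (tupleAct h (intTuple m))) : ℝ≥0∞))
      atTop (𝓝 (∫⁻ U, Ψ U)) := by
  have hG := continuous_avgDensity hc hκ hΨ hΨd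
  obtain ⟨R₁, R₂, C, hbound⟩ := exists_avgDensity_le hc hκ hκs hΨ hΨs hΨd
  obtain ⟨R₃, hR₃⟩ := exists_norm_le_of_norm_tupleAct_le (ι := ι) h R₁
  have hδ (N : ℕ) : |ε N ^ n| ≤ 1 := by
    rw [abs_of_pos (pow_pos (hε N) n)]
    exact pow_le_one₀ (hε N).le (hε1 N)
  simp_rw [lintegral_contraction_tsum hc hκ hΨ hΨd h (hε _)]
  rw [← lintegral_avgDensity_zero_tupleAct hc hκ hκ1 hΨ hΨd h]
  refine tendsto_lintegral_of_dominated_convergence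
    ((Metric.closedBall (0 : ι → Fin n → ℝ) (R₃ + 1) ×ˢ Metric.closedBall (0 : ι → ℝ) R₂).indicator
      fun _ => (C : ℝ≥0∞)) (fun N => ?_) (fun N => Eventually.of_forall fun q => ?_) ?_
      (Eventually.of_forall fun q => ?_)
  · exact hG.measurable.coe_nnreal_ennreal.comp (measurable_const.prodMk
      (((continuous_tupleAct_right h).measurable.comp
        ((measurable_gridPoint (ε N)).comp measurable_fst)).prodMk measurable_snd))
  · rcases eq_or_ne (avgDensity c e κ Ψ (ε N ^ n, tupleAct h (gridPoint (ε N) q.1), q.2)) 0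
      with h0 | h0
    · simp [h0]
    obtain ⟨hC, hW, hy⟩ := hbound _ _ _ (hδ N) h0
    have hq : ‖q.1‖ ≤ R₃ + 1 := by
      have htri := norm_sub_le (gridPoint (ε N) q.1) (gridPoint (ε N) q.1 - q.1)
      rw [_root_.sub_sub_cancel] at htri
      linarith [hR₃ _ hW, norm_gridPoint_sub_le (hε N) q.1, hε1 N]
    rw [Set.indicator_of_mem (Set.mem_prod.2 ⟨by simpa using hq, by simpa using hy⟩)]
    exact ENNReal.coe_le_coe.2 hC
  · rw [lintegral_indicator_const (measurableSet_closedBall.prod measurableSet_closedBall)]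
    exact ENNReal.mul_ne_top ENNReal.coe_ne_top
      (Metric.isBounded_closedBall.prod Metric.isBounded_closedBall).measure_lt_top.ne
  · have hn : n ≠ 0 := fun h0 => (h0 ▸ c).elim0
    have hgrid : Tendsto (fun N => tupleAct h (gridPoint (ε N) q.1)) atTop
        (𝓝 (tupleAct h q.1)) :=
      ((continuous_tupleAct_right h).tendsto q.1).comp (tendsto_gridPoint hε hε0 q.1)
    refine (ENNReal.continuous_coe.comp hG).continuousAt.tendsto.comp
      (Tendsto.prodMk_nhds ?_ (hgrid.prodMk_nhds tendsto_const_nhds))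
    simpa [hn] using hε0.pow n

end Limit

/-! ### The Siegel–Rogers formula for linearly independent tuples -/

section SiegelRogers

variable {n : ℕ} {ι : Type*} [Fintype ι]

lemma exists_continuous_hasCompactSupport_lintegral_eq_one (ι : Type*) [Fintype ι] :
    ∃ κ : (ι → ℝ) → ℝ≥0, Continuous κ ∧ HasCompactSupport κ ∧ ∫⁻ x, (κ x : ℝ≥0∞) = 1 := by
  let φ : ContDiffBump (0 : ι → ℝ) := ⟨1, 2, one_pos, one_lt_two⟩
  refine ⟨fun x => (φ.normed volume x).toNNReal, continuous_real_toNNReal.comp φ.continuous_normed,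
    φ.hasCompactSupport_normed.comp_left (g := Real.toNNReal) Real.toNNReal_zero, ?_⟩
  change ∫⁻ x, ENNReal.ofReal (φ.normed volume x) = 1
  rw [← ofReal_integral_eq_lintegral_ofReal φ.integrable_normed
    (Eventually.of_forall φ.nonneg_normed), φ.integral_normed, ENNReal.ofReal_one]

lemma restrict_eq_of_withDensity_eq {α : Type*} [MeasurableSpace α] {μ ν : Measure α}
    {f : α → ℝ≥0∞} (hf : Measurable f) (htop : ∀ x, f x ≠ ∞)
    (h : μ.withDensity f = ν.withDensity f) :
    μ.restrict {x | f x ≠ 0} = ν.restrict {x | f x ≠ 0} := by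
  have hs : MeasurableSet {x | f x ≠ 0} := (measurableSet_eq_fun hf measurable_const).compl
  have hinv (ρ : Measure α) : ρ.restrict {x | f x ≠ 0} =
      ((ρ.withDensity f).restrict {x | f x ≠ 0}).withDensity fun x => (f x)⁻¹ := by
    rw [restrict_withDensity hs]
    exact (withDensity_inv_same hf (ae_restrict_mem hs) (Eventually.of_forall htop)).symm
  rw [hinv μ, hinv ν, h]

variable [DecidableEq ι] {c : Fin n} {e : ι → Fin n} {μ : Measure (LatticeSpace n)}
  [IsProbabilityMeasure μ] [SMulInvariantMeasure (SLR n) (LatticeSpace n) μ]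

lemma lintegral_tupleIntensity_of_hasCompactSupport (hc : ∀ j, e j ≠ c)
    {Ψ : (ι → Fin n → ℝ) → ℝ≥0} (hΨ : Continuous Ψ) (hΨs : HasCompactSupport Ψ)
    (hΨd : tsupport Ψ ⊆ {U | (coordMatrix e U).det ≠ 0}) :
    ∫⁻ U, Ψ U ∂tupleIntensity ι μ = ∫⁻ U, (Ψ U : ℝ≥0∞) := by
  obtain ⟨κ, hκ, hκs, hκ1⟩ := exists_continuous_hasCompactSupport_lintegral_eq_one ι
  have hκm : Measurable fun x => (κ x : ℝ≥0∞) := hκ.measurable.coe_nnreal_ennreal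
  have hΨm : Measurable fun U => (Ψ U : ℝ≥0∞) := hΨ.measurable.coe_nnreal_ennreal
  have : IsProbabilityMeasure (volume.withDensity fun x => (κ x : ℝ≥0∞)) :=
    ⟨by rw [withDensity_apply _ MeasurableSet.univ, setLIntegral_univ, hκ1]⟩
  have hfam := isEquivariantFamily_tupleAct n ι
  have hε (N : ℕ) : 0 < 1 / ((N : ℝ) + 1) := Nat.one_div_pos_of_nat
  have hcontr (N : ℕ) : Continuous (contraction hc (hε N).ne') := continuous_contraction hc _
  rw [lintegral_tupleIntensity μ hΨm]
  refine lintegral_out_eq_of_tendsto_average (ν := volume.withDensity fun x => (κ x : ℝ≥0∞))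
    (fun N => (hcontr N).measurable) (hfam.measurable_tsum hΨm)
    (hfam.tsum_mul_right fun U => (Ψ U : ℝ≥0∞)) fun g => ?_
  convert tendsto_lintegral_contraction_tsum hc hκ hκs hκ1 hΨ hΨs hΨd g hε
    (fun N => Nat.one_div_le_one_div (Nat.zero_le N) |>.trans (by simp))
    tendsto_one_div_add_atTop_nhds_zero_nat using 2 with N
  have hsum : Measurable fun x => ∑' m : ι → Fin n → ℤ,
      (Ψ (tupleAct (contraction hc (hε N).ne' x * g) (intTuple m)) : ℝ≥0∞) :=
    (hfam.measurable_tsum hΨm).comp ((hcontr N).measurable.mul_const g)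
  rw [lintegral_withDensity_eq_lintegral_mul _ hκm hsum]
  simp [tupleAct_mul]

/-- A cut-off to the tuples `U` with `‖U‖ ≤ j + 1` whose minor at the coordinates `e` has absolute
value at least `1 / (j + 1)`. -/
def minorCutoff (e : ι → Fin n) (j : ℕ) (U : ι → Fin n → ℝ) : ℝ≥0 :=
  (j + 1 - ‖U‖).toNNReal * (|(coordMatrix e U).det| - 1 / ((j : ℝ) + 1)).toNNReal

lemma continuous_minorCutoff (e : ι → Fin n) (j : ℕ) : Continuous (minorCutoff e j) := by
  have hdet := (continuous_coordMatrix e).matrix_det.abs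
  unfold minorCutoff
  fun_prop

lemma tsupport_minorCutoff_subset (e : ι → Fin n) (j : ℕ) : tsupport (minorCutoff e j) ⊆
    Metric.closedBall 0 (j + 1) ∩ {U | 1 / ((j : ℝ) + 1) ≤ |(coordMatrix e U).det|} := by
  refine closure_minimal (fun U hU => ?_) (Metric.isClosed_closedBall.inter
    (isClosed_le continuous_const (continuous_coordMatrix e).matrix_det.abs))
  have hnorm := Real.toNNReal_pos.1 (pos_iff_ne_zero.2 (left_ne_zero_of_mul hU))
  have hdet := Real.toNNReal_pos.1 (pos_iff_ne_zero.2 (right_ne_zero_of_mul hU))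
  exact ⟨by simpa using (sub_pos.1 hnorm).le, (sub_pos.1 hdet).le⟩

lemma hasCompactSupport_minorCutoff (e : ι → Fin n) (j : ℕ) :
    HasCompactSupport (minorCutoff e j) :=
  (isCompact_closedBall _ _).of_isClosed_subset (isClosed_tsupport _)
    ((tsupport_minorCutoff_subset e j).trans Set.inter_subset_left)

lemma tsupport_minorCutoff_subset_det_ne_zero (e : ι → Fin n) (j : ℕ) :
    tsupport (minorCutoff e j) ⊆ {U | (coordMatrix e U).det ≠ 0} := fun _ hU =>
  abs_pos.1 (Nat.one_div_pos_of_nat.trans_le (tsupport_minorCutoff_subset e j hU).2)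

lemma iUnion_minorCutoff_ne_zero (e : ι → Fin n) :
    ⋃ j, {U : ι → Fin n → ℝ | (minorCutoff e j U : ℝ≥0∞) ≠ 0} =
      {U | (coordMatrix e U).det ≠ 0} := by
  refine Set.Subset.antisymm (Set.iUnion_subset fun j U hU =>
    tsupport_minorCutoff_subset_det_ne_zero e j (subset_tsupport _ (ENNReal.coe_ne_zero.1 hU)))
    fun U hU => ?_
  obtain ⟨a, ha⟩ := exists_nat_gt ‖U‖
  obtain ⟨b, hb⟩ := exists_nat_one_div_lt (abs_pos.2 hU)
  have hnorm : ‖U‖ < (max a b : ℕ) + 1 :=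
    (ha.trans_le (Nat.cast_le.2 (le_max_left a b))).trans (lt_add_one _)
  have hdet : 1 / (((max a b : ℕ) : ℝ) + 1) < |(coordMatrix e U).det| :=
    (Nat.one_div_le_one_div (le_max_right a b)).trans_lt hb
  exact Set.mem_iUnion.2 ⟨max a b, ENNReal.coe_ne_zero.2 (mul_ne_zero
    (Real.toNNReal_pos.2 (sub_pos.2 hnorm)).ne' (Real.toNNReal_pos.2 (sub_pos.2 hdet)).ne')⟩

lemma withDensity_minorCutoff_tupleIntensity (hc : ∀ j, e j ≠ c) (j : ℕ) :
    (tupleIntensity ι μ).withDensity (fun U => (minorCutoff e j U : ℝ≥0∞)) =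
      volume.withDensity fun U => (minorCutoff e j U : ℝ≥0∞) := by
  have hcont := continuous_minorCutoff e j
  have hm : Measurable fun U => (minorCutoff e j U : ℝ≥0∞) := hcont.measurable.coe_nnreal_ennreal
  have hcompact := hasCompactSupport_minorCutoff e j
  have : IsFiniteMeasure (volume.withDensity fun U => (minorCutoff e j U : ℝ≥0∞)) := by
    refine ⟨?_⟩
    rw [withDensity_apply _ MeasurableSet.univ, setLIntegral_univ,
      ← setLIntegral_eq_of_support_subset (s := tsupport (minorCutoff e j)) fun U hU =>
        subset_tsupport _ (ENNReal.coe_ne_zero.1 hU)]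
    exact setLIntegral_lt_top_of_isCompact hcompact.isCompact.measure_ne_top hcompact.isCompact
      hcont
  refine (ext_of_forall_lintegral_eq_of_IsFiniteMeasure fun f => ?_).symm
  have hf : Measurable fun U => (f U : ℝ≥0∞) := f.continuous.measurable.coe_nnreal_ennreal
  rw [lintegral_withDensity_eq_lintegral_mul _ hm hf,
    lintegral_withDensity_eq_lintegral_mul _ hm hf]
  have hprod := lintegral_tupleIntensity_of_hasCompactSupport (μ := μ) hc
    (Ψ := fun U => minorCutoff e j U * f U) (hcont.mul f.continuous) hcompact.mul_right
    ((closure_mono (Function.support_mul_subset_left _ _)).trans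
      (tsupport_minorCutoff_subset_det_ne_zero e j))
  simpa using hprod.symm

lemma restrict_tupleIntensity_det_ne_zero (hc : ∀ j, e j ≠ c) :
    (tupleIntensity ι μ).restrict {U | (coordMatrix e U).det ≠ 0} =
      volume.restrict {U | (coordMatrix e U).det ≠ 0} := by
  rw [← iUnion_minorCutoff_ne_zero, Measure.restrict_iUnion_congr]
  exact fun j => restrict_eq_of_withDensity_eq
    (continuous_minorCutoff e j).measurable.coe_nnreal_ennreal (fun _ => ENNReal.coe_ne_top)
    (withDensity_minorCutoff_tupleIntensity hc j)

variable (μ)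

theorem lintegral_tupleIntensity_of_independent (hn : Fintype.card ι < n)
    {f : (ι → Fin n → ℝ) → ℝ≥0∞}
    (hf : ∀ U, (∀ e : ι → Fin n, (coordMatrix e U).det = 0) → f U = 0) :
    ∫⁻ U, f U ∂tupleIntensity ι μ = ∫⁻ U, f U := by
  have hfree (e : ι → Fin n) : ∃ c, ∀ j, e j ≠ c := by
    by_contra! hsurj
    exact absurd (Fintype.card_le_of_surjective e hsurj) (by simpa using hn)
  have hs : f.support ⊆ ⋃ e : ι → Fin n, {U | (coordMatrix e U).det ≠ 0} := fun U hU => by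
    by_contra hdet
    exact hU (hf U (by simpa using hdet))
  rw [← setLIntegral_eq_of_support_subset (μ := tupleIntensity ι μ) hs,
    ← setLIntegral_eq_of_support_subset (μ := volume) hs]
  congr 1
  rw [Measure.restrict_iUnion_congr]
  intro e
  obtain ⟨c, hc⟩ := hfree e
  exact restrict_tupleIntensity_det_ne_zero hc

end SiegelRogers

theorem lintegral_tsum_vecOf {n : ℕ} (hn : 2 ≤ n) (μ : Measure (LatticeSpace n))
    [IsProbabilityMeasure μ] [SMulInvariantMeasure (SLR n) (LatticeSpace n) μ]
    {f : (Fin n → ℝ) → ℝ≥0∞} (hf : Measurable f) (hf0 : f 0 = 0) :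
    ∫⁻ x : LatticeSpace n, ∑' m : Fin n → ℤ, f (vecOf n x.out m) ∂μ = ∫⁻ v, f v := by
  have hind (U : Unit → Fin n → ℝ) (hU : ∀ e : Unit → Fin n, (coordMatrix e U).det = 0) :
      f (U ()) = 0 := by
    have hU0 : U () = 0 := funext fun k => by
      simpa [coordMatrix, Matrix.det_unique] using hU fun _ => k
    rw [hU0, hf0]
  calc ∫⁻ x : LatticeSpace n, ∑' m : Fin n → ℤ, f (vecOf n x.out m) ∂μ
      = ∫⁻ U : Unit → Fin n → ℝ, f (U ()) ∂tupleIntensity Unit μ := by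
        rw [lintegral_tupleIntensity μ (f := fun U => f (U ()))
          (hf.comp (measurable_pi_apply ()))]
        exact lintegral_congr fun x => ((Equiv.funUnique Unit (Fin n → ℤ)).tsum_eq
          fun m => f (vecOf n x.out m)).symm
    _ = ∫⁻ U : Unit → Fin n → ℝ, f (U ()) :=
        lintegral_tupleIntensity_of_independent μ (by simpa using by omega) hind
    _ = ∫⁻ v, f v := (volume_preserving_funUnique Unit (Fin n → ℝ)).lintegral_comp hf

/-! ### The second moment method -/

section SecondMoment

lemma two_mul_mul_le_sq_add_sq (a b : ℝ≥0∞) : 2 * (a * b) ≤ a ^ 2 + b ^ 2 := by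
  rcases eq_or_ne a ∞ with rfl | ha
  · simp
  rcases eq_or_ne b ∞ with rfl | hb
  · simp
  lift a to ℝ≥0 using ha
  lift b to ℝ≥0 using hb
  rw [← mul_assoc]
  exact_mod_cast two_mul_le_add_sq a b

lemma sq_lintegral_le_lintegral_sq {Ω : Type*} [MeasurableSpace Ω] {μ : Measure Ω}
    [IsProbabilityMeasure μ] {N : Ω → ℝ≥0∞} (hN : Measurable N) (hint : ∫⁻ x, N x ∂μ ≠ ∞) :
    (∫⁻ x, N x ∂μ) ^ 2 ≤ ∫⁻ x, N x ^ 2 ∂μ := by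
  set V := ∫⁻ x, N x ∂μ with hV
  have h := lintegral_mono (μ := μ) fun x => two_mul_mul_le_sq_add_sq (N x) V
  rw [lintegral_const_mul _ (by fun_prop), lintegral_mul_const _ hN, ← hV,
    lintegral_add_right _ measurable_const, lintegral_const, measure_univ, mul_one, two_mul,
    ← sq] at h
  exact (ENNReal.add_le_add_iff_right (ENNReal.pow_ne_top hint)).1 h

lemma measure_eq_zero_mul_sq_le {Ω : Type*} [MeasurableSpace Ω] {μ : Measure Ω}
    [IsProbabilityMeasure μ] {N : Ω → ℝ≥0∞} (hN : Measurable N) {V C : ℝ≥0∞} (hV : V ≠ ∞)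
    (h1 : ∫⁻ x, N x ∂μ = V) (h2 : ∫⁻ x, N x ^ 2 ∂μ ≤ V ^ 2 + C) :
    μ {x | N x = 0} * V ^ 2 ≤ C := by
  have hs : MeasurableSet {x | N x = 0} := measurableSet_eq_fun hN measurable_const
  have hp (x : Ω) :
      {x | N x = 0}.indicator (fun _ => V ^ 2) x + 2 * (N x * V) ≤ N x ^ 2 + V ^ 2 := by
    by_cases hx : N x = 0
    · simp [hx]
    · simpa [hx] using two_mul_mul_le_sq_add_sq (N x) V
  have h3 := lintegral_mono (μ := μ) hp
  rw [lintegral_add_left (measurable_const.indicator hs), lintegral_indicator_const hs,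
    lintegral_const_mul _ (by fun_prop), lintegral_mul_const _ hN, h1,
    lintegral_add_right _ measurable_const, lintegral_const, measure_univ, mul_one] at h3
  refine (ENNReal.add_le_add_iff_left (a := 2 * V ^ 2)
    (ENNReal.mul_ne_top ofNat_ne_top (pow_ne_top hV))).1 ?_
  calc 2 * V ^ 2 + μ {x | N x = 0} * V ^ 2 = V ^ 2 * μ {x | N x = 0} + 2 * (V * V) := by ring
    _ ≤ (V ^ 2 + C) + V ^ 2 := h3.trans (by gcongr)
    _ = 2 * V ^ 2 + C := by ring

theorem ae_exists_mem_of_lintegral_sq_le {X W I : Type*} [MeasurableSpace X] [MeasurableSpace W]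
    {μ : Measure X} [IsProbabilityMeasure μ] {ρ : Measure W} [SigmaFinite ρ] {p : I → X → W}
    {A : Set W} (hA : MeasurableSet A) (hρA : ρ A = ∞)
    (hp : ∀ K, MeasurableSet K → Measurable fun x => ∑' i, K.indicator (1 : W → ℝ≥0∞) (p i x))
    (h1 : ∀ K ⊆ A, MeasurableSet K → ∫⁻ x, ∑' i, K.indicator 1 (p i x) ∂μ = ρ K)
    (h2 : ∀ ε ≠ 0, ∃ C ≠ ∞, ∀ K ⊆ A, MeasurableSet K → ρ K < ∞ →
      ∫⁻ x, (∑' i, K.indicator 1 (p i x)) ^ 2 ∂μ ≤ (1 + ε) * ρ K ^ 2 + C * ρ K) :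
    ∀ᵐ x ∂μ, ∃ i, p i x ∈ A := by
  by_contra hcon
  have ha : μ {x | ∀ i, p i x ∉ A} ≠ 0 := by simpa [ae_iff] using hcon
  set a := μ {x | ∀ i, p i x ∉ A}
  have ha2 : a / 2 ≠ 0 := by simpa using ha
  have ha2' : a / 2 ≠ ∞ := ENNReal.div_ne_top (measure_ne_top _ _) two_ne_zero
  obtain ⟨C, hC, h2⟩ := h2 (a / 2) ha2
  obtain ⟨K, hK, hKA, hCK, hK'⟩ := Measure.exists_subset_measure_lt_top hA
    (hρA ▸ (ENNReal.div_ne_top hC ha2).lt_top)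
  have hmiss : a ≤ μ {x | ∑' i, K.indicator (1 : W → ℝ≥0∞) (p i x) = 0} :=
    measure_mono fun x hx => ENNReal.tsum_eq_zero.2 fun i =>
      Set.indicator_of_notMem (fun h => hx i (hKA h)) _
  have hcheb : a * ρ K ^ 2 ≤ a / 2 * ρ K ^ 2 + C * ρ K := by
    refine (mul_le_mul_left hmiss _).trans (measure_eq_zero_mul_sq_le (hp K hK) hK'.ne (h1 K hKA hK)
      ((h2 K hKA hK hK').trans_eq ?_))
    ring
  have hK0 : ρ K ≠ 0 := (zero_le.trans_lt hCK).ne'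
  have hle : (a / 2 * ρ K) * ρ K ≤ C * ρ K := by
    refine (ENNReal.add_le_add_iff_left (a := a / 2 * ρ K ^ 2)
      (ENNReal.mul_ne_top ha2' (pow_ne_top hK'.ne))).1 (le_trans (le_of_eq ?_) hcheb)
    nth_rw 3 [← ENNReal.add_halves a]
    ring
  rw [ENNReal.div_lt_iff (.inl ha2) (.inl ha2'), mul_comm] at hCK
  exact hCK.not_ge ((ENNReal.mul_le_mul_iff_left hK0 hK'.ne).1 hle)

end SecondMoment

/-! ### Lattice vectors -/

section LatticeVectors

variable {n : ℕ}

lemma vecOf_smul (g : SLR n) (a : ℤ) (m : Fin n → ℤ) :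
    vecOf n g (a • m) = (a : ℝ) • vecOf n g m := by
  rw [vecOf, vecOf, ← Matrix.mulVec_smul]
  congr 1
  funext i
  simp

lemma vecOf_zero (g : SLR n) : vecOf n g 0 = 0 := by
  simpa using vecOf_smul g 0 0

lemma continuous_vecOf (m : Fin n → ℤ) : Continuous fun g : SLR n => vecOf n g m :=
  Continuous.matrix_mulVec continuous_induced_dom continuous_const

lemma isEquivariantFamily_vecOf (n : ℕ) : IsEquivariantFamily (latticeGamma n)
    fun (m : Fin n → ℤ) (g : SLR n) => vecOf n g m where
  measurable m := (continuous_vecOf m).measurable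
  perm := by
    rintro _ ⟨γ, rfl⟩
    exact ⟨(Matrix.SpecialLinearGroup.toLin' γ).toEquiv, fun m g => vecOf_map g γ m⟩

lemma intersects_of_vecOf_out_mem {x : LatticeSpace n} {A : Set (Fin n → ℝ)} {m : Fin n → ℤ}
    (hm : vecOf n x.out m ∈ A \ {0}) : Intersects n x A := by
  rintro g rfl
  obtain ⟨⟨_, γ, rfl⟩, h⟩ := QuotientGroup.mk_out_eq_mul (latticeGamma n) g
  rw [h, vecOf_map] at hm
  refine ⟨γ.1 *ᵥ m, fun h0 => hm.2 ?_, hm.1⟩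
  rw [h0]
  exact vecOf_zero g

lemma exists_eq_smul_of_proportional {m k : Fin n → ℤ} (hm : m ≠ 0) (hk : k ≠ 0)
    (h : ∀ i j, m i * k j = m j * k i) :
    ∃ (a b : ℤ) (p : Fin n → ℤ), a ≠ 0 ∧ b ≠ 0 ∧ m = a • p ∧ k = b • p := by
  obtain ⟨j, hj : m j ≠ 0⟩ := Function.ne_iff.1 hm
  obtain ⟨d, a, b, hd, hab, hma, hkb⟩ := Int.exists_gcd_one' (Int.gcd_pos_of_ne_zero_left (k j) hj)
  have hd0 : (d : ℤ) ≠ 0 := by exact_mod_cast hd.ne'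
  have ha0 : a ≠ 0 := by
    rintro rfl
    simp [hma] at hj
  have hprop (i : Fin n) : b * m i = a * k i :=
    mul_left_cancel₀ hd0 (by linear_combination h i j - m i * hkb + k i * hma)
  choose p hp using fun i =>
    (Int.isCoprime_iff_gcd_eq_one.2 hab).dvd_of_dvd_mul_left (Dvd.intro _ (hprop i).symm)
  have hkp : k = b • p := funext fun i => mul_left_cancel₀ ha0 <| by
    rw [← hprop i, hp i, Pi.smul_apply, smul_eq_mul]
    ring
  refine ⟨a, b, p, ha0, ?_, funext hp, hkp⟩
  rintro rfl
  exact hk (by simpa using hkp)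

/-- The pairs of proportional vectors, cut out by the vanishing of all `2 × 2` minors. -/
def proportionalPairs (n : ℕ) : Set (Fin 2 → Fin n → ℝ) :=
  {U | ∀ i j, U 0 i * U 1 j = U 0 j * U 1 i}

lemma measurableSet_proportionalPairs (n : ℕ) : MeasurableSet (proportionalPairs n) := by
  simp only [proportionalPairs, Set.ofPred_forall]
  exact MeasurableSet.iInter fun i => MeasurableSet.iInter fun j =>
    measurableSet_eq_fun (by fun_prop) (by fun_prop)

lemma tupleAct_mem_proportionalPairs (g : SLR n) {U : Fin 2 → Fin n → ℝ}
    (hU : U ∈ proportionalPairs n) : tupleAct g U ∈ proportionalPairs n := by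
  intro i j
  simp only [tupleAct, Matrix.mulVec, dotProduct, Finset.sum_mul_sum]
  rw [Finset.sum_comm]
  refine Finset.sum_congr rfl fun a _ => Finset.sum_congr rfl fun b _ => ?_
  linear_combination (g.1 i b * g.1 j a) * hU b a

lemma tupleAct_mem_proportionalPairs_iff (g : SLR n) {U : Fin 2 → Fin n → ℝ} :
    tupleAct g U ∈ proportionalPairs n ↔ U ∈ proportionalPairs n := by
  refine ⟨fun h => ?_, tupleAct_mem_proportionalPairs g⟩
  simpa [← tupleAct_mul, tupleAct_one] using tupleAct_mem_proportionalPairs g⁻¹ h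

end LatticeVectors

/-! ### The second moment in dimension at least three -/

section HigherDimension

variable {n : ℕ}

lemma tsum_le_tsum_comp_of_support_subset_range {α β : Type*} {h : α → ℝ≥0∞} {F : β → α}
    (hF : h.support ⊆ Set.range F) : ∑' a, h a ≤ ∑' b, h (F b) := by
  choose s hs using fun a : h.support => hF a.2
  have hinj : Function.Injective s := fun a b hab =>
    Subtype.ext (by rw [← hs a, ← hs b, hab])
  calc ∑' a, h a = ∑' a : h.support, h (F (s a)) := by simp_rw [hs, tsum_subtype_support]
    _ ≤ ∑' b, h (F b) := ENNReal.tsum_comp_le_tsum_of_injective hinj fun b => h (F b)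

lemma sq_tsum_vecOf_eq (g : SLR n) (f : (Fin n → ℝ) → ℝ≥0∞) :
    (∑' m, f (vecOf n g m)) ^ 2 =
      ∑' m : Fin 2 → Fin n → ℤ, (fun U => f (U 0) * f (U 1)) (tupleAct g (intTuple m)) := by
  rw [sq, ← ENNReal.tsum_mul_right, ← (finTwoArrowEquiv (Fin n → ℤ)).symm.tsum_eq,
    ENNReal.tsum_prod']
  simp_rw [← ENNReal.tsum_mul_left]
  rfl

lemma tsum_proportionalPairs_le (g : SLR n) {f : (Fin n → ℝ) → ℝ≥0∞} (hf0 : f 0 = 0) :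
    ∑' m : Fin 2 → Fin n → ℤ, (proportionalPairs n).indicator (fun U => f (U 0) * f (U 1))
        (tupleAct g (intTuple m)) ≤
      ∑' (a : {a : ℤ // a ≠ 0}) (b : {b : ℤ // b ≠ 0}) (p : Fin n → ℤ),
        f ((a : ℝ) • vecOf n g p) * f ((b : ℝ) • vecOf n g p) := by
  have hrange : (fun m : Fin 2 → Fin n → ℤ => (proportionalPairs n).indicator
      (fun U => f (U 0) * f (U 1)) (tupleAct g (intTuple m))).support ⊆
      Set.range fun t : {a : ℤ // a ≠ 0} × {b : ℤ // b ≠ 0} × (Fin n → ℤ) =>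
        ![t.1.1 • t.2.2, t.2.1.1 • t.2.2] := by
    intro m hm
    have hne (i : Fin 2) (hi : f (tupleAct g (intTuple m) i) ≠ 0) : m i ≠ 0 := by
      intro h0
      rw [tupleAct_intTuple_apply, h0, vecOf_zero] at hi
      exact hi hf0
    obtain ⟨hD, hff⟩ := Set.indicator_apply_ne_zero.1 hm
    obtain ⟨h0, h1⟩ := mul_ne_zero_iff.1 hff
    have hprop : ∀ i j, m 0 i * m 1 j = m 0 j * m 1 i := fun i j => by
      have hij := (tupleAct_mem_proportionalPairs_iff g).1 hD i j
      simp only [intTuple] at hij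
      exact_mod_cast hij
    obtain ⟨a, b, p, ha, hb, hm0, hm1⟩ :=
      exists_eq_smul_of_proportional (hne 0 h0) (hne 1 h1) hprop
    refine ⟨(⟨a, ha⟩, ⟨b, hb⟩, p), ?_⟩
    ext i : 1
    fin_cases i
    exacts [hm0.symm, hm1.symm]
  refine (tsum_le_tsum_comp_of_support_subset_range hrange).trans ?_
  simp_rw [ENNReal.tsum_prod']
  gcongr with a b p
  refine (Set.indicator_le_self _ _ _).trans_eq ?_
  simp_rw [tupleAct_intTuple_apply, ← vecOf_smul]
  rfl

lemma sq_tsum_vecOf_le (g : SLR n) {f : (Fin n → ℝ) → ℝ≥0∞} (hf0 : f 0 = 0) :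
    (∑' m, f (vecOf n g m)) ^ 2 ≤
      ∑' m : Fin 2 → Fin n → ℤ, (proportionalPairs n)ᶜ.indicator
        (fun U => f (U 0) * f (U 1)) (tupleAct g (intTuple m)) +
      ∑' (a : {a : ℤ // a ≠ 0}) (b : {b : ℤ // b ≠ 0}) (p : Fin n → ℤ),
        f ((a : ℝ) • vecOf n g p) * f ((b : ℝ) • vecOf n g p) := by
  rw [sq_tsum_vecOf_eq]
  refine le_trans (le_of_eq ?_) (add_le_add_right (tsum_proportionalPairs_le g hf0) _)
  rw [← ENNReal.tsum_add]
  exact tsum_congr fun m => (Set.indicator_compl_add_self_apply (proportionalPairs n)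
    (fun U => f (U 0) * f (U 1)) (tupleAct g (intTuple m))).symm

lemma lintegral_comp_smul {a : ℝ} (ha : a ≠ 0) {f : (Fin n → ℝ) → ℝ≥0∞} (hf : Measurable f) :
    ∫⁻ v, f (a • v) = ENNReal.ofReal ((|a| ^ n)⁻¹) * ∫⁻ v, f v := by
  rw [← lintegral_map hf (measurable_const_smul a), Measure.map_addHaar_smul _ ha,
    lintegral_smul_measure, abs_inv, abs_pow, Module.finrank_fin_fun, smul_eq_mul]

/-- The weights `|a| ^ (-n / 2)`. -/
def scalingWeight (n : ℕ) (a : ℤ) : ℝ≥0∞ := ENNReal.ofReal (|(a : ℝ)| ^ (-(n / 2) : ℝ))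

lemma tsum_scalingWeight_ne_top (hn : 3 ≤ n) : ∑' a, scalingWeight n a ≠ ∞ := by
  have : (3 : ℝ) ≤ n := by exact_mod_cast hn
  exact (Real.summable_abs_int_rpow (by linarith : (1 : ℝ) < n / 2)).tsum_ofReal_ne_top

lemma lintegral_sq_comp_zsmul {a : ℤ} (ha : a ≠ 0) {f : (Fin n → ℝ) → ℝ≥0∞}
    (hf : Measurable f) :
    (∫⁻ v, f ((a : ℝ) • v) ^ (2 : ℝ)) ^ (1 / 2 : ℝ) =
      scalingWeight n a * (∫⁻ v, f v ^ 2) ^ (1 / 2 : ℝ) := by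
  have ha0 : (a : ℝ) ≠ 0 := by exact_mod_cast ha
  simp_rw [ENNReal.rpow_two]
  rw [lintegral_comp_smul ha0 (hf.pow_const 2), ENNReal.mul_rpow_of_nonneg _ _ (by norm_num),
    scalingWeight, ENNReal.ofReal_rpow_of_nonneg (by positivity) (by norm_num),
    ← Real.rpow_natCast, ← Real.rpow_neg (abs_nonneg _), ← Real.rpow_mul (abs_nonneg _)]
  ring_nf

lemma lintegral_comp_zsmul_mul_comp_zsmul_le {a b : ℤ} (ha : a ≠ 0) (hb : b ≠ 0)
    {f : (Fin n → ℝ) → ℝ≥0∞} (hf : Measurable f) :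
    ∫⁻ v, f ((a : ℝ) • v) * f ((b : ℝ) • v) ≤
      scalingWeight n a * scalingWeight n b * ∫⁻ v, f v ^ 2 := by
  refine (ENNReal.lintegral_mul_le_Lp_mul_Lq volume Real.HolderConjugate.two_two
    (hf.comp (measurable_const_smul _)).aemeasurable
    (hf.comp (measurable_const_smul _)).aemeasurable).trans_eq ?_
  simp only [Function.comp_apply]
  rw [lintegral_sq_comp_zsmul ha hf, lintegral_sq_comp_zsmul hb hf, mul_mul_mul_comm,
    ← ENNReal.rpow_add_of_nonneg _ _ (by norm_num) (by norm_num)]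
  norm_num

variable (μ : Measure (LatticeSpace n)) [IsProbabilityMeasure μ]
  [SMulInvariantMeasure (SLR n) (LatticeSpace n) μ]

lemma lintegral_tsum_compl_proportionalPairs_le (hn : 3 ≤ n) {f : (Fin n → ℝ) → ℝ≥0∞}
    (hf : Measurable f) :
    ∫⁻ x, ∑' m : Fin 2 → Fin n → ℤ, (proportionalPairs n)ᶜ.indicator
        (fun U => f (U 0) * f (U 1)) (tupleAct x.out (intTuple m)) ∂μ ≤ (∫⁻ v, f v) ^ 2 := by
  have hff : Measurable fun U : Fin 2 → Fin n → ℝ => f (U 0) * f (U 1) := by fun_prop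
  rw [← lintegral_tupleIntensity μ (hff.indicator (measurableSet_proportionalPairs n).compl),
    lintegral_tupleIntensity_of_independent μ (by simpa using by omega)]
  · calc ∫⁻ U : Fin 2 → Fin n → ℝ, (proportionalPairs n)ᶜ.indicator (fun U => f (U 0) * f (U 1)) U
        ≤ ∫⁻ U : Fin 2 → Fin n → ℝ, f (U 0) * f (U 1) :=
          lintegral_mono (Set.indicator_le_self _ _)
      _ = ∫⁻ z : (Fin n → ℝ) × (Fin n → ℝ), f z.1 * f z.2 :=
          (volume_preserving_finTwoArrow (Fin n → ℝ)).lintegral_comp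
            (f := fun z => f z.1 * f z.2) (by fun_prop)
      _ = (∫⁻ v, f v) ^ 2 := by
          rw [sq, Measure.volume_eq_prod, lintegral_prod_mul hf.aemeasurable hf.aemeasurable]
  · refine fun U hU => Set.indicator_of_notMem (Set.notMem_compl_iff.2 fun i j => ?_) _
    have hij := hU ![i, j]
    rw [Matrix.det_fin_two] at hij
    simp only [coordMatrix, Matrix.of_apply, Matrix.cons_val_zero, Matrix.cons_val_one] at hij
    linarith

lemma lintegral_tsum_comp_zsmul_mul_le (hn : 2 ≤ n) {f : (Fin n → ℝ) → ℝ≥0∞}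
    (hf : Measurable f) (hf0 : f 0 = 0) :
    ∫⁻ x, ∑' (a : {a : ℤ // a ≠ 0}) (b : {b : ℤ // b ≠ 0}) (p : Fin n → ℤ),
        f ((a : ℝ) • vecOf n x.out p) * f ((b : ℝ) • vecOf n x.out p) ∂μ ≤
      (∑' a, scalingWeight n a) ^ 2 * ∫⁻ v, f v ^ 2 := by
  have hab (a b : {a : ℤ // a ≠ 0}) : Measurable fun v => f ((a : ℝ) • v) * f ((b : ℝ) • v) := by
    fun_prop
  have hm (a b : {a : ℤ // a ≠ 0}) : Measurable fun x : LatticeSpace n => ∑' p : Fin n → ℤ,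
      f ((a : ℝ) • vecOf n x.out p) * f ((b : ℝ) • vecOf n x.out p) :=
    (isEquivariantFamily_vecOf n).measurable_tsum_out (hab a b)
  have hsub : ∑' a : {a : ℤ // a ≠ 0}, scalingWeight n a ≤ ∑' a, scalingWeight n a :=
    ENNReal.tsum_comp_le_tsum_of_injective Subtype.val_injective _
  rw [lintegral_tsum fun a => (Measurable.tsum (hm a)).aemeasurable]
  simp_rw [lintegral_tsum fun b => (hm _ b).aemeasurable]
  calc _ ≤ ∑' (a : {a : ℤ // a ≠ 0}) (b : {b : ℤ // b ≠ 0}),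
          scalingWeight n a * scalingWeight n b * ∫⁻ v, f v ^ 2 := by
        gcongr with a b
        rw [lintegral_tsum_vecOf hn μ (hab a b) (by simp [hf0])]
        exact lintegral_comp_zsmul_mul_comp_zsmul_le a.2 b.2 hf
    _ = (∑' a : {a : ℤ // a ≠ 0}, scalingWeight n a) ^ 2 * ∫⁻ v, f v ^ 2 := by
        simp_rw [ENNReal.tsum_mul_right, ENNReal.tsum_mul_left, ENNReal.tsum_mul_right, sq]
    _ ≤ _ := by gcongr

theorem lintegral_sq_tsum_vecOf_le (hn : 3 ≤ n) {f : (Fin n → ℝ) → ℝ≥0∞} (hf : Measurable f)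
    (hf0 : f 0 = 0) :
    ∫⁻ x, (∑' m, f (vecOf n x.out m)) ^ 2 ∂μ ≤
      (∫⁻ v, f v) ^ 2 + (∑' a, scalingWeight n a) ^ 2 * ∫⁻ v, f v ^ 2 := by
  have hff : Measurable fun U : Fin 2 → Fin n → ℝ => f (U 0) * f (U 1) := by fun_prop
  have hm : Measurable fun x : LatticeSpace n => ∑' m : Fin 2 → Fin n → ℤ,
      (proportionalPairs n)ᶜ.indicator (fun U => f (U 0) * f (U 1))
        (tupleAct x.out (intTuple m)) :=
    (isEquivariantFamily_tupleAct n (Fin 2)).measurable_tsum_out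
      (hff.indicator (measurableSet_proportionalPairs n).compl)
  calc ∫⁻ x : LatticeSpace n, (∑' m, f (vecOf n x.out m)) ^ 2 ∂μ
      ≤ ∫⁻ x : LatticeSpace n, (∑' m : Fin 2 → Fin n → ℤ, (proportionalPairs n)ᶜ.indicator
            (fun U => f (U 0) * f (U 1)) (tupleAct x.out (intTuple m)) +
          ∑' (a : {a : ℤ // a ≠ 0}) (b : {b : ℤ // b ≠ 0}) (p : Fin n → ℤ),
            f ((a : ℝ) • vecOf n x.out p) * f ((b : ℝ) • vecOf n x.out p)) ∂μ :=
        lintegral_mono fun x => sq_tsum_vecOf_le x.out hf0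
    _ = _ := lintegral_add_left hm _
    _ ≤ _ := add_le_add (lintegral_tsum_compl_proportionalPairs_le μ hn hf)
        (lintegral_tsum_comp_zsmul_mul_le μ (by omega) hf hf0)

theorem ae_exists_vecOf_mem_of_three_le (hn : 3 ≤ n) {A : Set (Fin n → ℝ)} (hA : MeasurableSet A)
    (hA0 : 0 ∉ A) (hvol : volume A = ∞) : ∀ᵐ x ∂μ, ∃ m, vecOf n x.out m ∈ A := by
  have hK0 {K : Set (Fin n → ℝ)} (hKA : K ⊆ A) : K.indicator (1 : (Fin n → ℝ) → ℝ≥0∞) 0 = 0 :=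
    Set.indicator_of_notMem (fun h => hA0 (hKA h)) _
  have hm (K : Set (Fin n → ℝ)) (hK : MeasurableSet K) : Measurable fun x : LatticeSpace n =>
      ∑' m, K.indicator (1 : (Fin n → ℝ) → ℝ≥0∞) (vecOf n x.out m) :=
    (isEquivariantFamily_vecOf n).measurable_tsum_out (measurable_one.indicator hK)
  have h1 (K : Set (Fin n → ℝ)) (hKA : K ⊆ A) (hK : MeasurableSet K) :
      ∫⁻ x : LatticeSpace n, ∑' m, K.indicator 1 (vecOf n x.out m) ∂μ = volume K := by
    rw [lintegral_tsum_vecOf (by omega) μ (measurable_one.indicator hK) (hK0 hKA),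
      lintegral_indicator_one hK]
  have h2 (ε : ℝ≥0∞) (K : Set (Fin n → ℝ)) (hKA : K ⊆ A) (hK : MeasurableSet K) :
      ∫⁻ x : LatticeSpace n, (∑' m, K.indicator 1 (vecOf n x.out m)) ^ 2 ∂μ ≤
        (1 + ε) * volume K ^ 2 + (∑' a, scalingWeight n a) ^ 2 * volume K := by
    have hsq (v : Fin n → ℝ) : K.indicator (1 : (Fin n → ℝ) → ℝ≥0∞) v ^ 2 = K.indicator 1 v := by
      by_cases hv : v ∈ K <;> simp [hv]
    have h := lintegral_sq_tsum_vecOf_le μ hn (measurable_one.indicator hK) (hK0 hKA)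
    simp_rw [hsq, lintegral_indicator_one hK] at h
    exact h.trans (add_le_add_left (le_mul_of_one_le_left' le_self_add) _)
  exact ae_exists_mem_of_lintegral_sq_le hA hvol hm h1 fun ε _ =>
    ⟨_, ENNReal.pow_ne_top (tsum_scalingWeight_ne_top hn), fun K hKA hK _ => h2 ε K hKA hK⟩

end HigherDimension

/-! ### Haar measure on `SL(2, ℝ)` -/

section Haar

/-- The first column of a matrix in `SL(2, ℝ)`. -/
def firstCol (g : SLR 2) : Fin 2 → ℝ := fun i => g i 0

/-- The second column of a matrix in `SL(2, ℝ)`. -/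
def secondCol (g : SLR 2) : Fin 2 → ℝ := fun i => g i 1

/-- The vector orthogonal to `v` which spans with `v` a parallelogram of signed area `1`
(and `0` if `v = 0`). -/
def dualVec (v : Fin 2 → ℝ) : Fin 2 → ℝ := (v ⬝ᵥ v)⁻¹ • ![-v 1, v 0]

/-- The shear coordinate of `g`: the number `s` such that the second column of `g` is
`dualVec v + s • v`, where `v` is the first one. -/
def shear (g : SLR 2) : ℝ := firstCol g ⬝ᵥ secondCol g / (firstCol g ⬝ᵥ firstCol g)

lemma det_dualVec {v : Fin 2 → ℝ} (hv : v ≠ 0) (s : ℝ) :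
    (Matrix.of ![v, dualVec v + s • v])ᵀ.det = 1 := by
  have hD : v ⬝ᵥ v ≠ 0 := dotProduct_self_eq_zero.not.2 hv
  simp only [dualVec, Matrix.det_transpose, Matrix.det_fin_two, Matrix.of_apply,
    Matrix.cons_val_zero, Matrix.cons_val_one, Pi.add_apply, Pi.smul_apply, smul_eq_mul]
  field_simp
  simp only [dotProduct, Fin.sum_univ_two]
  ring

/-- The matrix with first column `v` and shear coordinate `s` (and `1` if `v = 0`). -/
def frame (v : Fin 2 → ℝ) (s : ℝ) : SLR 2 :=
  if hv : v = 0 then 1 else (⟨_, det_dualVec hv s⟩ : SLR 2)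

lemma frame_of_ne_zero {v : Fin 2 → ℝ} (hv : v ≠ 0) (s : ℝ) :
    frame v s = ⟨_, det_dualVec hv s⟩ :=
  dif_neg hv

lemma firstCol_frame {v : Fin 2 → ℝ} (hv : v ≠ 0) (s : ℝ) : firstCol (frame v s) = v := by
  rw [frame_of_ne_zero hv]
  rfl

lemma secondCol_frame {v : Fin 2 → ℝ} (hv : v ≠ 0) (s : ℝ) :
    secondCol (frame v s) = dualVec v + s • v := by
  rw [frame_of_ne_zero hv]
  rfl

lemma shear_frame {v : Fin 2 → ℝ} (hv : v ≠ 0) (s : ℝ) : shear (frame v s) = s := by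
  have hD : v ⬝ᵥ v ≠ 0 := dotProduct_self_eq_zero.not.2 hv
  have horth : v ⬝ᵥ dualVec v = 0 := by
    simp only [dualVec, dotProduct, Fin.sum_univ_two, Pi.smul_apply, Matrix.cons_val_zero,
      Matrix.cons_val_one, smul_eq_mul]
    ring
  rw [shear, firstCol_frame hv, secondCol_frame hv, dotProduct_add, horth, zero_add,
    dotProduct_smul, smul_eq_mul, mul_div_cancel_right₀ _ hD]

lemma apply_two_mul_sub (g : SLR 2) : g 0 0 * g 1 1 - g 0 1 * g 1 0 = 1 := by
  rw [← Matrix.det_fin_two]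
  exact g.2

lemma firstCol_ne_zero (g : SLR 2) : firstCol g ≠ 0 := by
  intro h
  have h0 : g 0 0 = 0 := congrFun h 0
  have h1 : g 1 0 = 0 := congrFun h 1
  simpa [h0, h1] using apply_two_mul_sub g

lemma ext_cols {g h : SLR 2} (h1 : firstCol g = firstCol h) (h2 : secondCol g = secondCol h) :
    g = h := by
  ext i j
  fin_cases j
  · exact congrFun h1 i
  · exact congrFun h2 i

lemma frame_firstCol_shear (g : SLR 2) : frame (firstCol g) (shear g) = g := by
  have hv := firstCol_ne_zero g
  have hD : firstCol g ⬝ᵥ firstCol g ≠ 0 := dotProduct_self_eq_zero.not.2 hv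
  refine ext_cols (firstCol_frame hv _) ?_
  rw [secondCol_frame hv, shear, dualVec]
  ext i
  simp only [Pi.add_apply, Pi.smul_apply, smul_eq_mul]
  field_simp
  simp only [firstCol, secondCol, dotProduct, Fin.sum_univ_two]
  fin_cases i
  · simp only [Fin.zero_eta, Matrix.cons_val_zero]
    linear_combination (g 1 0) * apply_two_mul_sub g
  · simp only [Fin.mk_one, Matrix.cons_val_one, Matrix.cons_val_fin_one]
    linear_combination (-g 0 0) * apply_two_mul_sub g

lemma firstCol_mul (g h : SLR 2) : firstCol (g * h) = g.1 *ᵥ firstCol h := by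
  ext i
  simp [firstCol, Matrix.mul_apply, Matrix.mulVec, dotProduct]

lemma secondCol_mul (g h : SLR 2) : secondCol (g * h) = g.1 *ᵥ secondCol h := by
  ext i
  simp [secondCol, Matrix.mul_apply, Matrix.mulVec, dotProduct]

lemma shear_eq_add {g h : SLR 2} {s : ℝ} (h1 : firstCol g = firstCol h)
    (h2 : secondCol g = secondCol h + s • firstCol h) : shear g = shear h + s := by
  have hD : firstCol h ⬝ᵥ firstCol h ≠ 0 := dotProduct_self_eq_zero.not.2 (firstCol_ne_zero h)
  rw [shear, shear, h1, h2, dotProduct_add, dotProduct_smul, smul_eq_mul]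
  field_simp

/- Left translation acts on the shear coordinate by a cocycle that depends on the first column
only. -/
lemma mul_frame (g : SLR 2) {v : Fin 2 → ℝ} (hv : v ≠ 0) (s : ℝ) :
    g * frame v s = frame (g.1 *ᵥ v) (shear (g * frame v 0) + s) := by
  have hcol (s : ℝ) : firstCol (g * frame v s) = g.1 *ᵥ v := by
    rw [firstCol_mul, firstCol_frame hv]
  have hshear : shear (g * frame v s) = shear (g * frame v 0) + s := by
    refine shear_eq_add (by rw [hcol, hcol]) ?_
    rw [secondCol_mul, secondCol_mul, secondCol_frame hv, secondCol_frame hv, hcol, zero_smul,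
      add_zero, Matrix.mulVec_add, Matrix.mulVec_smul]
  rw [← hshear, ← hcol s, frame_firstCol_shear]

lemma measurable_apply_apply (i j : Fin 2) : Measurable fun g : SLR 2 => g i j :=
  ((continuous_apply_apply i j).comp (isClosedEmbedding_coe_SLR 2).continuous).measurable

@[fun_prop]
lemma measurable_firstCol : Measurable firstCol :=
  measurable_pi_lambda _ fun i => measurable_apply_apply i 0

@[fun_prop]
lemma measurable_secondCol : Measurable secondCol :=
  measurable_pi_lambda _ fun i => measurable_apply_apply i 1

@[fun_prop]
lemma measurable_dotProduct {X : Type*} [MeasurableSpace X] {v w : X → Fin 2 → ℝ}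
    (hv : Measurable v) (hw : Measurable w) : Measurable fun x => v x ⬝ᵥ w x := by
  simp only [dotProduct, Fin.sum_univ_two]
  fun_prop

@[fun_prop]
lemma measurable_shear : Measurable shear := by
  unfold shear
  fun_prop

@[fun_prop]
lemma measurable_dualVec : Measurable dualVec := by
  refine measurable_pi_lambda _ fun i => ?_
  simp only [dualVec, Pi.smul_apply, smul_eq_mul]
  fin_cases i
  · simp only [Fin.zero_eta, Matrix.cons_val_zero]
    fun_prop
  · simp only [Fin.mk_one, Matrix.cons_val_one]
    fun_prop

lemma measurable_of_cols {X : Type*} [MeasurableSpace X] {F : X → SLR 2}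
    (h1 : Measurable fun x => firstCol (F x)) (h2 : Measurable fun x => secondCol (F x)) :
    Measurable F := by
  have hemb : Topology.IsClosedEmbedding fun g : SLR 2 => (fun i j => g i j : Fin 2 → Fin 2 → ℝ) :=
    isClosedEmbedding_coe_SLR 2
  refine hemb.measurableEmbedding.measurable_comp_iff.1 ?_
  refine measurable_pi_lambda _ fun i => measurable_pi_lambda _ fun j => ?_
  fin_cases j
  · exact (measurable_pi_apply i).comp h1
  · exact (measurable_pi_apply i).comp h2

lemma measurable_frame : Measurable fun q : (Fin 2 → ℝ) × ℝ => frame q.1 q.2 := by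
  have h0 : MeasurableSet {q : (Fin 2 → ℝ) × ℝ | q.1 = 0} :=
    measurableSet_eq_fun measurable_fst measurable_const
  have h1 : Measurable fun q : (Fin 2 → ℝ) × ℝ => if q.1 = 0 then firstCol 1 else q.1 :=
    Measurable.ite h0 measurable_const measurable_fst
  have h2 : Measurable fun q : (Fin 2 → ℝ) × ℝ =>
      if q.1 = 0 then secondCol 1 else dualVec q.1 + q.2 • q.1 :=
    Measurable.ite h0 measurable_const (by fun_prop)
  refine measurable_of_cols ?_ ?_
  · convert h1 using 2 with q
    split_ifs with hq
    · simp [hq, frame]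
    · simp [hq, firstCol_frame]
  · convert h2 using 2 with q
    split_ifs with hq
    · simp [hq, frame]
    · simp [hq, secondCol_frame]

/-- Haar measure on `SL(2, ℝ)`: Lebesgue measure in the coordinates given by the first column and
the shear coordinate. -/
def haarSL2 : Measure (SLR 2) :=
  Measure.map (fun q : (Fin 2 → ℝ) × ℝ => frame q.1 q.2) (volume.prod volume)

lemma lintegral_haarSL2 {F : SLR 2 → ℝ≥0∞} (hF : Measurable F) :
    ∫⁻ g, F g ∂haarSL2 = ∫⁻ v : Fin 2 → ℝ, ∫⁻ s, F (frame v s) := by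
  rw [haarSL2, lintegral_map hF measurable_frame]
  exact lintegral_prod _ (hF.comp measurable_frame).aemeasurable

lemma ae_ne_zero : ∀ᵐ v : Fin 2 → ℝ, v ≠ 0 :=
  compl_mem_ae_iff.2 (measure_singleton 0)

instance : haarSL2.IsMulLeftInvariant := by
  refine ⟨fun g => Measure.ext_of_lintegral _ fun F hF => ?_⟩
  have hgm : Measurable fun h : SLR 2 => g * h := (continuous_const_mul g).measurable
  have hG : Measurable fun v : Fin 2 → ℝ => ∫⁻ s, F (frame v s) :=
    (hF.comp measurable_frame).lintegral_prod_right'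
  rw [lintegral_map hF hgm, lintegral_haarSL2 (F := fun h => F (g * h)) (hF.comp hgm),
    lintegral_haarSL2 hF, ← (measurePreserving_mulVec g).lintegral_comp hG]
  refine lintegral_congr_ae ?_
  filter_upwards [ae_ne_zero] with v hv
  calc ∫⁻ s, F (g * frame v s) = ∫⁻ s, F (frame (g.1 *ᵥ v) (shear (g * frame v 0) + s)) :=
        lintegral_congr fun s => by rw [mul_frame g hv]
    _ = ∫⁻ s, F (frame (g.1 *ᵥ v) s) :=
        lintegral_add_left_eq_self (fun s => F (frame (g.1 *ᵥ v) s)) _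

/-- The part of the fibres of `firstCol` over `f` whose shear coordinate lies in `[j, j + 1)`. -/
def shearStrip (j : ℤ) (f : (Fin 2 → ℝ) → ℝ≥0∞) (g : SLR 2) : ℝ≥0∞ :=
  f (firstCol g) * (Int.floor ⁻¹' {j}).indicator 1 (shear g)

lemma measurableSet_preimage_floor (j : ℤ) : MeasurableSet (Int.floor ⁻¹' {j} : Set ℝ) :=
  Int.measurable_floor (measurableSet_singleton j)

lemma measurable_shearStrip (j : ℤ) {f : (Fin 2 → ℝ) → ℝ≥0∞} (hf : Measurable f) :
    Measurable (shearStrip j f) :=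
  (hf.comp measurable_firstCol).mul
    ((measurable_one.indicator (measurableSet_preimage_floor j)).comp measurable_shear)

lemma lintegral_shearStrip (j : ℤ) {f : (Fin 2 → ℝ) → ℝ≥0∞} (hf : Measurable f) :
    ∫⁻ g, shearStrip j f g ∂haarSL2 = ∫⁻ v, f v := by
  rw [lintegral_haarSL2 (measurable_shearStrip j hf)]
  refine lintegral_congr_ae ?_
  filter_upwards [ae_ne_zero] with v hv
  simp_rw [shearStrip, firstCol_frame hv, shear_frame hv]
  rw [lintegral_const_mul _ (measurable_one.indicator (measurableSet_preimage_floor j)),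
    lintegral_indicator_one (measurableSet_preimage_floor j), Int.preimage_floor_singleton]
  simp

lemma shearStrip_indicator (j : ℤ) (B : Set (Fin 2 → ℝ)) : shearStrip j (B.indicator 1) =
    (firstCol ⁻¹' B ∩ shear ⁻¹' (Int.floor ⁻¹' {j})).indicator 1 := by
  rw [Set.inter_indicator_one]
  rfl

lemma lintegral_shearStrip_indicator (ν : Measure (SLR 2)) (j : ℤ) {B : Set (Fin 2 → ℝ)}
    (hB : MeasurableSet B) : ∫⁻ g, shearStrip j (B.indicator 1) g ∂ν =
      ν (firstCol ⁻¹' B ∩ shear ⁻¹' (Int.floor ⁻¹' {j})) := by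
  rw [shearStrip_indicator, lintegral_indicator_one]
  exact (measurable_firstCol hB).inter (measurable_shear (measurableSet_preimage_floor j))

lemma sigmaFinite_of_lintegral_shearStrip_le {ν : Measure (SLR 2)}
    (h : ∀ j, ∀ B : Set (Fin 2 → ℝ), MeasurableSet B →
      ∫⁻ g, shearStrip j (B.indicator 1) g ∂ν ≤ volume B) : SigmaFinite ν := by
  refine Measure.sigmaFinite_of_countable (S := Set.range fun q : ℕ × ℤ =>
    firstCol ⁻¹' Metric.closedBall 0 q.1 ∩ shear ⁻¹' (Int.floor ⁻¹' {q.2}))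
    (Set.countable_range _) ?_ ?_
  · rintro _ ⟨q, rfl⟩
    rw [← lintegral_shearStrip_indicator ν q.2 measurableSet_closedBall]
    exact (h _ _ measurableSet_closedBall).trans_lt measure_closedBall_lt_top
  · refine Set.eq_univ_of_forall fun g => ?_
    obtain ⟨R, hR⟩ := exists_nat_ge ‖firstCol g‖
    exact ⟨_, ⟨(R, ⌊shear g⌋), rfl⟩, mem_closedBall_zero_iff.2 hR, rfl⟩

instance : SigmaFinite haarSL2 := sigmaFinite_of_lintegral_shearStrip_le fun j _ hB => by
  rw [lintegral_shearStrip j (measurable_one.indicator hB), lintegral_indicator_one hB]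

end Haar

/-! ### The orbits of `SL(2, ℤ)` -/

section Orbits

/-- The primitive vectors of `ℤ²`. -/
abbrev PrimVec := {p : Fin 2 → ℤ // IsCoprime (p 0) (p 1)}

/-- The embedding of `SL(2, ℤ)` in `SL(2, ℝ)`, whose range is `latticeGamma 2`. -/
abbrev toSLR : Matrix.SpecialLinearGroup (Fin 2) ℤ →* SLR 2 :=
  Matrix.SpecialLinearGroup.map (Int.castRingHom ℝ)

instance : Countable (Matrix.SpecialLinearGroup (Fin 2) ℤ) :=
  haveI : Countable (Matrix (Fin 2) (Fin 2) ℤ) := inferInstanceAs (Countable (Fin 2 → Fin 2 → ℤ))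
  Subtype.countable

lemma isEquivariantFamily_orbit : IsEquivariantFamily (latticeGamma 2)
    fun (γ : Matrix.SpecialLinearGroup (Fin 2) ℤ) (g : SLR 2) => g * toSLR γ where
  measurable γ := (continuous_mul_const _).measurable
  perm := by
    rintro _ ⟨γ, rfl⟩
    exact ⟨Equiv.mulLeft γ, fun δ g => by simp [mul_assoc]⟩

/-- The action of `SL(2, ℤ)` on primitive vectors. -/
def primPerm (γ : Matrix.SpecialLinearGroup (Fin 2) ℤ) : Equiv.Perm PrimVec :=
  (Matrix.SpecialLinearGroup.toLin' γ).toEquiv.subtypeEquiv fun p => by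
    refine ⟨fun h => h.mulVecSL γ, fun h => ?_⟩
    have := IsCoprime.mulVecSL (v := γ.1 *ᵥ p) h γ⁻¹
    rwa [Matrix.mulVec_mulVec, ← Matrix.SpecialLinearGroup.coe_mul, inv_mul_cancel,
      Matrix.SpecialLinearGroup.coe_one, Matrix.one_mulVec] at this

lemma vecOf_mul_toSLR (g : SLR 2) (γ : Matrix.SpecialLinearGroup (Fin 2) ℤ) (p : PrimVec) :
    vecOf 2 (g * toSLR γ) p = vecOf 2 g (primPerm γ p) :=
  vecOf_map g γ p

lemma isEquivariantFamily_primVec : IsEquivariantFamily (latticeGamma 2)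
    fun (p : PrimVec) (g : SLR 2) => vecOf 2 g p where
  measurable p := (continuous_vecOf _).measurable
  perm := by
    rintro _ ⟨γ, rfl⟩
    exact ⟨primPerm γ, fun p g => vecOf_mul_toSLR g γ p⟩

lemma vecOf_eq_smul_add_smul (g : SLR 2) (q : Fin 2 → ℤ) :
    vecOf 2 g q = (q 0 : ℝ) • firstCol g + (q 1 : ℝ) • secondCol g := by
  ext i
  simp [vecOf, Matrix.mulVec, dotProduct, Fin.sum_univ_two, firstCol, secondCol, mul_comm]

/-- A matrix in `SL(2, ℤ)` with first column `p`. -/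
def completion (p : PrimVec) : Matrix.SpecialLinearGroup (Fin 2) ℤ :=
  (p.2.exists_SL2_col 0).choose

lemma completion_apply_zero (p : PrimVec) (i : Fin 2) : completion p i 0 = p.1 i := by
  obtain ⟨h0, h1⟩ := (p.2.exists_SL2_col 0).choose_spec
  fin_cases i
  · exact h0
  · exact h1

lemma firstCol_mul_toSLR (g : SLR 2) (γ : Matrix.SpecialLinearGroup (Fin 2) ℤ) :
    firstCol (g * toSLR γ) = vecOf 2 g fun i => γ i 0 := by
  rw [firstCol_mul]
  rfl

lemma firstCol_mul_completion (g : SLR 2) (p : PrimVec) :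
    firstCol (g * toSLR (completion p)) = vecOf 2 g p := by
  rw [firstCol_mul_toSLR]
  exact congrArg _ (funext (completion_apply_zero p))

lemma firstCol_mul_T_zpow (g : SLR 2) (t : ℤ) :
    firstCol (g * toSLR (ModularGroup.T ^ t)) = firstCol g := by
  rw [firstCol_mul_toSLR, vecOf_eq_smul_add_smul]
  simp [ModularGroup.coe_T_zpow]

lemma secondCol_mul_T_zpow (g : SLR 2) (t : ℤ) :
    secondCol (g * toSLR (ModularGroup.T ^ t)) = secondCol g + (t : ℝ) • firstCol g := by
  have : secondCol (g * toSLR (ModularGroup.T ^ t)) =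
      vecOf 2 g fun i => (ModularGroup.T ^ t).1 i 1 := by
    rw [secondCol_mul]
    rfl
  rw [this, vecOf_eq_smul_add_smul]
  simp [ModularGroup.coe_T_zpow, add_comm]

lemma shear_mul_T_zpow (g : SLR 2) (t : ℤ) :
    shear (g * toSLR (ModularGroup.T ^ t)) = shear g + t :=
  shear_eq_add (firstCol_mul_T_zpow g t) (secondCol_mul_T_zpow g t)

lemma T_zpow_apply_zero_one {δ : Matrix.SpecialLinearGroup (Fin 2) ℤ} (h0 : δ 0 0 = 1)
    (h1 : δ 1 0 = 0) : ModularGroup.T ^ δ 0 1 = δ := by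
  have hdet := δ.2
  rw [Matrix.det_fin_two, h0, h1] at hdet
  ext i j
  rw [ModularGroup.coe_T_zpow]
  fin_cases i <;> fin_cases j <;> simp_all

lemma bijective_completion_mul_T_zpow : Function.Bijective fun q : PrimVec × ℤ =>
    completion q.1 * ModularGroup.T ^ q.2 := by
  have hcol (p : PrimVec) (t : ℤ) (i : Fin 2) :
      (completion p * ModularGroup.T ^ t) i 0 = p.1 i := by
    simp [Matrix.mul_apply, ModularGroup.coe_T_zpow, completion_apply_zero]
  constructor
  · rintro ⟨p, t⟩ ⟨q, u⟩ h
    dsimp only at h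
    obtain rfl : p = q := Subtype.ext (funext fun i => by rw [← hcol p t i, h, hcol])
    have htu := congrArg (fun γ : Matrix.SpecialLinearGroup (Fin 2) ℤ => γ 0 1)
      (mul_left_cancel h)
    simpa [ModularGroup.coe_T_zpow] using htu
  · intro γ
    let p : PrimVec := ⟨fun i => γ i 0, γ.isCoprime_col 0⟩
    set δ := (completion p)⁻¹ * γ with hδ
    have hδcol (i : Fin 2) : δ i 0 = (1 : Matrix (Fin 2) (Fin 2) ℤ) i 0 := by
      have : γ.1 *ᵥ Pi.single 0 1 = (completion p).1 *ᵥ Pi.single 0 1 := by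
        ext i
        simp [p, completion_apply_zero]
      have h2 : δ.1 *ᵥ Pi.single 0 1 = (1 : Matrix (Fin 2) (Fin 2) ℤ) *ᵥ Pi.single 0 1 := by
        rw [hδ, Matrix.SpecialLinearGroup.coe_mul, ← Matrix.mulVec_mulVec, this,
          Matrix.mulVec_mulVec, ← Matrix.SpecialLinearGroup.coe_mul, inv_mul_cancel,
          Matrix.SpecialLinearGroup.coe_one]
      simpa using congrFun h2 i
    refine ⟨(p, δ 0 1), ?_⟩
    dsimp only
    rw [T_zpow_apply_zero_one (hδcol 0) (hδcol 1), hδ, mul_inv_cancel_left]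

lemma tsum_orbit (F : SLR 2 → ℝ≥0∞) (g : SLR 2) : ∑' γ, F (g * toSLR γ) =
    ∑' (p : PrimVec) (t : ℤ), F (g * toSLR (completion p) * toSLR (ModularGroup.T ^ t)) := by
  rw [← (Equiv.ofBijective _ bijective_completion_mul_T_zpow).tsum_eq, ENNReal.tsum_prod']
  simp [mul_assoc]

lemma tsum_indicator_floor_add (j : ℤ) (s : ℝ) :
    ∑' t : ℤ, (Int.floor ⁻¹' {j}).indicator (1 : ℝ → ℝ≥0∞) (s + t) = 1 := by
  rw [tsum_eq_single (j - ⌊s⌋)]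
  · have hmem : s + ((j - ⌊s⌋ : ℤ) : ℝ) ∈ (Int.floor ⁻¹' {j} : Set ℝ) := by
      rw [Set.mem_preimage, Int.floor_add_intCast, add_sub_cancel, Set.mem_singleton_iff]
    rw [Set.indicator_of_mem hmem, Pi.one_apply]
  · intro t ht
    simp only [Set.indicator_apply_eq_zero, Set.mem_preimage, Int.floor_add_intCast,
      Set.mem_singleton_iff]
    omega

/- Each primitive vector is the first column of exactly one element of the orbit whose shear
coordinate lies in `[j, j + 1)`. -/
lemma tsum_shearStrip_orbit (j : ℤ) (f : (Fin 2 → ℝ) → ℝ≥0∞) (g : SLR 2) :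
    ∑' γ, shearStrip j f (g * toSLR γ) = ∑' p : PrimVec, f (vecOf 2 g p) := by
  simp_rw [tsum_orbit, shearStrip, firstCol_mul_T_zpow, shear_mul_T_zpow, ENNReal.tsum_mul_left,
    tsum_indicator_floor_add, firstCol_mul_completion, mul_one]

end Orbits

/-! ### The density of primitive lattice vectors -/

section PrimitiveDensity

lemma vecOf_ne_zero (g : SLR 2) (p : PrimVec) : vecOf 2 g p ≠ 0 := by
  rw [← firstCol_mul_completion]
  exact firstCol_ne_zero _

lemma tsum_vecOf_eq_tsum_primVec {f : (Fin 2 → ℝ) → ℝ≥0∞} (hf0 : f 0 = 0) (g : SLR 2) :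
    ∑' m : Fin 2 → ℤ, f (vecOf 2 g m) =
      ∑' (d : ℕ+) (p : PrimVec), f ((d : ℝ) • vecOf 2 g p) := by
  let φ : ℕ+ × PrimVec → Fin 2 → ℤ := fun q => (q.1 : ℤ) • q.2.1
  have hgcd (q : ℕ+ × PrimVec) : Int.gcd (φ q 0) (φ q 1) = q.1 := by
    simp [φ, Int.gcd_mul_left, Int.isCoprime_iff_gcd_eq_one.1 q.2.2]
  have hφ : Function.Injective φ := fun q r h => by
    have h1 : q.1 = r.1 := PNat.eq (by rw [← hgcd q, h, hgcd r])
    refine Prod.ext h1 (Subtype.ext ?_)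
    refine smul_right_injective _ (by exact_mod_cast r.1.ne_zero : (r.1 : ℤ) ≠ 0) ?_
    simpa only [φ, h1] using h
  have hsupp : Function.support (fun m : Fin 2 → ℤ => f (vecOf 2 g m)) ⊆ Set.range φ := by
    intro m hm
    have hpos : 0 < Int.gcd (m 0) (m 1) := by
      refine Nat.pos_of_ne_zero fun h => hm ?_
      rw [Int.gcd_eq_zero_iff] at h
      have hm0 : m = 0 := funext (Fin.forall_fin_two.2 h)
      simp only [hm0, vecOf_zero, hf0]
    obtain ⟨d, a, b, hd, hab, h0, h1⟩ := Int.exists_gcd_one' hpos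
    refine ⟨(⟨d, hd⟩, ⟨![a, b], Int.isCoprime_iff_gcd_eq_one.2 hab⟩),
      funext (Fin.forall_fin_two.2 ⟨?_, ?_⟩)⟩
    · simp [φ, h0, mul_comm]
    · simp [φ, h1, mul_comm]
  rw [← hφ.tsum_eq hsupp, ← ENNReal.tsum_prod]
  exact tsum_congr fun q => by rw [vecOf_smul, Int.cast_natCast]

variable (μ : Measure (LatticeSpace 2)) [IsProbabilityMeasure μ]
  [SMulInvariantMeasure (SLR 2) (LatticeSpace 2) μ]

lemma lintegral_tsum_primVec_indicator_le {B : Set (Fin 2 → ℝ)} (hB : MeasurableSet B) :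
    ∫⁻ x : LatticeSpace 2, ∑' p : PrimVec, B.indicator 1 (vecOf 2 x.out p) ∂μ ≤ volume B := by
  have hB0 : MeasurableSet (B \ {0}) := hB.diff (measurableSet_singleton 0)
  calc ∫⁻ x : LatticeSpace 2, ∑' p : PrimVec, B.indicator 1 (vecOf 2 x.out p) ∂μ
      = ∫⁻ x : LatticeSpace 2, ∑' p : PrimVec, (B \ {0}).indicator 1 (vecOf 2 x.out p) ∂μ := by
        classical simp [Set.indicator_apply, vecOf_ne_zero]
    _ ≤ ∫⁻ x : LatticeSpace 2, ∑' m, (B \ {0}).indicator 1 (vecOf 2 x.out m) ∂μ :=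
        lintegral_mono fun x => ENNReal.tsum_comp_le_tsum_of_injective Subtype.val_injective
          fun m => (B \ {0}).indicator 1 (vecOf 2 x.out m)
    _ = volume (B \ {0}) := by
        rw [lintegral_tsum_vecOf le_rfl μ (measurable_one.indicator hB0) (by simp),
          lintegral_indicator_one hB0]
    _ ≤ volume B := measure_mono Set.sdiff_subset

/-- The expected number of primitive vectors of a random lattice in the plane per unit area. -/
def primitiveDensity (μ : Measure (LatticeSpace 2)) : ℝ≥0∞ :=
  ∫⁻ x : LatticeSpace 2, ∑' p : PrimVec, (Set.Icc 0 1).indicator 1 (vecOf 2 x.out p) ∂μ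

lemma volume_Icc_zero_one : volume (Set.Icc (0 : Fin 2 → ℝ) 1) = 1 := by
  simp [Real.volume_Icc_pi]

lemma primitiveDensity_ne_top : primitiveDensity μ ≠ ∞ :=
  ((lintegral_tsum_primVec_indicator_le μ measurableSet_Icc).trans_lt
    (by simp [volume_Icc_zero_one])).ne

/- Both sides are left invariant, so it is enough to compare them on one set, a strip over the unit
square. -/
lemma intensity_orbit_eq_smul :
    isEquivariantFamily_orbit.intensity μ = primitiveDensity μ • haarSL2 := by
  have hstrip (j : ℤ) {B : Set (Fin 2 → ℝ)} (hB : MeasurableSet B) :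
      ∫⁻ g, shearStrip j (B.indicator 1) g ∂isEquivariantFamily_orbit.intensity μ =
        ∫⁻ x : LatticeSpace 2, ∑' p : PrimVec, B.indicator 1 (vecOf 2 x.out p) ∂μ := by
    rw [isEquivariantFamily_orbit.lintegral_intensity μ
      (measurable_shearStrip j (measurable_one.indicator hB))]
    simp_rw [tsum_shearStrip_orbit]
  have : SigmaFinite (isEquivariantFamily_orbit.intensity μ) :=
    sigmaFinite_of_lintegral_shearStrip_le fun j B hB =>
      (hstrip j hB).trans_le (lintegral_tsum_primVec_indicator_le μ hB)
  have : (isEquivariantFamily_orbit.intensity μ).IsMulLeftInvariant :=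
    ⟨fun g => (isEquivariantFamily_orbit.measurePreserving_intensity μ g
      (continuous_const_mul g).measurable fun γ h => mul_assoc g h (toSLR γ)).map_eq⟩
  set U : Set (SLR 2) := firstCol ⁻¹' Set.Icc 0 1 ∩ shear ⁻¹' (Int.floor ⁻¹' {0})
  have hU : haarSL2 U = 1 := by
    rw [← lintegral_shearStrip_indicator haarSL2 0 measurableSet_Icc,
      lintegral_shearStrip 0 (measurable_one.indicator measurableSet_Icc),
      lintegral_indicator_one measurableSet_Icc, volume_Icc_zero_one]
  rw [measure_eq_div_smul (isEquivariantFamily_orbit.intensity μ) haarSL2 (s := U)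
    (by simp [hU]) (by simp [hU]), hU, div_one,
    ← lintegral_shearStrip_indicator _ 0 measurableSet_Icc, hstrip 0 measurableSet_Icc,
    primitiveDensity]

theorem lintegral_tsum_orbit {F : SLR 2 → ℝ≥0∞} (hF : Measurable F) :
    ∫⁻ x : LatticeSpace 2, ∑' γ, F (x.out * toSLR γ) ∂μ =
      primitiveDensity μ * ∫⁻ g, F g ∂haarSL2 := by
  rw [← isEquivariantFamily_orbit.lintegral_intensity μ hF, intensity_orbit_eq_smul,
    lintegral_smul_measure, smul_eq_mul]

theorem lintegral_tsum_primVec {f : (Fin 2 → ℝ) → ℝ≥0∞} (hf : Measurable f) :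
    ∫⁻ x : LatticeSpace 2, ∑' p : PrimVec, f (vecOf 2 x.out p) ∂μ =
      primitiveDensity μ * ∫⁻ v, f v := by
  simp_rw [← tsum_shearStrip_orbit 0 f]
  rw [lintegral_tsum_orbit μ (measurable_shearStrip 0 hf), lintegral_shearStrip 0 hf]

/- Every nonzero vector of a lattice is in a unique way a positive multiple of a primitive one. -/
lemma primitiveDensity_mul_tsum : primitiveDensity μ * ∑' d : ℕ+, ((d : ℝ≥0∞) ^ 2)⁻¹ = 1 := by
  set f : (Fin 2 → ℝ) → ℝ≥0∞ := (Set.Icc 0 1 \ {0}).indicator 1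
  have hE : MeasurableSet (Set.Icc (0 : Fin 2 → ℝ) 1 \ {0}) :=
    measurableSet_Icc.diff (measurableSet_singleton 0)
  have hf : Measurable f := measurable_one.indicator hE
  have hf0 : f 0 = 0 := by simp [f]
  have hf1 : ∫⁻ v, f v = 1 := by
    rw [lintegral_indicator_one hE, measure_sdiff_null (measure_singleton 0), volume_Icc_zero_one]
  have hsmul (d : ℕ+) : Measurable fun v : Fin 2 → ℝ => f ((d : ℝ) • v) :=
    hf.comp (measurable_const_smul _)
  have hscale (d : ℕ+) : ENNReal.ofReal ((|(d : ℝ)| ^ 2)⁻¹) = ((d : ℝ≥0∞) ^ 2)⁻¹ := by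
    rw [ENNReal.ofReal_inv_of_pos (by positivity), ENNReal.ofReal_pow (abs_nonneg _), Nat.abs_cast,
      ENNReal.ofReal_natCast]
  rw [← hf1, ← lintegral_tsum_vecOf le_rfl μ hf hf0]
  simp_rw [tsum_vecOf_eq_tsum_primVec hf0]
  rw [lintegral_tsum fun d =>
    (isEquivariantFamily_primVec.measurable_tsum_out (hsmul d)).aemeasurable]
  simp_rw [lintegral_tsum_primVec μ (hsmul _),
    lintegral_comp_smul (Nat.cast_ne_zero.2 (PNat.ne_zero _)) hf, hf1, mul_one, hscale,
    ENNReal.tsum_mul_left]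

lemma primitiveDensity_ne_zero : primitiveDensity μ ≠ 0 :=
  left_ne_zero_of_mul ((primitiveDensity_mul_tsum μ).trans_ne one_ne_zero)

end PrimitiveDensity

/-! ### Pairs of primitive vectors in the plane -/

section PrimitivePairs

lemma tsum_int_eq_add_tsum_pnat (F : ℤ → ℝ≥0∞) :
    ∑' k, F k = F 0 + ∑' k : ℕ+, (F k + F (-k)) := by
  rw [tsum_of_add_one_of_neg_add_one ENNReal.summable ENNReal.summable,
    tsum_pnat_eq_tsum_succ (f := fun k : ℕ => F k + F (-k)), ENNReal.tsum_add]
  push_cast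
  ring

lemma tsum_coprime_eq_sum_tsum (k : ℕ+) (G : ℤ → ℝ≥0∞) :
    ∑' b : ℤ, (if IsCoprime b (k : ℤ) then G b else 0) =
      ∑ a ∈ Finset.range k with (k : ℕ).Coprime a, ∑' t : ℤ, G (a + k * t) := by
  have hcop (a : ℕ) (t : ℤ) : IsCoprime (a + k * t) (k : ℤ) ↔ (k : ℕ).Coprime a := by
    rw [IsCoprime.add_mul_left_left_iff, Nat.isCoprime_iff_coprime, Nat.coprime_comm]
  rw [← (Int.divModEquiv k).symm.tsum_eq, ENNReal.tsum_prod', ENNReal.tsum_comm, tsum_fintype,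
    Finset.sum_filter, ← Fin.sum_univ_eq_sum_range
      (fun a => if (k : ℕ).Coprime a then ∑' t : ℤ, G (a + k * t) else 0)]
  refine Finset.sum_congr rfl fun a _ => ?_
  have hab (t : ℤ) : (Int.divModEquiv k).symm (t, a) = a + k * t := by
    simp [Int.divModEquiv]
    ring
  simp_rw [hab, hcop]
  split_ifs <;> simp

lemma tsum_primVec (H : ℤ → ℤ → ℝ≥0∞) : ∑' q : PrimVec, H (q.1 0) (q.1 1) =
    H 1 0 + H (-1) 0 +
      ∑' k : ℕ+, ∑ a ∈ Finset.range k with (k : ℕ).Coprime a,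
        ∑' t : ℤ, (H (a + k * t) k + H (-(a + k * t)) (-k)) := by
  have hpair : ∑' q : PrimVec, H (q.1 0) (q.1 1) =
      ∑' (k : ℤ) (b : ℤ), if IsCoprime b k then H b k else 0 := by
    rw [ENNReal.tsum_comm, ← ENNReal.tsum_prod, ← (finTwoArrowEquiv ℤ).tsum_eq]
    exact (tsum_subtype {q : Fin 2 → ℤ | IsCoprime (q 0) (q 1)} fun q => H (q 0) (q 1)).trans
      (tsum_congr fun q => by simp [Set.indicator_apply])
  have hzero : ∑' b : ℤ, (if IsCoprime b 0 then H b 0 else 0) = H 1 0 + H (-1) 0 := by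
    rw [tsum_eq_sum (s := {1, -1})]
    · simp [isCoprime_zero_right]
    · intro b hb
      simp_all [isCoprime_zero_right, Int.isUnit_iff]
  rw [hpair, tsum_int_eq_add_tsum_pnat, hzero]
  congr 1
  refine tsum_congr fun k => ?_
  rw [← tsum_coprime_eq_sum_tsum k fun b => H b k + H (-b) (-k),
    ← (Equiv.neg ℤ).tsum_eq fun b => if IsCoprime b (-k : ℤ) then H b (-k) else 0,
    ← ENNReal.tsum_add]
  refine tsum_congr fun b => ?_
  simp only [Equiv.neg_apply, IsCoprime.neg_neg_iff]
  split_ifs <;> simp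

lemma lintegral_comp_mul_left {a : ℝ} (ha : a ≠ 0) (f : ℝ → ℝ≥0∞) :
    ∫⁻ s, f (a * s) = ENNReal.ofReal |a⁻¹| * ∫⁻ s, f s := by
  rw [← smul_eq_mul, ← lintegral_smul_measure, ← Real.map_volume_mul_left ha]
  exact ((Homeomorph.mulLeft₀ a ha).measurableEmbedding.lintegral_map f).symm

/-- The sum of a function and of its reflection in the origin. -/
def symmetrize (h : (Fin 2 → ℝ) → ℝ≥0∞) (v : Fin 2 → ℝ) : ℝ≥0∞ := h v + h (-v)

/-- The contribution to `∑ p, f (g p) * ∑ q, h (g q)` of the pairs `(p, q)` with `det (p, q) = k`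
and with a fixed residue `a` modulo `k` of the coordinate of `q` along `p`, as a function on the
orbit of `g`. -/
def pairWeight (f h : (Fin 2 → ℝ) → ℝ≥0∞) (k a : ℕ) (g : SLR 2) : ℝ≥0∞ :=
  f (firstCol g) * h ((a : ℝ) • firstCol g + (k : ℝ) • secondCol g)

lemma tsum_vecOf_primVec (h : (Fin 2 → ℝ) → ℝ≥0∞) (g : SLR 2) :
    ∑' q : PrimVec, h (vecOf 2 g q) = symmetrize h (firstCol g) +
      ∑' k : ℕ+, ∑ a ∈ Finset.range k with (k : ℕ).Coprime a, ∑' t : ℤ,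
        symmetrize h ((a : ℝ) • firstCol (g * toSLR (ModularGroup.T ^ t)) +
          (k : ℝ) • secondCol (g * toSLR (ModularGroup.T ^ t))) := by
  simp_rw [vecOf_eq_smul_add_smul]
  rw [tsum_primVec fun b k => h ((b : ℝ) • firstCol g + (k : ℝ) • secondCol g)]
  simp_rw [firstCol_mul_T_zpow, secondCol_mul_T_zpow, symmetrize]
  congr 1
  · simp
  · refine tsum_congr fun k => Finset.sum_congr rfl fun a _ => tsum_congr fun t => ?_
    congr 2
    · push_cast
      module
    · push_cast
      module

lemma tsum_primVec_mul_tsum_primVec (f h : (Fin 2 → ℝ) → ℝ≥0∞) (g : SLR 2) :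
    (∑' p : PrimVec, f (vecOf 2 g p)) * ∑' q : PrimVec, h (vecOf 2 g q) =
      ∑' p : PrimVec, f (vecOf 2 g p) * symmetrize h (vecOf 2 g p) +
        ∑' k : ℕ+, ∑ a ∈ Finset.range k with (k : ℕ).Coprime a,
          ∑' γ, pairWeight f (symmetrize h) k a (g * toSLR γ) := by
  have hq (p : PrimVec) : ∑' q : PrimVec, h (vecOf 2 g q) =
      ∑' q : PrimVec, h (vecOf 2 (g * toSLR (completion p)) q) :=
    ((primPerm (completion p)).tsum_eq fun q : PrimVec => h (vecOf 2 g q)).symm.trans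
      (tsum_congr fun q => by rw [vecOf_mul_toSLR])
  have horbit (k a : ℕ) : ∑' γ, pairWeight f (symmetrize h) k a (g * toSLR γ) =
      ∑' p : PrimVec, f (vecOf 2 g p) * ∑' t : ℤ, symmetrize h
        ((a : ℝ) • firstCol (g * toSLR (completion p) * toSLR (ModularGroup.T ^ t)) +
          (k : ℝ) • secondCol (g * toSLR (completion p) * toSLR (ModularGroup.T ^ t))) := by
    rw [tsum_orbit]
    simp_rw [pairWeight, firstCol_mul_T_zpow, firstCol_mul_completion, ENNReal.tsum_mul_left]
  simp_rw [horbit, ← Summable.tsum_finsetSum fun _ _ => ENNReal.summable]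
  rw [ENNReal.tsum_comm, ← ENNReal.tsum_add, ← ENNReal.tsum_mul_right]
  refine tsum_congr fun p => ?_
  rw [hq p, tsum_vecOf_primVec, firstCol_mul_completion, mul_add]
  simp_rw [← ENNReal.tsum_mul_left, Finset.mul_sum, ENNReal.tsum_mul_left]

/-- The density at `t` of the pairs of vectors `(v, w)` with `det (v, w) = t`, weighted by
`f v * h w`. -/
def areaCorrelation (f h : (Fin 2 → ℝ) → ℝ≥0∞) (t : ℝ) : ℝ≥0∞ :=
  ∫⁻ v, f v * ∫⁻ s : ℝ, h (t • dualVec v + s • v)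

variable {f h : (Fin 2 → ℝ) → ℝ≥0∞}

@[fun_prop]
lemma measurable_symmetrize (hh : Measurable h) : Measurable (symmetrize h) :=
  hh.add (hh.comp measurable_neg)

lemma measurable_pairWeight (hf : Measurable f) (hh : Measurable h) (k a : ℕ) :
    Measurable (pairWeight f h k a) := by
  unfold pairWeight
  fun_prop

lemma measurable_areaCorrelation_inner (hh : Measurable h) :
    Measurable fun q : ℝ × (Fin 2 → ℝ) => ∫⁻ s : ℝ, h (q.1 • dualVec q.2 + s • q.2) := by
  have : Measurable fun q : (ℝ × (Fin 2 → ℝ)) × ℝ => h (q.1.1 • dualVec q.1.2 + q.2 • q.1.2) := by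
    fun_prop
  exact this.lintegral_prod_right'

lemma lintegral_pairWeight (hf : Measurable f) (hh : Measurable h) (k : ℕ+) (a : ℕ) :
    ∫⁻ g, pairWeight f h k a g ∂haarSL2 = (k : ℝ≥0∞)⁻¹ * areaCorrelation f h k := by
  have hk : (k : ℝ) ≠ 0 := by exact_mod_cast k.ne_zero
  have hinner : Measurable fun v => ∫⁻ s : ℝ, h ((k : ℝ) • dualVec v + s • v) :=
    (measurable_areaCorrelation_inner hh).comp measurable_prodMk_left
  rw [lintegral_haarSL2 (measurable_pairWeight hf hh k a), areaCorrelation,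
    ← lintegral_const_mul _ (by exact hf.mul hinner)]
  refine lintegral_congr_ae ?_
  filter_upwards [ae_ne_zero] with v hv
  have hcol (s : ℝ) : (a : ℝ) • v + (k : ℝ) • (dualVec v + s • v) =
      (k : ℝ) • dualVec v + ((k : ℝ) * s + a) • v := by module
  have : Measurable fun s : ℝ => h ((k : ℝ) • dualVec v + s • v) := by fun_prop
  simp_rw [pairWeight, firstCol_frame hv, secondCol_frame hv, hcol]
  rw [lintegral_const_mul _ (by fun_prop)]
  have hsubst : ∫⁻ s : ℝ, h ((k : ℝ) • dualVec v + ((k : ℝ) * s + a) • v) =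
      (k : ℝ≥0∞)⁻¹ * ∫⁻ s : ℝ, h ((k : ℝ) • dualVec v + s • v) := by
    rw [lintegral_comp_mul_left hk fun s => h ((k : ℝ) • dualVec v + (s + a) • v),
      lintegral_add_right_eq_self fun s : ℝ => h ((k : ℝ) • dualVec v + s • v), abs_inv,
      Nat.abs_cast, ENNReal.ofReal_inv_of_pos (by positivity), ENNReal.ofReal_natCast]
  rw [hsubst]
  ring

variable (μ : Measure (LatticeSpace 2)) [IsProbabilityMeasure μ]
  [SMulInvariantMeasure (SLR 2) (LatticeSpace 2) μ]

theorem lintegral_tsum_primVec_mul_tsum_primVec (hf : Measurable f) (hh : Measurable h) :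
    ∫⁻ x : LatticeSpace 2, (∑' p : PrimVec, f (vecOf 2 x.out p)) *
        ∑' q : PrimVec, h (vecOf 2 x.out q) ∂μ =
      primitiveDensity μ * ((∫⁻ v, f v * symmetrize h v) +
        ∑' k : ℕ+, (Nat.totient k / k : ℝ≥0∞) * areaCorrelation f (symmetrize h) k) := by
  have hh' := measurable_symmetrize hh
  have hmeas (k a : ℕ) : Measurable fun x : LatticeSpace 2 =>
      ∑' γ, pairWeight f (symmetrize h) k a (x.out * toSLR γ) :=
    isEquivariantFamily_orbit.measurable_tsum_out (measurable_pairWeight hf hh' k a)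
  have hk (k : ℕ+) : ∫⁻ x : LatticeSpace 2, ∑ a ∈ Finset.range k with (k : ℕ).Coprime a,
      ∑' γ, pairWeight f (symmetrize h) k a (x.out * toSLR γ) ∂μ =
        primitiveDensity μ * ((Nat.totient k / k : ℝ≥0∞) * areaCorrelation f (symmetrize h) k) := by
    rw [lintegral_finsetSum _ fun a _ => hmeas k a]
    simp_rw [lintegral_tsum_orbit μ (measurable_pairWeight hf hh' k _),
      lintegral_pairWeight hf hh']
    rw [Finset.sum_const, ← Nat.totient_eq_card_coprime, nsmul_eq_mul, div_eq_mul_inv]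
    ring
  have hsum (k : ℕ+) : Measurable fun x : LatticeSpace 2 => ∑ a ∈ Finset.range k with
      (k : ℕ).Coprime a, ∑' γ, pairWeight f (symmetrize h) k a (x.out * toSLR γ) :=
    Finset.measurable_fun_sum _ fun a _ => hmeas k a
  simp_rw [tsum_primVec_mul_tsum_primVec]
  rw [lintegral_add_right _ (Measurable.tsum hsum),
    lintegral_tsum_primVec μ (f := fun v => f v * symmetrize h v) (hf.mul hh'),
    lintegral_tsum fun k => (hsum k).aemeasurable]
  simp_rw [hk]
  rw [ENNReal.tsum_mul_left, mul_add]

end PrimitivePairs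

/-! ### Averaging totient sums over dilations -/

section TotientSum

variable {C : ℝ → ℝ≥0∞} {κ : ℝ≥0∞}

/-- The totient-weighted sum of `C` over the multiples of `exp x`, normalised by the spacing
`exp x`. For `C` an area correlation this is the off-diagonal part of the second moment of the
primitive vector count after a dilation by `exp (x / 2)`. -/
def totientSum (C : ℝ → ℝ≥0∞) (x : ℝ) : ℝ≥0∞ :=
  ∑' k : ℕ+, (Nat.totient k / k : ℝ≥0∞) * (ENNReal.ofReal (exp x) * C (k * exp x))

/-- The sum of `C` over the positive multiples of `exp x`, normalised by the spacing `exp x`; a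
Riemann sum for the integral of `C` over the positive half-line. -/
def dilateSum (C : ℝ → ℝ≥0∞) (x : ℝ) : ℝ≥0∞ :=
  ∑' m : ℕ+, ENNReal.ofReal (exp x) * C (m * exp x)

@[fun_prop]
lemma measurable_totientSum (hC : Measurable C) : Measurable (totientSum C) := by
  unfold totientSum
  fun_prop

lemma exp_add_log_pnat (x : ℝ) (d : ℕ+) : exp (x + Real.log d) = exp x * d := by
  rw [exp_add, exp_log (by exact_mod_cast d.pos)]

lemma tsum_totientSum_add_log (C : ℝ → ℝ≥0∞) (x : ℝ) :
    ∑' d : ℕ+, ((d : ℝ≥0∞) ^ 2)⁻¹ * totientSum C (x + Real.log d) = dilateSum C x := by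
  set G : ℕ+ × ℕ+ → ℝ≥0∞ := fun q => Nat.totient q.2 * ((q.1 * q.2 : ℕ+) : ℝ≥0∞)⁻¹ *
    (ENNReal.ofReal (exp x) * C ((q.1 * q.2 : ℕ+) * exp x)) with hG
  have hterm (d k : ℕ+) : ((d : ℝ≥0∞) ^ 2)⁻¹ * ((Nat.totient k / k : ℝ≥0∞) *
      (ENNReal.ofReal (exp (x + Real.log d)) * C (k * exp (x + Real.log d)))) = G (d, k) := by
    have hd : (d : ℝ≥0∞) ≠ 0 := by simp
    have hdd : ((d : ℝ≥0∞) ^ 2)⁻¹ * d = (d : ℝ≥0∞)⁻¹ := by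
      rw [sq, ENNReal.mul_inv (.inl hd) (.inr hd), mul_assoc,
        ENNReal.inv_mul_cancel hd (by simp), mul_one]
    have harg : (k : ℝ) * (exp x * d) = ((d * k : ℕ+) : ℝ) * exp x := by push_cast; ring
    have hinv : (((d * k : ℕ+) : ℕ) : ℝ≥0∞)⁻¹ = (d : ℝ≥0∞)⁻¹ * (k : ℝ≥0∞)⁻¹ := by
      rw [PNat.mul_coe, Nat.cast_mul, ENNReal.mul_inv (.inl hd) (.inr (by simp))]
    rw [exp_add_log_pnat, harg, ENNReal.ofReal_mul (exp_pos x).le, ENNReal.ofReal_natCast, hG]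
    simp only [hinv, ← hdd, div_eq_mul_inv]
    ring
  have hfiber (n : ℕ+) : ∑' q : Nat.divisorsAntidiagonal n, G (sigmaAntidiagonalEquivProd ⟨n, q⟩) =
      ENNReal.ofReal (exp x) * C (n * exp x) := by
    have hq (q : Nat.divisorsAntidiagonal n) : G (sigmaAntidiagonalEquivProd ⟨n, q⟩) =
        Nat.totient q.1.2 * ((n : ℝ≥0∞)⁻¹ * (ENNReal.ofReal (exp x) * C (n * exp x))) := by
      have hn : (sigmaAntidiagonalEquivProd ⟨n, q⟩).1 * (sigmaAntidiagonalEquivProd ⟨n, q⟩).2 = n :=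
        PNat.eq (Nat.mem_divisorsAntidiagonal.1 q.2).1
      simp only [hG, hn, mul_assoc]
      rfl
    have hsum : ∑ q ∈ Nat.divisorsAntidiagonal n, (Nat.totient q.2 : ℝ≥0∞) = n := by
      rw [Nat.sum_divisorsAntidiagonal' (f := fun _ k => (Nat.totient k : ℝ≥0∞))]
      exact_mod_cast Nat.sum_totient n
    simp_rw [hq]
    rw [Finset.tsum_subtype (Nat.divisorsAntidiagonal n) fun q => (Nat.totient q.2 : ℝ≥0∞) *
        ((n : ℝ≥0∞)⁻¹ * (ENNReal.ofReal (exp x) * C (n * exp x))), ← Finset.sum_mul, hsum,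
      ← mul_assoc, ENNReal.mul_inv_cancel (by simp) (by simp), one_mul]
  simp_rw [totientSum, ← ENNReal.tsum_mul_left, hterm, dilateSum, ← hfiber]
  rw [← ENNReal.tsum_prod (f := fun d k => G (d, k)), ← sigmaAntidiagonalEquivProd.tsum_eq,
    ENNReal.tsum_sigma']

lemma sum_Icc_inv_le_one_add_log {p q : ℕ} (hp : 0 < p) (hpq : p ≤ q) :
    ∑ m ∈ Finset.Icc p q, (m : ℝ)⁻¹ ≤ 1 + Real.log (q / p) := by
  have hp' : (0 : ℝ) < p := by exact_mod_cast hp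
  induction q, hpq using Nat.le_induction with
  | base =>
    simpa [hp'.ne'] using inv_le_one_of_one_le₀ (show (1 : ℝ) ≤ p by exact_mod_cast hp)
  | succ q hpq ih =>
    have hq : (0 : ℝ) < q := hp'.trans_le (by exact_mod_cast hpq)
    have hstep := one_sub_inv_le_log_of_pos (x := (q + 1) / q) (by positivity)
    have hlog : Real.log ((q + 1) / p) = Real.log (q / p) + Real.log ((q + 1) / q) := by
      rw [← log_mul (by positivity) (by positivity)]
      congr 1
      field_simp
    have hinv : 1 - ((q + 1) / q : ℝ)⁻¹ = ((q : ℝ) + 1)⁻¹ := by field_simp; ring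
    rw [← Finset.insert_Icc_right_eq_Icc_add_one (hpq.trans q.le_succ),
      Finset.sum_insert (by simp)]
    push_cast
    linarith

lemma tsum_indicator_Icc_inv_le {a b : ℝ} (ha : 0 < a) (hab : a ≤ b) :
    ∑' m : ℕ+, (Set.Icc a b).indicator 1 (m : ℝ) * (m : ℝ≥0∞)⁻¹ ≤
      ENNReal.ofReal (1 + Real.log (b / a)) := by
  classical
  rw [ENNReal.tsum_eq_iSup_sum]
  refine iSup_le fun t => ?_
  set u : Finset ℕ := (t.filter fun m : ℕ+ => (m : ℝ) ∈ Set.Icc a b).image PNat.val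
  have hmem (m : ℕ) (hm : m ∈ u) : 0 < m ∧ a ≤ m ∧ (m : ℝ) ≤ b := by
    obtain ⟨k, hk, rfl⟩ := Finset.mem_image.1 hm
    exact ⟨k.pos, (Finset.mem_filter.1 hk).2⟩
  have hsum : ∑ m ∈ t, (Set.Icc a b).indicator 1 (m : ℝ) * (m : ℝ≥0∞)⁻¹ =
      ENNReal.ofReal (∑ m ∈ u, (m : ℝ)⁻¹) := by
    rw [Finset.sum_image PNat.coe_injective.injOn, Finset.sum_filter,
      ENNReal.ofReal_sum_of_nonneg fun m _ => by positivity]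
    refine Finset.sum_congr rfl fun m _ => ?_
    by_cases hm : (m : ℝ) ∈ Set.Icc a b
    · simp [hm, ENNReal.ofReal_inv_of_pos (show (0 : ℝ) < m by exact_mod_cast m.pos)]
    · simp [hm]
  rw [hsum]
  refine ENNReal.ofReal_le_ofReal ?_
  obtain hu | hu := u.eq_empty_or_nonempty
  · have := log_nonneg ((one_le_div ha).2 hab)
    simp only [hu, Finset.sum_empty]
    linarith
  have hmin := hmem _ (u.min'_mem hu)
  have hmax := hmem _ (u.max'_mem hu)
  have hmin0 : (0 : ℝ) < u.min' hu := by exact_mod_cast hmin.1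
  have hmax0 : (0 : ℝ) < u.max' hu := by exact_mod_cast hmax.1
  calc ∑ m ∈ u, (m : ℝ)⁻¹
      ≤ ∑ m ∈ Finset.Icc (u.min' hu) (u.max' hu), (m : ℝ)⁻¹ :=
        Finset.sum_le_sum_of_subset_of_nonneg
          (fun m hm => Finset.mem_Icc.2 ⟨u.min'_le m hm, u.le_max' m hm⟩) fun _ _ _ => by positivity
    _ ≤ 1 + Real.log (u.max' hu / u.min' hu) :=
        sum_Icc_inv_le_one_add_log hmin.1 (u.min'_le _ (u.max'_mem hu))
    _ ≤ 1 + Real.log (b / a) := by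
        have hb : 0 ≤ b := ha.le.trans hab
        gcongr
        · exact hmax.2.2
        · exact hmin.2.1

lemma lintegral_exp_mul_comp_exp (G : ℝ → ℝ≥0∞) :
    ∫⁻ x, ENNReal.ofReal (exp x) * G (exp x) = ∫⁻ u in Set.Ioi 0, G u := by
  have h := lintegral_image_eq_lintegral_abs_deriv_mul MeasurableSet.univ
    (fun x _ => (hasDerivAt_exp x).hasDerivWithinAt) exp_injective.injOn G
  simp only [Set.image_univ, range_exp, Measure.restrict_univ, abs_exp] at h
  exact h.symm

lemma setLIntegral_Icc_exp_mul_comp_mul_exp (C : ℝ → ℝ≥0∞) (m : ℕ+) (a b : ℝ) :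
    ∫⁻ x in Set.Icc a b, ENNReal.ofReal (exp x) * C (m * exp x) =
      (m : ℝ≥0∞)⁻¹ *
        ∫⁻ t in Set.Ioi 0, (Set.Icc (exp a) (exp b)).indicator 1 (t / m) * C t := by
  set w : ℝ → ℝ≥0∞ := (Set.Icc (exp a) (exp b)).indicator 1 with hw
  have hm : (0 : ℝ) < m := by exact_mod_cast m.pos
  have hind (x : ℝ) :
      (Set.Icc a b).indicator (fun x => ENNReal.ofReal (exp x) * C (m * exp x)) x =
        ENNReal.ofReal (exp x) * (w (m * exp x / m) * C (m * exp x)) := by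
    rw [mul_div_cancel_left₀ _ hm.ne']
    by_cases hx : x ∈ Set.Icc a b <;> simp_all
  have hIoi (u : ℝ) : (Set.Ioi 0).indicator (fun u => w (m * u / m) * C (m * u)) u =
      (Set.Ioi 0).indicator (fun t => w (t / m) * C t) (m * u) := by
    simp [Set.indicator, hm]
  rw [← lintegral_indicator measurableSet_Icc, lintegral_congr hind,
    lintegral_exp_mul_comp_exp fun u => w (m * u / m) * C (m * u),
    ← lintegral_indicator measurableSet_Ioi, ← lintegral_indicator measurableSet_Ioi,
    lintegral_congr hIoi, lintegral_comp_mul_left hm.ne', abs_of_pos (inv_pos.2 hm),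
    ENNReal.ofReal_inv_of_pos hm, ENNReal.ofReal_natCast]

lemma tsum_indicator_Icc_exp_div_mul_inv_le {L t : ℝ} (hL : 0 ≤ L) (ht : 0 < t) :
    ∑' m : ℕ+, (Set.Icc (exp (-L)) (exp L)).indicator 1 (t / m) * (m : ℝ≥0∞)⁻¹ ≤
      ENNReal.ofReal (1 + 2 * L) := by
  have hmem (m : ℕ+) : t / m ∈ Set.Icc (exp (-L)) (exp L) ↔
      (m : ℝ) ∈ Set.Icc (t * exp (-L)) (t * exp L) := by
    have hm : (0 : ℝ) < m := by exact_mod_cast m.pos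
    rw [Set.mem_Icc, Set.mem_Icc, le_div_iff₀ hm, div_le_iff₀ hm, exp_neg, and_comm,
      ← div_eq_mul_inv, div_le_iff₀ (exp_pos L), inv_mul_le_iff₀ (exp_pos L), mul_comm (exp L) t,
      mul_comm (exp L) m]
  have hle : t * exp (-L) ≤ t * exp L := by gcongr; linarith
  have hlog : Real.log (t * exp L / (t * exp (-L))) = 2 * L := by
    rw [mul_div_mul_left _ _ ht.ne', ← exp_sub, log_exp]
    ring
  have h := tsum_indicator_Icc_inv_le (mul_pos ht (exp_pos (-L))) hle
  rw [hlog] at h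
  refine le_of_eq_of_le (tsum_congr fun m => ?_) h
  simp only [Set.indicator, hmem, Pi.one_apply]

lemma lintegral_dilateSum_Icc_le (hC : Measurable C) {L : ℝ} (hL : 0 ≤ L) :
    ∫⁻ x in Set.Icc (-L) L, dilateSum C x ≤
      ENNReal.ofReal (1 + 2 * L) * ∫⁻ t in Set.Ioi 0, C t := by
  set w : ℝ → ℝ≥0∞ := (Set.Icc (exp (-L)) (exp L)).indicator 1
  have hw : Measurable w := measurable_one.indicator measurableSet_Icc
  calc ∫⁻ x in Set.Icc (-L) L, dilateSum C x
      = ∑' m : ℕ+, ∫⁻ x in Set.Icc (-L) L, ENNReal.ofReal (exp x) * C (m * exp x) :=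
        lintegral_tsum fun m => by fun_prop
    _ = ∑' m : ℕ+, (m : ℝ≥0∞)⁻¹ * ∫⁻ t in Set.Ioi 0, w (t / m) * C t :=
        tsum_congr fun m => setLIntegral_Icc_exp_mul_comp_mul_exp C m _ _
    _ = ∫⁻ t in Set.Ioi 0, ∑' m : ℕ+, (m : ℝ≥0∞)⁻¹ * (w (t / m) * C t) := by
        rw [lintegral_tsum fun m => by fun_prop]
        exact tsum_congr fun m => (lintegral_const_mul _ (by fun_prop)).symm
    _ = ∫⁻ t in Set.Ioi 0, (∑' m : ℕ+, w (t / m) * (m : ℝ≥0∞)⁻¹) * C t := by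
        simp_rw [← ENNReal.tsum_mul_right, mul_left_comm _ (w _), mul_assoc]
    _ ≤ ∫⁻ t in Set.Ioi 0, ENNReal.ofReal (1 + 2 * L) * C t :=
        setLIntegral_mono (by fun_prop) fun t ht =>
          mul_le_mul_left (tsum_indicator_Icc_exp_div_mul_inv_le hL ht) _
    _ = ENNReal.ofReal (1 + 2 * L) * ∫⁻ t in Set.Ioi 0, C t := lintegral_const_mul _ hC

lemma lintegral_Icc_exp_ne_top (a b : ℝ) : ∫⁻ x in Set.Icc a b, ENNReal.ofReal (exp x) ≠ ∞ :=
  (Real.continuous_exp.integrableOn_Icc (a := a) (b := b)).lintegral_lt_top.ne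

lemma lintegral_Icc_comp_neg (F : ℝ → ℝ≥0∞) (L : ℝ) :
    ∫⁻ x in Set.Icc (-L) L, F (-x) = ∫⁻ x in Set.Icc (-L) L, F x := by
  rw [← lintegral_indicator measurableSet_Icc, ← lintegral_indicator measurableSet_Icc,
    ← lintegral_neg_eq_self ((Set.Icc (-L) L).indicator F)]
  refine lintegral_congr fun x => ?_
  simp [Set.indicator, neg_le, and_comm]

lemma totientSum_add_le_dilateSum_add {V I : ℝ≥0∞} {x : ℝ} {s : Finset ℕ+} (hs : 1 ∉ s)
    (hlow : ∀ y, κ * V ^ 2 ≤ totientSum C y + ENNReal.ofReal (exp y) * I) :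
    totientSum C x + (∑ d ∈ s, ((d : ℝ≥0∞) ^ 2)⁻¹) * (κ * V ^ 2) ≤
      dilateSum C x + (∑ d ∈ s, (d : ℝ≥0∞)⁻¹) * (ENNReal.ofReal (exp x) * I) := by
  have hterm (d : ℕ+) : ((d : ℝ≥0∞) ^ 2)⁻¹ * (κ * V ^ 2) ≤
      ((d : ℝ≥0∞) ^ 2)⁻¹ * totientSum C (x + Real.log d) +
        (d : ℝ≥0∞)⁻¹ * (ENNReal.ofReal (exp x) * I) := by
    have hd : (d : ℝ≥0∞) ≠ 0 := by simp
    have hdd : ((d : ℝ≥0∞) ^ 2)⁻¹ * d = (d : ℝ≥0∞)⁻¹ := by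
      rw [sq, ENNReal.mul_inv (.inl hd) (.inr hd), mul_assoc,
        ENNReal.inv_mul_cancel hd (by simp), mul_one]
    have h := mul_le_mul_right (hlow (x + Real.log d)) ((d : ℝ≥0∞) ^ 2)⁻¹
    rw [exp_add_log_pnat, ENNReal.ofReal_mul (exp_pos x).le, ENNReal.ofReal_natCast, mul_add] at h
    refine h.trans_eq ?_
    rw [← hdd]
    ring
  have hinsert : totientSum C x + ∑ d ∈ s, ((d : ℝ≥0∞) ^ 2)⁻¹ * totientSum C (x + Real.log d) ≤
      dilateSum C x := by
    classical
    rw [← tsum_totientSum_add_log]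
    refine le_trans (le_of_eq ?_) (ENNReal.sum_le_tsum (insert 1 s))
    simp [Finset.sum_insert hs]
  calc totientSum C x + (∑ d ∈ s, ((d : ℝ≥0∞) ^ 2)⁻¹) * (κ * V ^ 2)
      ≤ totientSum C x + ∑ d ∈ s, (((d : ℝ≥0∞) ^ 2)⁻¹ * totientSum C (x + Real.log d) +
          (d : ℝ≥0∞)⁻¹ * (ENNReal.ofReal (exp x) * I)) := by
        rw [Finset.sum_mul]
        gcongr with d
        exact hterm d
    _ = totientSum C x + ∑ d ∈ s, ((d : ℝ≥0∞) ^ 2)⁻¹ * totientSum C (x + Real.log d) +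
          (∑ d ∈ s, (d : ℝ≥0∞)⁻¹) * (ENNReal.ofReal (exp x) * I) := by
        rw [Finset.sum_add_distrib, ← Finset.sum_mul, add_assoc]
    _ ≤ _ := by gcongr

lemma volume_Icc_neg (L : ℝ) : volume (Set.Icc (-L) L) = ENNReal.ofReal (2 * L) := by
  rw [Real.volume_Icc]
  ring_nf

lemma two_mul_totientSum_zero_le {I : ℝ≥0∞} (hC : Measurable C) {L : ℝ}
    (hconv : ∀ x, 2 * totientSum C 0 ≤ totientSum C x + totientSum C (-x) +
      I * (ENNReal.ofReal (exp x) + ENNReal.ofReal (exp (-x)))) :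
    ENNReal.ofReal (2 * L) * totientSum C 0 ≤ (∫⁻ x in Set.Icc (-L) L, totientSum C x) +
      I * ∫⁻ x in Set.Icc (-L) L, ENNReal.ofReal (exp x) := by
  have hJ := lintegral_Icc_comp_neg (totientSum C) L
  have hE := lintegral_Icc_comp_neg (fun x => ENNReal.ofReal (exp x)) L
  have h2 : 2 * (ENNReal.ofReal (2 * L) * totientSum C 0) ≤
      2 * ((∫⁻ x in Set.Icc (-L) L, totientSum C x) +
        I * ∫⁻ x in Set.Icc (-L) L, ENNReal.ofReal (exp x)) := by
    calc 2 * (ENNReal.ofReal (2 * L) * totientSum C 0)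
        = ∫⁻ _ in Set.Icc (-L) L, 2 * totientSum C 0 := by
          rw [setLIntegral_const, volume_Icc_neg]
          ring
      _ ≤ ∫⁻ x in Set.Icc (-L) L, (totientSum C x + totientSum C (-x) +
            I * (ENNReal.ofReal (exp x) + ENNReal.ofReal (exp (-x)))) := lintegral_mono hconv
      _ = _ := by
          rw [lintegral_add_left (by fun_prop), lintegral_add_left (by fun_prop),
            lintegral_const_mul _ (by fun_prop), lintegral_add_left (by fun_prop), hJ, hE]
          ring
  exact (ENNReal.mul_le_mul_iff_right two_ne_zero ofNat_ne_top).1 h2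

/- Integrating over `x ∈ [-L, L]` turns the Riemann sums `dilateSum C x` into a multiple of `∫ C`
up to boundary terms, and the convexity hypothesis brings the average back to `x = 0`. -/
lemma totientSum_zero_add_le (hC : Measurable C) {L : ℝ} (hL : 0 < L) {V I : ℝ≥0∞}
    (hVC : ∫⁻ t in Set.Ioi 0, C t = V ^ 2) {s : Finset ℕ+} (hs : 1 ∉ s)
    (hconv : ∀ x, 2 * totientSum C 0 ≤ totientSum C x + totientSum C (-x) +
      I * (ENNReal.ofReal (exp x) + ENNReal.ofReal (exp (-x))))
    (hlow : ∀ x, κ * V ^ 2 ≤ totientSum C x + ENNReal.ofReal (exp x) * I) :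
    totientSum C 0 + (∑ d ∈ s, ((d : ℝ≥0∞) ^ 2)⁻¹) * (κ * V ^ 2) ≤
      (1 + (ENNReal.ofReal (2 * L))⁻¹) * V ^ 2 + (ENNReal.ofReal (2 * L))⁻¹ *
        ((1 + ∑ d ∈ s, (d : ℝ≥0∞)⁻¹) * ∫⁻ x in Set.Icc (-L) L, ENNReal.ofReal (exp x)) * I := by
  set ℓ := ENNReal.ofReal (2 * L) with hℓ
  set σ := ∑ d ∈ s, ((d : ℝ≥0∞) ^ 2)⁻¹
  set H := ∑ d ∈ s, (d : ℝ≥0∞)⁻¹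
  set E := ∫⁻ x in Set.Icc (-L) L, ENNReal.ofReal (exp x)
  have hℓ0 : ℓ ≠ 0 := by simpa [hℓ] using hL
  have hℓtop : ℓ ≠ ∞ := ofReal_ne_top
  have hint : (∫⁻ x in Set.Icc (-L) L, totientSum C x) + ℓ * (σ * (κ * V ^ 2)) ≤
      (1 + ℓ) * V ^ 2 + H * (E * I) := by
    calc (∫⁻ x in Set.Icc (-L) L, totientSum C x) + ℓ * (σ * (κ * V ^ 2))
        = ∫⁻ x in Set.Icc (-L) L, (totientSum C x + σ * (κ * V ^ 2)) := by
          rw [lintegral_add_right _ measurable_const, setLIntegral_const, volume_Icc_neg,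
            mul_comm ℓ]
      _ ≤ ∫⁻ x in Set.Icc (-L) L, (dilateSum C x + H * (ENNReal.ofReal (exp x) * I)) :=
          lintegral_mono fun x => totientSum_add_le_dilateSum_add hs hlow
      _ = (∫⁻ x in Set.Icc (-L) L, dilateSum C x) + H * (E * I) := by
          rw [lintegral_add_right _ (by fun_prop), lintegral_const_mul _ (by fun_prop),
            lintegral_mul_const _ (by fun_prop)]
      _ ≤ _ := by
          gcongr
          have h := lintegral_dilateSum_Icc_le hC hL.le
          rwa [hVC, ENNReal.ofReal_add zero_le_one (by positivity), ENNReal.ofReal_one] at h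
  rw [← ENNReal.mul_le_mul_iff_right hℓ0 hℓtop]
  calc ℓ * (totientSum C 0 + σ * (κ * V ^ 2))
      ≤ (∫⁻ x in Set.Icc (-L) L, totientSum C x) + I * E + ℓ * (σ * (κ * V ^ 2)) := by
        rw [mul_add]
        gcongr
        exact two_mul_totientSum_zero_le hC hconv
    _ ≤ (1 + ℓ) * V ^ 2 + H * (E * I) + I * E := by
        rw [add_right_comm]
        gcongr
    _ = ((ℓ + ℓ * ℓ⁻¹) * V ^ 2) + ℓ * ℓ⁻¹ * ((1 + H) * E) * I := by
        rw [ENNReal.mul_inv_cancel hℓ0 hℓtop]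
        ring
    _ = _ := by ring

lemma ne_top_of_mul_eq_one {a b : ℝ≥0∞} (h : a * b = 1) : a ≠ ∞ :=
  (ENNReal.lt_top_of_mul_ne_top_left (h.trans_ne one_ne_top)
    (right_ne_zero_of_mul (h.trans_ne one_ne_zero))).ne

lemma exists_finset_one_le_mul_add (hκ : κ * ∑' d : ℕ+, ((d : ℝ≥0∞) ^ 2)⁻¹ = 1) {δ : ℝ≥0∞}
    (hδ : δ ≠ 0) : ∃ s : Finset ℕ+, 1 ∉ s ∧ 1 ≤ κ * (1 + ∑ d ∈ s, ((d : ℝ≥0∞) ^ 2)⁻¹) + δ := by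
  classical
  have hκtop : κ ≠ ∞ := ne_top_of_mul_eq_one hκ
  have hlim := (ENNReal.Tendsto.const_mul (ENNReal.summable (f := fun d : ℕ+ =>
    ((d : ℝ≥0∞) ^ 2)⁻¹)).hasSum (.inr hκtop)).add_const δ
  rw [hκ] at hlim
  obtain ⟨t, ht, h1t⟩ := ((hlim.eventually_const_lt (ENNReal.lt_add_right one_ne_top hδ)).and
    (eventually_ge_atTop {1})).exists
  refine ⟨t.erase 1, Finset.notMem_erase 1 t, ?_⟩
  rw [← Finset.add_sum_erase t _ (Finset.singleton_subset_iff.1 h1t)] at ht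
  simpa using ht.le

/- Here `κ = 6 / π²`, and `κ * V ^ 2` is the expected value of the totient sum. -/
theorem exists_totientSum_zero_le (hκ : κ * ∑' d : ℕ+, ((d : ℝ≥0∞) ^ 2)⁻¹ = 1) {ε : ℝ≥0∞}
    (hε : ε ≠ 0) : ∃ B ≠ ∞, ∀ {C : ℝ → ℝ≥0∞} {V I : ℝ≥0∞}, Measurable C → V ≠ ∞ →
      ∫⁻ t in Set.Ioi 0, C t = V ^ 2 →
      (∀ x, 2 * totientSum C 0 ≤ totientSum C x + totientSum C (-x) +
        I * (ENNReal.ofReal (exp x) + ENNReal.ofReal (exp (-x)))) →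
      (∀ x, κ * V ^ 2 ≤ totientSum C x + ENNReal.ofReal (exp x) * I) →
      totientSum C 0 ≤ κ * (1 + ε) * V ^ 2 + B * I := by
  have hκ0 : κ ≠ 0 := left_ne_zero_of_mul (hκ.trans_ne one_ne_zero)
  have hκtop : κ ≠ ∞ := ne_top_of_mul_eq_one hκ
  set δ := κ * (ε / 2)
  have hδ : δ ≠ 0 := mul_ne_zero hκ0 (ENNReal.half_pos hε).ne'
  obtain ⟨s, hs1, hs⟩ := exists_finset_one_le_mul_add hκ hδ
  obtain ⟨L, hL, hLδ⟩ : ∃ L : ℝ, 0 < L ∧ (ENNReal.ofReal (2 * L))⁻¹ ≤ δ := by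
    obtain ⟨N, hN⟩ := ENNReal.exists_inv_nat_lt hδ
    have hN0 : N ≠ 0 := by
      rintro rfl
      simp at hN
    refine ⟨N / 2, by positivity, ?_⟩
    rw [mul_div_cancel₀ _ two_ne_zero, ENNReal.ofReal_natCast]
    exact hN.le
  set σ := ∑ d ∈ s, ((d : ℝ≥0∞) ^ 2)⁻¹
  refine ⟨(ENNReal.ofReal (2 * L))⁻¹ * ((1 + ∑ d ∈ s, (d : ℝ≥0∞)⁻¹) *
    ∫⁻ x in Set.Icc (-L) L, ENNReal.ofReal (exp x)), ?_, fun {C V I} hC hV hVC hconv hlow => ?_⟩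
  · have hH : ∑ d ∈ s, (d : ℝ≥0∞)⁻¹ ≠ ∞ := ENNReal.sum_ne_top.2 fun d _ => by simp
    have hE := lintegral_Icc_exp_ne_top (-L) L
    finiteness
  have hσ : σ * (κ * V ^ 2) ≠ ∞ := by
    have : σ ≠ ∞ := ENNReal.sum_ne_top.2 fun d _ => by simp
    finiteness
  refine ENNReal.le_of_add_le_add_right hσ ((totientSum_zero_add_le hC hL hVC hs1 hconv hlow).trans
    ?_)
  rw [add_right_comm]
  gcongr
  calc (1 + (ENNReal.ofReal (2 * L))⁻¹) * V ^ 2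
      ≤ (κ * (1 + σ) + δ + δ) * V ^ 2 := by gcongr
    _ = κ * (1 + (ε / 2 + ε / 2)) * V ^ 2 + σ * (κ * V ^ 2) := by ring
    _ = κ * (1 + ε) * V ^ 2 + σ * (κ * V ^ 2) := by rw [ENNReal.add_halves]

end TotientSum

section AreaCorrelation

variable {f h : (Fin 2 → ℝ) → ℝ≥0∞}

lemma symmetrize_comp_smul (h : (Fin 2 → ℝ) → ℝ≥0∞) (b : ℝ) (v : Fin 2 → ℝ) :
    symmetrize (fun w => h (b • w)) v = symmetrize h (b • v) := by
  simp only [symmetrize, smul_neg]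

lemma dualVec_smul {a : ℝ} (ha : a ≠ 0) (v : Fin 2 → ℝ) : dualVec (a • v) = a⁻¹ • dualVec v := by
  have hvec : ![-(a • v) 1, (a • v) 0] = a • ![-v 1, v 0] := by
    ext i
    fin_cases i <;> simp
  have hnorm : (a • v) ⬝ᵥ (a • v) = a * a * (v ⬝ᵥ v) := by
    rw [smul_dotProduct, dotProduct_smul, smul_eq_mul, smul_eq_mul, mul_assoc]
  rw [dualVec, dualVec, hvec, hnorm, smul_smul, smul_smul]
  congr 1
  field_simp

@[fun_prop]
lemma measurable_areaCorrelation (hf : Measurable f) (hh : Measurable h) :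
    Measurable (areaCorrelation f h) := by
  have : Measurable fun q : ℝ × (Fin 2 → ℝ) =>
      f q.2 * ∫⁻ s : ℝ, h (q.1 • dualVec q.2 + s • q.2) :=
    (hf.comp measurable_snd).mul (measurable_areaCorrelation_inner hh)
  exact this.lintegral_prod_right'

lemma areaCorrelation_comp_smul {a b : ℝ} (ha : 0 < a) (hb : 0 < b) (hf : Measurable f)
    (hh : Measurable h) (t : ℝ) :
    areaCorrelation (fun v => f (a • v)) (fun v => h (b • v)) t =
      ENNReal.ofReal (a * b)⁻¹ * areaCorrelation f h (a * b * t) := by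
  set Φ : (Fin 2 → ℝ) → ℝ≥0∞ := fun w =>
    f w * ∫⁻ s : ℝ, h ((a * b * t) • dualVec w + s • w) with hΦ
  have hΦm : Measurable Φ :=
    hf.mul ((measurable_areaCorrelation_inner hh).comp measurable_prodMk_left)
  have hinner (v : Fin 2 → ℝ) : ∫⁻ s : ℝ, h (b • (t • dualVec v + s • v)) =
      ENNReal.ofReal (a * b⁻¹) * ∫⁻ s : ℝ, h ((a * b * t) • dualVec (a • v) + s • a • v) := by
    have hvec (s : ℝ) : b • (t • dualVec v + s • v) =
        (a * b * t) • dualVec (a • v) + (b * a⁻¹ * s) • a • v := by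
      rw [dualVec_smul ha.ne', smul_smul, smul_smul, smul_add, smul_smul, smul_smul]
      congr 2 <;> field_simp
    simp_rw [hvec]
    rw [lintegral_comp_mul_left (by positivity)
      fun s => h ((a * b * t) • dualVec (a • v) + s • a • v), abs_of_pos (by positivity)]
    congr 2
    field_simp
  calc areaCorrelation (fun v => f (a • v)) (fun v => h (b • v)) t
      = ∫⁻ v, ENNReal.ofReal (a * b⁻¹) * Φ (a • v) := by
        refine lintegral_congr fun v => ?_
        rw [hinner, hΦ]
        ring
    _ = ENNReal.ofReal (a * b⁻¹) *
          (ENNReal.ofReal (|a| ^ 2)⁻¹ * areaCorrelation f h (a * b * t)) := by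
        rw [lintegral_const_mul _ (by fun_prop), lintegral_comp_smul ha.ne' hΦm, hΦ,
          areaCorrelation]
    _ = _ := by
        rw [← mul_assoc, ← ENNReal.ofReal_mul (by positivity), abs_of_pos ha]
        congr 2
        field_simp

lemma lintegral_lintegral_dualVec {v : Fin 2 → ℝ} (hv : v ≠ 0) (hh : Measurable h) :
    ∫⁻ t : ℝ, ∫⁻ s : ℝ, h (t • dualVec v + s • v) = ∫⁻ w, h w := by
  have hframe (u : Fin 2 → ℝ) :
      (frame v 0 : Matrix (Fin 2) (Fin 2) ℝ) *ᵥ u = u 1 • dualVec v + u 0 • v := by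
    rw [frame_of_ne_zero hv]
    ext i
    simp only [mulVec, dotProduct, Fin.sum_univ_two, transpose_apply, of_apply, cons_val_zero,
      cons_val_one, Pi.add_apply, Pi.smul_apply, smul_eq_mul]
    ring
  have hm : Measurable fun q : ℝ × ℝ => h (q.2 • dualVec v + q.1 • v) := by fun_prop
  calc ∫⁻ t : ℝ, ∫⁻ s : ℝ, h (t • dualVec v + s • v)
      = ∫⁻ q : ℝ × ℝ, h (q.2 • dualVec v + q.1 • v) :=
        (lintegral_prod_symm _ hm.aemeasurable).symm
    _ = ∫⁻ u : Fin 2 → ℝ, h (u 1 • dualVec v + u 0 • v) :=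
        ((volume_preserving_finTwoArrow ℝ).lintegral_comp hm).symm
    _ = ∫⁻ w, h w := by
        simp_rw [← hframe]
        exact (measurePreserving_mulVec (frame v 0)).lintegral_comp hh

lemma setLIntegral_Ioi_add_comp_neg {F : ℝ → ℝ≥0∞} (hF : Measurable F) :
    ∫⁻ t in Set.Ioi (0 : ℝ), (F t + F (-t)) = ∫⁻ t, F t := by
  have hneg : ∫⁻ t in Set.Ioi (0 : ℝ), F (-t) = ∫⁻ t in Set.Iio 0, F t := by
    have h := (Measure.measurePreserving_neg (volume : Measure ℝ)).setLIntegral_comp_preimage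
      (measurableSet_Iio (a := 0)) hF
    simpa using h
  rw [lintegral_add_left hF, hneg, ← setLIntegral_congr Iio_ae_eq_Iic.symm, ← Set.compl_Ioi,
    lintegral_add_compl _ measurableSet_Ioi]

lemma lintegral_areaCorrelation_Ioi (hf : Measurable f) (hh : Measurable h) :
    ∫⁻ t in Set.Ioi 0, areaCorrelation f (symmetrize h) t = (∫⁻ v, f v) * ∫⁻ v, h v := by
  have hinner := measurable_areaCorrelation_inner hh
  have hsymm (v : Fin 2 → ℝ) (t : ℝ) : ∫⁻ s : ℝ, symmetrize h (t • dualVec v + s • v) =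
      (∫⁻ s : ℝ, h (t • dualVec v + s • v)) + ∫⁻ s : ℝ, h ((-t) • dualVec v + s • v) := by
    have hs (s : ℝ) : -(t • dualVec v + s • v) = (-t) • dualVec v + (-s) • v := by module
    simp_rw [symmetrize, hs]
    rw [lintegral_add_left (by fun_prop),
      lintegral_neg_eq_self fun s : ℝ => h ((-t) • dualVec v + s • v)]
  have hm : Measurable fun q : ℝ × (Fin 2 → ℝ) =>
      f q.2 * ∫⁻ s : ℝ, symmetrize h (q.1 • dualVec q.2 + s • q.2) :=
    (hf.comp measurable_snd).mul (measurable_areaCorrelation_inner (measurable_symmetrize hh))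
  have hfiber (v : Fin 2 → ℝ) (hv : v ≠ 0) :
      ∫⁻ t in Set.Ioi (0 : ℝ), f v * ∫⁻ s : ℝ, symmetrize h (t • dualVec v + s • v) =
        f v * ∫⁻ w, h w := by
    have hv' : Measurable fun t : ℝ => ∫⁻ s : ℝ, h (t • dualVec v + s • v) :=
      hinner.comp measurable_prodMk_right
    simp_rw [hsymm]
    rw [lintegral_const_mul _ (by exact hv'.add (hv'.comp measurable_neg)),
      setLIntegral_Ioi_add_comp_neg hv', lintegral_lintegral_dualVec hv hh]
  calc ∫⁻ t in Set.Ioi 0, areaCorrelation f (symmetrize h) t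
      = ∫⁻ v, ∫⁻ t in Set.Ioi (0 : ℝ), f v * ∫⁻ s : ℝ, symmetrize h (t • dualVec v + s • v) :=
        lintegral_lintegral_swap hm.aemeasurable
    _ = ∫⁻ v, f v * ∫⁻ w, h w := lintegral_congr_ae (ae_ne_zero.mono hfiber)
    _ = _ := lintegral_mul_const _ hf

end AreaCorrelation

section PlaneLattices

variable {f : (Fin 2 → ℝ) → ℝ≥0∞}

/-- The sum of `f` over the primitive vectors of the lattice `x` after a dilation by `exp (y / 2)`,
normalised so that its mean does not depend on `y`. -/
def dilatedCount (f : (Fin 2 → ℝ) → ℝ≥0∞) (y : ℝ) (x : LatticeSpace 2) : ℝ≥0∞ :=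
  ENNReal.ofReal (exp y) * ∑' p : PrimVec, f (exp (y / 2) • vecOf 2 x.out p)

lemma measurable_dilatedCount (hf : Measurable f) (y : ℝ) : Measurable (dilatedCount f y) :=
  (isEquivariantFamily_primVec.measurable_tsum_out
    (hf.comp (measurable_const_smul (exp (y / 2))))).const_mul _

lemma lintegral_comp_exp_half_smul (hf : Measurable f) (y : ℝ) :
    ENNReal.ofReal (exp y) * ∫⁻ v, f (exp (y / 2) • v) = ∫⁻ v, f v := by
  rw [lintegral_comp_smul (exp_pos _).ne' hf, abs_exp, ← exp_nat_mul, ← mul_assoc,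
    ← ENNReal.ofReal_mul (exp_pos y).le, Nat.cast_ofNat, mul_div_cancel₀ _ two_ne_zero,
    mul_inv_cancel₀ (exp_pos y).ne', ENNReal.ofReal_one, one_mul]

variable (μ : Measure (LatticeSpace 2)) [IsProbabilityMeasure μ]
  [SMulInvariantMeasure (SLR 2) (LatticeSpace 2) μ]

lemma lintegral_dilatedCount (hf : Measurable f) (y : ℝ) :
    ∫⁻ x, dilatedCount f y x ∂μ = primitiveDensity μ * ∫⁻ v, f v := by
  have hfy : Measurable fun v : Fin 2 → ℝ => f (exp (y / 2) • v) := by fun_prop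
  simp_rw [dilatedCount]
  rw [lintegral_const_mul _ (isEquivariantFamily_primVec.measurable_tsum_out hfy),
    lintegral_tsum_primVec μ hfy, mul_left_comm, lintegral_comp_exp_half_smul hf]

lemma lintegral_dilatedCount_mul_dilatedCount (hf : Measurable f) (y z : ℝ) :
    ∫⁻ x, dilatedCount f y x * dilatedCount f z x ∂μ = primitiveDensity μ *
      (ENNReal.ofReal (exp (y + z)) * (∫⁻ v, f (exp (y / 2) • v) * symmetrize f (exp (z / 2) • v)) +
        totientSum (areaCorrelation f (symmetrize f)) ((y + z) / 2)) := by
  have hfm (y : ℝ) : Measurable fun v : Fin 2 → ℝ => f (exp (y / 2) • v) := by fun_prop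
  have hsum (y : ℝ) : Measurable fun x : LatticeSpace 2 =>
      ∑' p : PrimVec, f (exp (y / 2) • vecOf 2 x.out p) :=
    isEquivariantFamily_primVec.measurable_tsum_out (hfm y)
  have hprod (x : LatticeSpace 2) : dilatedCount f y x * dilatedCount f z x =
      ENNReal.ofReal (exp (y + z)) * ((∑' p : PrimVec, f (exp (y / 2) • vecOf 2 x.out p)) *
        ∑' q : PrimVec, f (exp (z / 2) • vecOf 2 x.out q)) := by
    rw [dilatedCount, dilatedCount, exp_add, ENNReal.ofReal_mul (exp_pos y).le]
    ring
  have hexp : exp (y / 2) * exp (z / 2) = exp ((y + z) / 2) := by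
    rw [← exp_add]
    ring_nf
  have harea (k : ℕ+) : ENNReal.ofReal (exp (y + z)) *
      areaCorrelation (fun v => f (exp (y / 2) • v)) (fun v => symmetrize f (exp (z / 2) • v)) k =
        ENNReal.ofReal (exp ((y + z) / 2)) *
          areaCorrelation f (symmetrize f) (k * exp ((y + z) / 2)) := by
    rw [areaCorrelation_comp_smul (exp_pos _) (exp_pos _) hf (measurable_symmetrize hf), hexp,
      ← mul_assoc, ← ENNReal.ofReal_mul (exp_pos _).le, ← exp_neg, ← exp_add, mul_comm (k : ℝ)]
    ring_nf
  simp_rw [hprod]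
  rw [lintegral_const_mul _ (by exact (hsum y).mul (hsum z)),
    lintegral_tsum_primVec_mul_tsum_primVec μ (hfm y) (hfm z), mul_left_comm, mul_add, totientSum,
    ← ENNReal.tsum_mul_left]
  simp_rw [funext (symmetrize_comp_smul f (exp (z / 2)))]
  congr 3
  funext k
  rw [mul_left_comm, harea]

lemma lintegral_sq_dilatedCount (hf : Measurable f) (y : ℝ) :
    ∫⁻ x, dilatedCount f y x ^ 2 ∂μ = primitiveDensity μ *
      (ENNReal.ofReal (exp y) * (∫⁻ v, f v * symmetrize f v) +
        totientSum (areaCorrelation f (symmetrize f)) y) := by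
  have hm : Measurable fun v => f v * symmetrize f v := by fun_prop
  simp_rw [sq]
  rw [lintegral_dilatedCount_mul_dilatedCount μ hf y y, exp_add, ENNReal.ofReal_mul (exp_pos y).le,
    mul_assoc, lintegral_comp_exp_half_smul hm, add_self_div_two]

lemma primitiveDensity_mul_two_mul_totientSum_zero_le (hf : Measurable f) (x : ℝ) :
    primitiveDensity μ * (2 * totientSum (areaCorrelation f (symmetrize f)) 0) ≤
      primitiveDensity μ * (totientSum (areaCorrelation f (symmetrize f)) x +
        totientSum (areaCorrelation f (symmetrize f)) (-x) + (∫⁻ v, f v * symmetrize f v) *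
          (ENNReal.ofReal (exp x) + ENNReal.ofReal (exp (-x)))) := by
  have hm := measurable_dilatedCount hf
  have hmix := lintegral_dilatedCount_mul_dilatedCount μ hf x (-x)
  rw [add_neg_cancel, zero_div] at hmix
  calc primitiveDensity μ * (2 * totientSum (areaCorrelation f (symmetrize f)) 0)
      ≤ 2 * ∫⁻ Λ, dilatedCount f x Λ * dilatedCount f (-x) Λ ∂μ := by
        rw [hmix, mul_left_comm]
        gcongr
        exact le_add_self
    _ = ∫⁻ Λ, 2 * (dilatedCount f x Λ * dilatedCount f (-x) Λ) ∂μ :=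
        (lintegral_const_mul _ ((hm x).mul (hm (-x)))).symm
    _ ≤ ∫⁻ Λ, (dilatedCount f x Λ ^ 2 + dilatedCount f (-x) Λ ^ 2) ∂μ :=
        lintegral_mono fun Λ => two_mul_mul_le_sq_add_sq _ _
    _ = _ := by
        rw [lintegral_add_left ((hm x).pow_const 2), lintegral_sq_dilatedCount μ hf,
          lintegral_sq_dilatedCount μ hf]
        ring

lemma sq_primitiveDensity_mul_lintegral_le (hf : Measurable f) (hfi : ∫⁻ v, f v ≠ ∞) (x : ℝ) :
    (primitiveDensity μ * ∫⁻ v, f v) ^ 2 ≤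
      primitiveDensity μ * (totientSum (areaCorrelation f (symmetrize f)) x +
        ENNReal.ofReal (exp x) * ∫⁻ v, f v * symmetrize f v) := by
  have hmean := lintegral_dilatedCount μ hf x
  have h := sq_lintegral_le_lintegral_sq (measurable_dilatedCount hf x)
    (hmean.trans_ne (ENNReal.mul_ne_top (primitiveDensity_ne_top μ) hfi))
  rwa [hmean, lintegral_sq_dilatedCount μ hf, add_comm] at h

/- The off-diagonal main term is compared with its value at all dilates of `f` on average over the
scale, where it is a Riemann sum for `(∫ f)²`. -/
theorem exists_lintegral_sq_tsum_primVec_le {ε : ℝ≥0∞} (hε : ε ≠ 0) :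
    ∃ B ≠ ∞, ∀ {f : (Fin 2 → ℝ) → ℝ≥0∞}, Measurable f → ∫⁻ v, f v ≠ ∞ →
      ∫⁻ x : LatticeSpace 2, (∑' p : PrimVec, f (vecOf 2 x.out p)) ^ 2 ∂μ ≤
        (1 + ε) * (primitiveDensity μ * ∫⁻ v, f v) ^ 2 +
          B * (primitiveDensity μ * ∫⁻ v, f v * symmetrize f v) := by
  obtain ⟨B, hB, h⟩ := exists_totientSum_zero_le (primitiveDensity_mul_tsum μ) hε
  refine ⟨1 + B, by finiteness, fun {f} hf hfi => ?_⟩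
  have hcount (x : LatticeSpace 2) : ∑' p : PrimVec, f (vecOf 2 x.out p) = dilatedCount f 0 x := by
    simp [dilatedCount]
  have hcancel {a b : ℝ≥0∞} (hab : primitiveDensity μ * a ≤ primitiveDensity μ * b) : a ≤ b :=
    (ENNReal.mul_le_mul_iff_right (primitiveDensity_ne_zero μ) (primitiveDensity_ne_top μ)).1 hab
  have hzero := h (measurable_areaCorrelation hf (measurable_symmetrize hf)) hfi
    ((lintegral_areaCorrelation_Ioi hf hf).trans (sq _).symm)
    (fun x => hcancel (primitiveDensity_mul_two_mul_totientSum_zero_le μ hf x))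
    (fun x => hcancel (le_of_eq_of_le (by ring) (sq_primitiveDensity_mul_lintegral_le μ hf hfi x)))
  simp_rw [hcount]
  rw [lintegral_sq_dilatedCount μ hf, exp_zero, ENNReal.ofReal_one, one_mul]
  calc _ ≤ primitiveDensity μ * ((∫⁻ v, f v * symmetrize f v) +
        (primitiveDensity μ * (1 + ε) * (∫⁻ v, f v) ^ 2 +
          B * ∫⁻ v, f v * symmetrize f v)) := by gcongr
    _ = _ := by ring

theorem ae_exists_vecOf_mem_two {A : Set (Fin 2 → ℝ)} (hA : MeasurableSet A)
    (hvol : volume A = ∞) : ∀ᵐ x ∂μ, ∃ p : PrimVec, vecOf 2 x.out p ∈ A := by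
  set ρ : Measure (Fin 2 → ℝ) := (primitiveDensity μ).toNNReal • volume
  have hρ (K : Set (Fin 2 → ℝ)) : ρ K = primitiveDensity μ * volume K := by
    rw [Measure.smul_apply, ENNReal.smul_def, ENNReal.coe_toNNReal (primitiveDensity_ne_top μ),
      smul_eq_mul]
  have hρA : ρ A = ∞ := by rw [hρ, hvol, ENNReal.mul_top (primitiveDensity_ne_zero μ)]
  have hm {K : Set (Fin 2 → ℝ)} (hK : MeasurableSet K) :
      Measurable (K.indicator (1 : (Fin 2 → ℝ) → ℝ≥0∞)) := measurable_one.indicator hK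
  have hcount (K : Set (Fin 2 → ℝ)) (hK : MeasurableSet K) : Measurable fun x : LatticeSpace 2 =>
      ∑' p : PrimVec, K.indicator (1 : (Fin 2 → ℝ) → ℝ≥0∞) (vecOf 2 x.out p) :=
    isEquivariantFamily_primVec.measurable_tsum_out (hm hK)
  have h1 (K : Set (Fin 2 → ℝ)) (_ : K ⊆ A) (hK : MeasurableSet K) :
      ∫⁻ x : LatticeSpace 2, ∑' p : PrimVec, K.indicator 1 (vecOf 2 x.out p) ∂μ = ρ K := by
    rw [lintegral_tsum_primVec μ (hm hK), hρ, lintegral_indicator_one hK]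
  refine ae_exists_mem_of_lintegral_sq_le hA hρA hcount h1 fun ε hε => ?_
  obtain ⟨B, hB, h⟩ := exists_lintegral_sq_tsum_primVec_le μ hε
  refine ⟨B * 2, by finiteness, fun K _ hK hKtop => ?_⟩
  have hvolK : volume K ≠ ∞ := fun hvK => by
    rw [hρ, hvK, ENNReal.mul_top (primitiveDensity_ne_zero μ)] at hKtop
    exact hKtop.ne rfl
  have hdiag : ∫⁻ v, K.indicator 1 v * symmetrize (K.indicator 1) v ≤ 2 * volume K := by
    rw [← lintegral_indicator_one hK, ← lintegral_const_mul _ (hm hK)]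
    refine lintegral_mono fun v => ?_
    rw [mul_comm]
    gcongr
    have hle (w : Fin 2 → ℝ) : K.indicator (1 : (Fin 2 → ℝ) → ℝ≥0∞) w ≤ 1 :=
      Set.indicator_le_self _ _ w
    exact (add_le_add (hle v) (hle (-v))).trans_eq one_add_one_eq_two
  have hK2 := h (hm hK) ((lintegral_indicator_one hK).trans_ne hvolK)
  rw [lintegral_indicator_one hK, ← hρ] at hK2
  calc _ ≤ (1 + ε) * ρ K ^ 2 + B * (primitiveDensity μ * (2 * volume K)) := hK2.trans (by gcongr)
    _ = (1 + ε) * ρ K ^ 2 + B * 2 * ρ K := by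
        rw [hρ]
        ring

end PlaneLattices

/-- If `A ⊆ ℝⁿ` has infinite Lebesgue measure, then almost every unimodular lattice
contains a nonzero vector lying in `A`. -/
theorem ae_intersects_of_infinite_volume (n : ℕ) (hn : 2 ≤ n)
    (μ : Measure (LatticeSpace n)) [IsProbabilityMeasure μ]
    (hinv : ∀ (g : SLR n) (s : Set (LatticeSpace n)), μ ((fun x => g • x) ⁻¹' s) = μ s)
    (A : Set (Fin n → ℝ)) (hA : MeasurableSet A) (hvol : volume A = ⊤) :
    ∀ᵐ Λ ∂μ, Intersects n Λ A := by
  have : SMulInvariantMeasure (SLR n) (LatticeSpace n) μ := ⟨fun g s _ => hinv g s⟩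
  have : Nonempty (Fin n) := ⟨⟨0, by omega⟩⟩
  have hA' : MeasurableSet (A \ {0}) := hA.diff (measurableSet_singleton 0)
  have hvol' : volume (A \ {0}) = ∞ := by rwa [measure_sdiff_null (measure_singleton 0)]
  obtain rfl | hn3 := hn.eq_or_lt'
  · filter_upwards [ae_exists_vecOf_mem_two μ hA' hvol'] with Λ ⟨p, hp⟩
    exact intersects_of_vecOf_out_mem hp
  · filter_upwards [ae_exists_vecOf_mem_of_three_le μ hn3 hA' (by simp) hvol'] with Λ ⟨m, hm⟩
    exact intersects_of_vecOf_out_mem hm
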